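/- With γ_in, γ_out, B_in, B_out and the associated annulus A as in the context, there exists a framing of A: an infinitely differentiable map h : ℝ × ℝ → ℂ with h(θ + 2π, t) = h(θ, t) for all θ, t, such that for every t ∈ [0,1] the map θ ↦ h(θ, t) is injective on [0, 2π), ∂h/∂θ(θ, t) ≠ 0 for all θ and all t ∈ [0,1], Im((∂h/∂t)(θ,t)/(∂h/∂θ)(θ,t)) ≤ 0 for all θ and all t ∈ [0,1], and moreover h(θ, 0) = γ_in(θ) and h(θ, 1) = γ_out(θ) for all θ ∈ ℝ, and h(ℝ × [0,1]) = A. (Equivalently, every annulus is the time-ordered exponential ∏_{1 ≥ τ ≥ 0} Exp(X(τ)dτ) of the geometrically exponentiable path X = −(∂h/∂t)/(∂h/∂θ), which takes values in the cone of inward-pointing complexified vector fields on the circle.) -/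

import Mathlib

open Set Complex Real

/-!
Join a point `z₀` of the inner disc to a point `z₁` outside the outer curve by a segment crossing
each of the two curves exactly once, orthogonally. The logarithm of `(z - z₀) / (z₁ - z)` turns the
curves into `2πi`-periodic arcs `c` and `d` in the plane, each crossing the lines `Im = 2πk` once,
with the outside of each curve to the right of its arc.

The direction of the secant between two points of such an arc, lifted to a continuous angle as in
Hopf's Umlaufsatz, shows that its tangent angle differs from `π / 2` by a smooth function which can
be extended to a `2πi`-periodic angle field `ψ` on the plane, vanishing far away and on the real
line. Since `d` is on the right of `c` and has the same tangent direction wherever they touch, one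
`ψ` serves both. The field `e^{iψ}` is transverse to both arcs and its flow lines are not trapped, so
a periodic diffeomorphism straightens the flow lines to horizontal lines. The two arcs become graphs
over the imaginary axis, between which one interpolates linearly.
-/

namespace AnnulusFraming

open Filter Topology
open scoped ComplexConjugate ContDiff NNReal

section Superposition

variable {X : Type*} [TopologicalSpace X] [CompactSpace X]
variable {F G : Type*} [NormedAddCommGroup F] [NormedSpace ℝ F] [NormedAddCommGroup G]
  [NormedSpace ℝ G]

/-- The bilinear map applying a continuous family of operators to a continuous family of vectors
pointwise. It turns the pointwise derivative of `f` into the derivative of `u ↦ f ∘ u`. -/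
noncomputable def pointwiseApply :
    C(X, F →L[ℝ] G) →L[ℝ] C(X, F) →L[ℝ] C(X, G) :=
  LinearMap.mkContinuous₂ (LinearMap.mk₂ ℝ
    (fun (a : C(X, F →L[ℝ] G)) (b : C(X, F)) ↦
      (⟨fun x ↦ a x (b x), a.continuous.clm_apply b.continuous⟩ : C(X, G)))
    (by intros; ext x; simp) (by intros; ext x; simp) (by intros; ext x; simp)
    (by intros; ext x; simp)) 1 fun a b ↦ by
  rw [ContinuousMap.norm_le _ (by positivity)]
  intro x
  simp only [LinearMap.mk₂_apply, ContinuousMap.coe_mk, one_mul]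
  exact (a x).le_of_opNorm_le_of_le (a.norm_coe_le_norm x) (b.norm_coe_le_norm x)

theorem hasFDerivAt_comp_left {f : C(F, G)} {f' : C(F, F →L[ℝ] G)}
    (hf : ∀ x, HasFDerivAt f (f' x) x) (u : C(X, F)) :
    HasFDerivAt (fun u : C(X, F) ↦ f.comp u) (pointwiseApply (f'.comp u)) u := by
  rw [hasFDerivAt_iff_isLittleO_nhds_zero, Asymptotics.isLittleO_iff]
  intro ε hε
  obtain ⟨δ, hδ, hf'⟩ := Metric.mem_uniformity_dist.1 <|
    (isCompact_range u.continuous).uniformContinuousAt_of_continuousAt f'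
      (fun a _ ↦ f'.continuous.continuousAt) (Metric.dist_mem_uniformity hε)
  filter_upwards [Metric.ball_mem_nhds (0 : C(X, F)) hδ] with h hh
  rw [ContinuousMap.norm_le _ (by positivity)]
  intro x
  have hx : ‖h x‖ ≤ ‖h‖ := h.norm_coe_le_norm x
  have hderiv : ∀ y ∈ Metric.ball (u x) δ, ‖f' y - f' (u x)‖ ≤ ε := fun y hy ↦ by
    rw [← dist_eq_norm, dist_comm]
    exact le_of_lt (hf' (Metric.mem_ball'.1 hy) (mem_range_self x))
  have hmean := (convex_ball (u x) δ).norm_image_sub_le_of_norm_hasFDerivWithin_le'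
    (fun y _ ↦ (hf y).hasFDerivWithinAt) hderiv (Metric.mem_ball_self hδ)
    (y := u x + h x) (by simpa using hx.trans_lt (by simpa using hh))
  rw [add_sub_cancel_left] at hmean
  exact hmean.trans (mul_le_mul_of_nonneg_left hx hε.le)

end Superposition

universe u

-- `F` and `G` share a universe so that the induction can pass from `G` to `F →L[ℝ] G`.
theorem contDiff_comp_left_nat {X : Type*} [TopologicalSpace X] [CompactSpace X] (n : ℕ) :
    ∀ {F G : Type u} [NormedAddCommGroup F] [NormedSpace ℝ F] [NormedAddCommGroup G]
      [NormedSpace ℝ G] {f : C(F, G)}, ContDiff ℝ n f →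
      ContDiff ℝ n fun u : C(X, F) ↦ f.comp u := by
  induction n with
  | zero => exact fun _ ↦ contDiff_zero.2 (ContinuousMap.continuous_postcomp _)
  | succ n ih =>
    intro F G _ _ _ _ f hf
    push_cast at hf ⊢
    obtain ⟨hdiff, -, hsmooth⟩ := contDiff_succ_iff_fderiv.1 hf
    let f' : C(F, F →L[ℝ] G) := ⟨fderiv ℝ f, hsmooth.continuous⟩
    have hd := hasFDerivAt_comp_left (X := X) (f' := f') fun x ↦ (hdiff x).hasFDerivAt
    refine contDiff_succ_iff_fderiv.2 ⟨fun u ↦ (hd u).differentiableAt, by simp, ?_⟩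
    rw [funext fun u ↦ (hd u).fderiv]
    exact pointwiseApply.contDiff.comp (ih (f := f') hsmooth)

theorem contDiff_comp_left {X : Type*} [TopologicalSpace X] [CompactSpace X]
    {F G : Type u} [NormedAddCommGroup F] [NormedSpace ℝ F] [NormedAddCommGroup G] [NormedSpace ℝ G]
    {f : C(F, G)} (hf : ContDiff ℝ ∞ f) : ContDiff ℝ ∞ fun u : C(X, F) ↦ f.comp u :=
  contDiff_infty.2 fun n ↦ contDiff_comp_left_nat n (contDiff_infty.1 hf n)

section Flow

theorem norm_comp_sub_comp_le {X F : Type*} [TopologicalSpace X] [CompactSpace X]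
    [NormedAddCommGroup F] {V : C(F, F)} {K : ℝ≥0} (hK : LipschitzWith K V) (u v : C(X, F)) :
    ‖V.comp u - V.comp v‖ ≤ K * ‖u - v‖ := by
  rw [ContinuousMap.norm_le _ (by positivity)]
  exact fun x ↦ (hK.norm_sub_le (u x) (v x)).trans
    (mul_le_mul_of_nonneg_left ((u - v).norm_coe_le_norm x) K.2)

theorem continuous_comp_projIcc {F : Type*} [TopologicalSpace F] (u : C(unitInterval, F)) :
    Continuous fun s : ℝ ↦ u (projIcc 0 1 zero_le_one s) :=
  u.continuous.comp continuous_projIcc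

variable {E : Type*} [NormedAddCommGroup E] [NormedSpace ℝ E]

/-- A smooth complete flow of the autonomous vector field `V`. -/
structure IsSmoothFlow (V : E → E) (φ : ℝ → E → E) : Prop where
  map_zero : ∀ z, φ 0 z = z
  hasDerivAt : ∀ z t, HasDerivAt (fun t ↦ φ t z) (V (φ t z)) t
  map_add : ∀ s t z, φ (s + t) z = φ s (φ t z)
  contDiff : ContDiff ℝ ∞ fun p : ℝ × E ↦ φ p.1 p.2

theorem eqOn_Ioo_of_hasDerivAt {V : E → E} {K : ℝ≥0} (hK : LipschitzWith K V) {a b t₀ : ℝ}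
    (ht₀ : t₀ ∈ Ioo a b) {x y : ℝ → E} (hx : ∀ t ∈ Ioo a b, HasDerivAt x (V (x t)) t)
    (hy : ∀ t ∈ Ioo a b, HasDerivAt y (V (y t)) t) (h : x t₀ = y t₀) : EqOn x y (Ioo a b) :=
  ODE_solution_unique_of_mem_Ioo (v := fun _ ↦ V) (s := fun _ ↦ univ)
    (fun _ _ ↦ hK.lipschitzOnWith) ht₀ (fun t ht ↦ ⟨hx t ht, trivial⟩)
    (fun t ht ↦ ⟨hy t ht, trivial⟩) h

theorem eq_of_hasDerivAt {V : E → E} {K : ℝ≥0} (hK : LipschitzWith K V) {x y : ℝ → E}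
    (hx : ∀ t, HasDerivAt x (V (x t)) t) (hy : ∀ t, HasDerivAt y (V (y t)) t) {t₀ : ℝ}
    (h : x t₀ = y t₀) : x = y :=
  ODE_solution_unique_univ (v := fun _ ↦ V) (s := fun _ ↦ univ)
    (fun _ ↦ hK.lipschitzOnWith) (fun t ↦ ⟨hx t, trivial⟩) (fun t ↦ ⟨hy t, trivial⟩) h

theorem exists_hasDerivAt_Ioo [CompleteSpace E] {V : E → E} {C K : ℝ≥0} (hC : ∀ z, ‖V z‖ ≤ C)
    (hK : LipschitzWith K V) (z : E) {T : ℝ} (hT : 0 < T) :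
    ∃ x : ℝ → E, x 0 = z ∧ ∀ t ∈ Ioo (-T) T, HasDerivAt x (V (x t)) t := by
  have h0 : (0 : ℝ) ∈ Icc (-T) T := ⟨by linarith, hT.le⟩
  have hV : IsPicardLindelof (fun _ ↦ V) ⟨0, h0⟩ z (C * ⟨T, hT.le⟩) 0 C K :=
    .of_time_independent (fun x _ ↦ hC x) hK.lipschitzOnWith (by simp; rfl)
  obtain ⟨x, hx0, hx⟩ := hV.exists_eq_forall_mem_Icc_hasDerivWithinAt₀
  exact ⟨x, hx0, fun t ht ↦ (hx t ⟨ht.1.le, ht.2.le⟩).hasDerivAt (Icc_mem_nhds ht.1 ht.2)⟩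

theorem exists_global_hasDerivAt [CompleteSpace E] {V : E → E} {C K : ℝ≥0} (hC : ∀ z, ‖V z‖ ≤ C)
    (hK : LipschitzWith K V) (z : E) :
    ∃ x : ℝ → E, x 0 = z ∧ ∀ t, HasDerivAt x (V (x t)) t := by
  choose! x hx0 hx using fun (T : ℝ) (hT : 0 < T) ↦ exists_hasDerivAt_Ioo hC hK z hT
  have hagree : ∀ {S T t : ℝ}, |t| < S → S ≤ T → x S t = x T t := fun {S T t} ht hST ↦ by
    have hS : 0 < S := (abs_nonneg t).trans_lt ht
    exact eqOn_Ioo_of_hasDerivAt hK (t₀ := 0) (a := -S) (b := S) ⟨by linarith, hS⟩ (hx S hS)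
      (fun t ht ↦ hx T (hS.trans_le hST) t ⟨by linarith [ht.1], by linarith [ht.2]⟩)
      (by rw [hx0 S hS, hx0 T (hS.trans_le hST)]) (abs_lt.1 ht)
  refine ⟨fun t ↦ x (|t| + 1) t, hx0 _ (by positivity), fun t ↦ ?_⟩
  have hlt : |t| < |t| + 1 := lt_add_one _
  have heq : (fun s ↦ x (|s| + 1) s) =ᶠ[𝓝 t] x (|t| + 2) := by
    filter_upwards [(continuous_abs.tendsto t).eventually_lt_const hlt] with s hs
    exact hagree (lt_add_one _) (by linarith)
  have hd := (hx (|t| + 2) (by positivity) t (abs_lt.1 (by linarith))).congr_of_eventuallyEq heq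
  rwa [← hagree hlt (by linarith)] at hd

/-- The primitive vanishing at `0`, as an operator on `C([0, 1], E)`. The integrand is extended
to `ℝ` by projecting onto `[0, 1]`. -/
noncomputable def primitiveLinearMap : C(unitInterval, E) →ₗ[ℝ] C(unitInterval, E) where
  toFun u := ⟨fun x ↦ ∫ s in (0 : ℝ)..x, u (projIcc 0 1 zero_le_one s),
    (intervalIntegral.continuous_primitive
      (fun a b ↦ (continuous_comp_projIcc u).intervalIntegrable a b) 0).comp
      continuous_subtype_val⟩
  map_add' u v := ContinuousMap.ext fun _ ↦
    intervalIntegral.integral_add ((continuous_comp_projIcc u).intervalIntegrable _ _)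
      ((continuous_comp_projIcc v).intervalIntegrable _ _)
  map_smul' c u := ContinuousMap.ext fun _ ↦
    intervalIntegral.integral_smul c fun s ↦ u (projIcc 0 1 zero_le_one s)

theorem norm_primitiveLinearMap_le (u : C(unitInterval, E)) :
    ‖primitiveLinearMap u‖ ≤ 1 * ‖u‖ := by
  rw [ContinuousMap.norm_le _ (by positivity)]
  intro x
  have hbound := intervalIntegral.norm_integral_le_of_norm_le_const (a := 0) (b := (x : ℝ))
    (f := fun s ↦ u (projIcc 0 1 zero_le_one s)) (C := ‖u‖) fun s _ ↦ u.norm_coe_le_norm _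
  refine hbound.trans ?_
  rw [one_mul, sub_zero, abs_of_nonneg x.2.1]
  exact mul_le_of_le_one_right (norm_nonneg _) x.2.2

/-- `primitiveLinearMap` as a bounded operator. -/
noncomputable def primitiveCLM : C(unitInterval, E) →L[ℝ] C(unitInterval, E) :=
  primitiveLinearMap.mkContinuous 1 norm_primitiveLinearMap_le

theorem primitiveCLM_apply (u : C(unitInterval, E)) (x : unitInterval) :
    primitiveCLM u x = ∫ s in (0 : ℝ)..x, u (projIcc 0 1 zero_le_one s) := rfl

theorem norm_primitiveCLM_le :
    ‖(primitiveCLM : C(unitInterval, E) →L[ℝ] C(unitInterval, E))‖ ≤ 1 :=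
  LinearMap.mkContinuous_norm_le _ zero_le_one _

/-- The defect in the integral equation `u(r) = z + T ∫₀ʳ V(u)` satisfied by the rescaled
trajectory `r ↦ φ (T * r) z` of a flow of `V`; here `q = (T, z)`. -/
noncomputable def integralEquationDefect (V : C(E, E)) (q : ℝ × E) (u : C(unitInterval, E)) :
    C(unitInterval, E) :=
  u - ContinuousMap.const _ q.2 - q.1 • primitiveCLM (V.comp u)

theorem contDiff_integralEquationDefect {V : C(E, E)} (hV : ContDiff ℝ ∞ V) :
    ContDiff ℝ ∞ fun p : (ℝ × E) × C(unitInterval, E) ↦ integralEquationDefect V p.1 p.2 := by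
  have hconst : ContDiff ℝ ∞ fun p : (ℝ × E) × C(unitInterval, E) ↦
      (ContinuousMap.const unitInterval p.1.2) :=
    (ContinuousLinearMap.const ℝ unitInterval : E →L[ℝ] _).contDiff.comp
      (contDiff_snd.comp contDiff_fst)
  exact (contDiff_snd.sub hconst).sub ((contDiff_fst.comp contDiff_fst).smul
    (primitiveCLM.contDiff.comp ((contDiff_comp_left hV).comp contDiff_snd)))

theorem eq_of_integralEquationDefect_eq_zero {V : C(E, E)} {K : ℝ≥0} (hK : LipschitzWith K V)
    {q : ℝ × E} (hq : |q.1| * K < 1) {u v : C(unitInterval, E)}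
    (hu : integralEquationDefect V q u = 0) (hv : integralEquationDefect V q v = 0) : u = v := by
  have hdiff : u - v = q.1 • primitiveCLM (V.comp u - V.comp v) := by
    have hsub := sub_eq_zero.2 (hu.trans hv.symm)
    simp only [integralEquationDefect] at hsub
    rw [map_sub, smul_sub, ← sub_eq_zero, ← hsub]
    abel
  have hint : ‖primitiveCLM (V.comp u - V.comp v)‖ ≤ K * ‖u - v‖ :=
    (ContinuousLinearMap.le_of_opNorm_le _ norm_primitiveCLM_le _).trans
      (by rw [one_mul]; exact norm_comp_sub_comp_le hK u v)
  have hcontr : ‖u - v‖ ≤ |q.1| * K * ‖u - v‖ := by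
    calc ‖u - v‖ = |q.1| * ‖primitiveCLM (V.comp u - V.comp v)‖ := by
          rw [← Real.norm_eq_abs, ← norm_smul, ← hdiff]
      _ ≤ |q.1| * (K * ‖u - v‖) := mul_le_mul_of_nonneg_left hint (abs_nonneg _)
      _ = |q.1| * K * ‖u - v‖ := by ring
  have hnorm : ‖u - v‖ = 0 := by nlinarith [norm_nonneg (u - v)]
  exact sub_eq_zero.1 (norm_eq_zero.1 hnorm)

theorem integralEquationDefect_trajectory [CompleteSpace E] {V : C(E, E)} {φ : ℝ → E → E}
    (h0 : ∀ z, φ 0 z = z) (hd : ∀ z t, HasDerivAt (fun t ↦ φ t z) (V (φ t z)) t) (q : ℝ × E)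
    {u : C(unitInterval, E)} (hu : ∀ r : unitInterval, u r = φ (q.1 * r) q.2) :
    integralEquationDefect V q u = 0 := by
  ext x
  have hx : ∫ s in (0 : ℝ)..x, (V.comp u) (projIcc 0 1 zero_le_one s) =
      ∫ s in (0 : ℝ)..x, V (φ (q.1 * s) q.2) := by
    refine intervalIntegral.integral_congr fun s hs ↦ ?_
    rw [uIcc_of_le x.2.1] at hs
    simp only [ContinuousMap.comp_apply, hu, projIcc_of_mem zero_le_one ⟨hs.1, hs.2.trans x.2.2⟩]
  have hderiv : ∀ s, HasDerivAt (fun r : ℝ ↦ φ (q.1 * r) q.2) (q.1 • V (φ (q.1 * s) q.2)) s :=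
    fun s ↦ by
      simpa [Function.comp_def] using
        (hd q.2 (q.1 * s)).scomp s ((hasDerivAt_id s).const_mul q.1)
  have hcont : Continuous fun r : ℝ ↦ φ (q.1 * r) q.2 :=
    continuous_iff_continuousAt.2 fun s ↦ (hderiv s).continuousAt
  have hftc := intervalIntegral.integral_eq_sub_of_hasDerivAt (a := 0) (b := x)
    (fun s _ ↦ hderiv s)
    (((V.continuous.comp hcont).const_smul q.1).intervalIntegrable _ _)
  rw [intervalIntegral.integral_smul] at hftc
  simp only [integralEquationDefect, ContinuousMap.sub_apply, ContinuousMap.smul_apply,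
    ContinuousMap.const_apply, primitiveCLM_apply, hx, hftc, hu, mul_zero, h0, sub_self,
    ContinuousMap.zero_apply]

theorem isInvertible_one_sub [CompleteSpace E] {T : E →L[ℝ] E} (hT : ‖T‖ < 1) :
    (1 - T).IsInvertible :=
  ⟨ContinuousLinearEquiv.unitsEquiv ℝ E (Units.oneSub T hT), rfl⟩

theorem hasFDerivAt_integralEquationDefect [CompleteSpace E] {V : C(E, E)}
    {u : C(unitInterval, E)} {D : C(unitInterval, E) →L[ℝ] C(unitInterval, E)}
    (hD : HasFDerivAt (fun u : C(unitInterval, E) ↦ V.comp u) D u) (q : ℝ × E) :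
    HasFDerivAt (fun u ↦ integralEquationDefect V q u) (1 - q.1 • (primitiveCLM ∘L D)) u :=
  ((hasFDerivAt_id u).sub_const (ContinuousMap.const _ q.2)).sub
    ((primitiveCLM.hasFDerivAt.comp u hD).const_smul q.1)

theorem isInvertible_one_sub_smul_comp [CompleteSpace E] {P D : E →L[ℝ] E} (hP : ‖P‖ ≤ 1)
    {K : ℝ≥0} (hD : ‖D‖ ≤ K) {t : ℝ} (ht : |t| * K < 1) : (1 - t • (P ∘L D)).IsInvertible := by
  have hcomp : ‖P ∘L D‖ ≤ K :=
    calc ‖P ∘L D‖ ≤ ‖P‖ * ‖D‖ := P.opNorm_comp_le D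
      _ ≤ 1 * K := mul_le_mul hP hD (norm_nonneg D) zero_le_one
      _ = K := one_mul _
  refine isInvertible_one_sub ((ContinuousLinearMap.opNorm_smul_le t _).trans_lt ?_)
  exact (mul_le_mul_of_nonneg_left hcomp (abs_nonneg _)).trans_lt ht

theorem isInvertible_fderiv_integralEquationDefect [CompleteSpace E] {V : C(E, E)}
    (hV : ContDiff ℝ ∞ V) {K : ℝ≥0} (hK : LipschitzWith K V) {q : ℝ × E} (hq : |q.1| * K < 1)
    (u : C(unitInterval, E)) :
    (fderiv ℝ (fun p : (ℝ × E) × C(unitInterval, E) ↦ integralEquationDefect V p.1 p.2) (q, u) ∘L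
      .inr ℝ (ℝ × E) C(unitInterval, E)).IsInvertible := by
  have hpartial := ((contDiff_integralEquationDefect hV).differentiable
    (by simp) (q, u)).hasFDerivAt.comp u (hasFDerivAt_prodMk_right q u)
  have hcomp : HasFDerivAt (fun u : C(unitInterval, E) ↦ V.comp u)
      (fderiv ℝ (fun u : C(unitInterval, E) ↦ V.comp u) u) u :=
    ((contDiff_comp_left hV).differentiable (by simp) u).hasFDerivAt
  rw [hpartial.unique (hasFDerivAt_integralEquationDefect hcomp q)]
  exact isInvertible_one_sub_smul_comp norm_primitiveCLM_le
    (norm_fderiv_le_of_lip' ℝ K.2 (.of_forall fun v ↦ norm_comp_sub_comp_le hK v u)) hq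

theorem contDiffAt_flow_of_abs_mul_lt_one [CompleteSpace E] {V : E → E} (hV : ContDiff ℝ ∞ V)
    {K : ℝ≥0} (hK : LipschitzWith K V) {φ : ℝ → E → E} (h0 : ∀ z, φ 0 z = z)
    (hd : ∀ z t, HasDerivAt (fun t ↦ φ t z) (V (φ t z)) t) {q : ℝ × E} (hq : |q.1| * K < 1) :
    ContDiffAt ℝ ∞ (fun p : ℝ × E ↦ φ p.1 p.2) q := by
  have hcont (z : E) : Continuous fun t ↦ φ t z :=
    continuous_iff_continuousAt.2 fun t ↦ (hd z t).continuousAt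
  let W : C(E, E) := ⟨V, hV.continuous⟩
  let U : ℝ × E → C(unitInterval, E) := fun q ↦ ⟨fun r ↦ φ (q.1 * r) q.2,
    (hcont q.2).comp (continuous_const.mul continuous_subtype_val)⟩
  have hU (q : ℝ × E) : integralEquationDefect W q (U q) = 0 :=
    integralEquationDefect_trajectory h0 hd q fun r ↦ rfl
  have hdefect := (contDiff_integralEquationDefect (V := W) hV).contDiffAt (x := (q, U q))
  have hinv := isInvertible_fderiv_integralEquationDefect (V := W) hV hK hq (U q)
  have hsmall : ∀ᶠ p : ℝ × E in 𝓝 q, |p.1| * K < 1 :=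
    ((by fun_prop : Continuous fun p : ℝ × E ↦ |p.1| * (K : ℝ)).tendsto q).eventually_lt_const hq
  have hUsmooth : ContDiffAt ℝ ∞ U q := by
    refine (hdefect.contDiffAt_implicitFunction (by simp) hinv).congr_of_eventuallyEq ?_
    filter_upwards [hdefect.eventually_apply_implicitFunction (by simp) hinv, hsmall] with p hp hp'
    exact eq_of_integralEquationDefect_eq_zero (V := W) hK hp' (hU p) (hp.trans (hU q))
  have heval : (fun p : ℝ × E ↦ φ p.1 p.2) =
      fun p ↦ ContinuousMap.evalCLM ℝ (1 : unitInterval) (U p) := by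
    ext p
    simp [U]
  rw [heval]
  exact (ContinuousMap.evalCLM ℝ (1 : unitInterval)).contDiff.contDiffAt.comp q hUsmooth

-- Induction on `n`: the time `t` is split as `t / (n + 1) + t * n / (n + 1)`.
theorem contDiffAt_flow_of_abs_mul_lt [CompleteSpace E] {V : E → E} (hV : ContDiff ℝ ∞ V)
    {K : ℝ≥0} (hK : LipschitzWith K V) {φ : ℝ → E → E} (h0 : ∀ z, φ 0 z = z)
    (hd : ∀ z t, HasDerivAt (fun t ↦ φ t z) (V (φ t z)) t)
    (hadd : ∀ s t z, φ (s + t) z = φ s (φ t z)) (n : ℕ) :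
    ∀ {q : ℝ × E}, |q.1| * K < n + 1 → ContDiffAt ℝ ∞ (fun p : ℝ × E ↦ φ p.1 p.2) q := by
  induction n with
  | zero => exact fun hq ↦ contDiffAt_flow_of_abs_mul_lt_one hV hK h0 hd (by simpa using hq)
  | succ n ih =>
    intro q hq
    push_cast at hq
    have hn : (0 : ℝ) < n + 1 := by positivity
    have hn' : (0 : ℝ) < n + 2 := by positivity
    have hsplit : (fun p : ℝ × E ↦ φ p.1 p.2) = fun p ↦ (fun p : ℝ × E ↦ φ p.1 p.2)
        (p.1 / (n + 2), (fun p : ℝ × E ↦ φ p.1 p.2) (p.1 * ((n + 1) / (n + 2)), p.2)) := by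
      ext p
      simp only
      rw [← hadd]
      congr 1
      field_simp
      ring
    rw [hsplit]
    have houter : |q.1 / (n + 2)| * K < 1 := by
      rw [abs_div, abs_of_pos hn', div_mul_eq_mul_div, div_lt_one hn']
      linarith
    have hinner : |q.1 * ((n + 1) / (n + 2))| * K < n + 1 := by
      rw [abs_mul, abs_of_pos (div_pos hn hn')]
      calc |q.1| * ((n + 1) / (n + 2)) * K = |q.1| * K * ((n + 1) / (n + 2)) := by ring
        _ < (n + 1 + 1) * ((n + 1) / (n + 2)) := by gcongr
        _ = n + 1 := by field_simp; ring
    refine ContDiffAt.comp q (contDiffAt_flow_of_abs_mul_lt_one hV hK h0 hd houter)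
      (ContDiffAt.prodMk (by fun_prop) ?_)
    exact ContDiffAt.comp (f := fun p : ℝ × E ↦ (p.1 * (((n : ℝ) + 1) / (n + 2)), p.2))
      (g := fun p : ℝ × E ↦ φ p.1 p.2) q (ih hinner) (by fun_prop)

theorem exists_isSmoothFlow [CompleteSpace E] {V : E → E} (hV : ContDiff ℝ ∞ V) {C K : ℝ≥0}
    (hC : ∀ z, ‖V z‖ ≤ C) (hK : LipschitzWith K V) : ∃ φ : ℝ → E → E, IsSmoothFlow V φ := by
  choose x hx0 hx using exists_global_hasDerivAt hC hK
  have hadd (s t : ℝ) (z : E) : x z (s + t) = x (x z t) s :=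
    congrFun (eq_of_hasDerivAt hK (fun s ↦ (hx z (s + t)).comp_add_const s t) (hx (x z t))
      (t₀ := 0) (by simp [hx0])) s
  refine ⟨fun t z ↦ x z t, hx0, hx, hadd, contDiff_iff_contDiffAt.2 fun q ↦ ?_⟩
  obtain ⟨n, hn⟩ := exists_nat_gt (|q.1| * K)
  exact contDiffAt_flow_of_abs_mul_lt hV hK hx0 hx hadd n (hn.trans (lt_add_one _))

end Flow

section Secants

theorem exists_int_forall_abs_sub_lt_pi {X : Type*} [TopologicalSpace X] {S : Set X}
    (hS : IsPreconnected S) {g : X → ℝ} (hg : ContinuousOn g S)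
    (hcos : ∀ x ∈ S, Real.cos (g x) ≠ -1) :
    ∃ m : ℤ, ∀ x ∈ S, |g x - 2 * π * m| < π := by
  rcases S.eq_empty_or_nonempty with rfl | ⟨x₀, hx₀⟩
  · exact ⟨0, by simp⟩
  set m : ℤ := round (g x₀ / (2 * π)) with hm
  have hne_pi : ∀ x ∈ S, |g x - 2 * π * m| ≠ π := fun x hx hpi ↦ hcos x hx <| by
    rw [← Real.cos_sub_int_mul_two_pi (g x) m, mul_comm (m : ℝ), ← Real.cos_abs, hpi, Real.cos_pi]
  have hle_pi : |g x₀ - 2 * π * m| ≤ π := by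
    have hround := abs_sub_round (g x₀ / (2 * π))
    rw [← hm] at hround
    rw [show g x₀ - 2 * π * m = 2 * π * (g x₀ / (2 * π) - m) by field_simp, abs_mul,
      abs_of_pos two_pi_pos]
    nlinarith [Real.pi_pos]
  refine ⟨m, fun x hx ↦ ?_⟩
  by_contra! hge
  obtain ⟨y, hy, hpi⟩ := hS.intermediate_value hx₀ hx
    (f := fun x ↦ |g x - 2 * π * m|) (hg.sub continuousOn_const).abs ⟨hle_pi, hge⟩
  exact hne_pi y hy hpi

theorem exists_int_forall_abs_sub_lt_pi_div_two {X : Type*} [TopologicalSpace X] {S : Set X}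
    (hS : IsPreconnected S) {g : X → ℝ} (hg : ContinuousOn g S)
    (hcos : ∀ x ∈ S, 0 < Real.cos (g x)) :
    ∃ m : ℤ, ∀ x ∈ S, |g x - 2 * π * m| < π / 2 := by
  obtain ⟨m, hm⟩ := exists_int_forall_abs_sub_lt_pi hS hg fun x hx ↦ by linarith [hcos x hx]
  refine ⟨m, fun x hx ↦ ?_⟩
  by_contra! hge
  have hnonpos := Real.cos_nonpos_of_pi_div_two_le_of_le hge (by linarith [hm x hx, Real.pi_pos])
  rw [Real.cos_abs, mul_comm, Real.cos_sub_int_mul_two_pi] at hnonpos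
  exact (hcos x hx).not_ge hnonpos

theorem exists_continuous_exp_eq {X : Type*} [TopologicalSpace X] [SimplyConnectedSpace X]
    [LocallyPathConnectedSpace X] {f : X → ℂ} (hf : Continuous f) (h0 : ∀ x, f x ≠ 0) :
    ∃ g : X → ℂ, Continuous g ∧ ∀ x, Complex.exp (g x) = f x := by
  obtain ⟨x₀⟩ : Nonempty X := inferInstance
  obtain ⟨g, hg, -⟩ := Complex.isCoveringMapOn_exp.existsUnique_continuousMap_lifts
    (⟨f, hf⟩ : C(X, ℂ)) (a₀ := x₀) (Complex.exp_log (h0 _)) (fun x ↦ h0 x)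
  exact ⟨g, g.continuous, congrFun hg.2⟩

theorem re_exp_mul_conj_exp_pos_iff (a b : ℂ) :
    0 < (Complex.exp a * conj (Complex.exp b)).re ↔ 0 < Real.cos (a.im - b.im) := by
  have hre : (Complex.exp a * conj (Complex.exp b)).re =
      Real.exp (a.re + b.re) * Real.cos (a.im - b.im) := by
    rw [← Complex.exp_conj, ← Complex.exp_add, Complex.exp_re]
    simp [sub_eq_add_neg]
  rw [hre]
  exact mul_pos_iff_of_pos_left (Real.exp_pos _)

/-- The slope `(c (s + u) - c s) / u` of a curve `c` with derivative `c'`, written as the mean of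
`c'` so that it extends continuously to `u = 0`; here `p = (s, u)`. -/
noncomputable def secantSlope (c' : ℝ → ℂ) (p : ℝ × ℝ) : ℂ := ∫ r in (0 : ℝ)..1, c' (p.1 + r * p.2)

theorem continuous_secantSlope {c' : ℝ → ℂ} (h : Continuous c') : Continuous (secantSlope c') := by
  unfold secantSlope
  apply intervalIntegral.continuous_parametric_intervalIntegral_of_continuous'
  fun_prop

theorem secantSlope_zero (c' : ℝ → ℂ) (s : ℝ) : secantSlope c' (s, 0) = c' s := by
  simp [secantSlope]

theorem mul_secantSlope {c c' : ℝ → ℂ} (hc : ∀ t, HasDerivAt c (c' t) t) (hc' : Continuous c')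
    (s u : ℝ) : u * secantSlope c' (s, u) = c (s + u) - c s := by
  have hd (r : ℝ) : HasDerivAt (fun r : ℝ ↦ c (s + r * u)) (u • c' (s + r * u)) r := by
    simpa [Function.comp_def] using
      (hc (s + r * u)).scomp r (((hasDerivAt_id r).mul_const u).const_add s)
  have hftc := intervalIntegral.integral_eq_sub_of_hasDerivAt (a := 0) (b := 1)
    (fun r _ ↦ hd r) ((by fun_prop : Continuous fun r : ℝ ↦ u • c' (s + r * u)).intervalIntegrable
      _ _)
  rw [intervalIntegral.integral_smul] at hftc
  simpa [secantSlope] using hftc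

/-- The parameters `(s, u)` of the chords from `s` to `s + u` inside `[a, b]` of length at most
`d`. -/
def chords (a b d : ℝ) : Set (ℝ × ℝ) := {p | a ≤ p.1 ∧ 0 ≤ p.2 ∧ p.1 + p.2 ≤ b ∧ p.2 ≤ d}

theorem convex_chords (a b d : ℝ) : Convex ℝ (chords a b d) := by
  rintro ⟨s, u⟩ ⟨h₁, h₂, h₃, h₄⟩ ⟨s', u'⟩ ⟨h₁', h₂', h₃', h₄'⟩ x y hx hy hxy
  obtain rfl : y = 1 - x := by linarith
  simp only at h₁ h₂ h₃ h₄ h₁' h₂' h₃' h₄'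
  refine ⟨?_, ?_, ?_, ?_⟩ <;> simp <;> nlinarith

theorem exists_retraction_chords {a b d : ℝ} (hd : 0 ≤ d) (hdab : d ≤ b - a) :
    ∃ ρ : ℝ × ℝ → ℝ × ℝ, Continuous ρ ∧ (∀ p, ρ p ∈ chords a b d) ∧
      ∀ p ∈ chords a b d, ρ p = p := by
  refine ⟨fun p ↦ (max a (min p.1 (b - max 0 (min p.2 d))), max 0 (min p.2 d)), by fun_prop,
    fun p ↦ ?_, fun p hp ↦ ?_⟩
  · have hu : max 0 (min p.2 d) ≤ d := max_le hd (min_le_right _ _)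
    have hs : max a (min p.1 (b - max 0 (min p.2 d))) ≤ b - max 0 (min p.2 d) :=
      max_le (by linarith) (min_le_right _ _)
    exact ⟨le_max_left _ _, le_max_left _ _, by linarith, hu⟩
  · have hu : max 0 (min p.2 d) = p.2 := by rw [min_eq_left hp.2.2.2, max_eq_right hp.2.1]
    simp only [hu]
    rw [min_eq_left (by linarith [hp.2.2.1]), max_eq_right hp.1]

theorem exists_continuous_exp_eq_secantSlope {c' : ℝ → ℂ} (hc' : Continuous c') {a b d : ℝ}
    (hd : 0 ≤ d) (hdab : d ≤ b - a) (h0 : ∀ p ∈ chords a b d, secantSlope c' p ≠ 0) :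
    ∃ g : ℝ × ℝ → ℂ, Continuous g ∧
      ∀ p ∈ chords a b d, Complex.exp (g p) = secantSlope c' p := by
  obtain ⟨ρ, hρ, hmem, hid⟩ := exists_retraction_chords hd hdab
  obtain ⟨g, hg, hexp⟩ := exists_continuous_exp_eq
    ((continuous_secantSlope hc').comp hρ) fun p ↦ h0 _ (hmem p)
  exact ⟨g, hg, fun p hp ↦ by rw [hexp, Function.comp_apply, hid p hp]⟩

end Secants

section NonTrapping

theorem exists_dist_le_of_bounded {E : Type*} [PseudoMetricSpace E] [ProperSpace E] {x : ℝ → E}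
    (hb : Bornology.IsBounded (x '' Ici 0)) {δ ε : ℝ} (hδ : 0 < δ) (hε : 0 < ε) :
    ∃ s t : ℝ, 0 ≤ s ∧ δ ≤ t - s ∧ dist (x t) (x s) ≤ ε := by
  obtain ⟨a, -, φ, hφ, hlim⟩ := tendsto_subseq_of_bounded (x := fun n : ℕ ↦ x (δ * n)) hb
    fun n ↦ mem_image_of_mem x (mem_Ici.2 (by positivity))
  obtain ⟨N, hN⟩ := Metric.cauchySeq_iff'.1 hlim.cauchySeq ε hε
  have hstep : (φ N : ℝ) + 1 ≤ φ (N + 1) := by exact_mod_cast hφ N.lt_succ_self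
  exact ⟨δ * φ N, δ * φ (N + 1), by positivity, by nlinarith, (hN (N + 1) N.le_succ).le⟩

theorem exists_minimal_dist_le {E : Type*} [PseudoMetricSpace E] [ProperSpace E] {x : ℝ → E}
    (hx : Continuous x) (hb : Bornology.IsBounded (x '' Ici 0)) {δ ε : ℝ} (hδ : 0 < δ)
    (hε : 0 < ε) :
    ∃ a b : ℝ, δ ≤ b - a ∧ dist (x b) (x a) ≤ ε ∧
      ∀ s t, a ≤ s → t ≤ b → δ ≤ t - s → t - s < b - a → ε < dist (x t) (x s) := by
  obtain ⟨s₀, t₀, hs₀, hst₀, hclose₀⟩ := exists_dist_le_of_bounded hb hδ hε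
  let S : Set (ℝ × ℝ) := (Icc 0 t₀ ×ˢ Icc 0 t₀) ∩
    ({p | δ ≤ p.2 - p.1} ∩ {p | dist (x p.2) (x p.1) ≤ ε})
  have hS : IsCompact S := (isCompact_Icc.prod isCompact_Icc).inter_right <|
    (isClosed_le continuous_const (by fun_prop)).inter (isClosed_le (by fun_prop) continuous_const)
  have hne : S.Nonempty := ⟨(s₀, t₀), ⟨⟨⟨hs₀, by linarith⟩, ⟨by linarith, le_rfl⟩⟩, hst₀, hclose₀⟩⟩
  obtain ⟨⟨a, b⟩, ⟨⟨ha, hb⟩, hab, hclose⟩, hmin⟩ := hS.exists_isMinOn hne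
    (f := fun p : ℝ × ℝ ↦ p.2 - p.1) (by fun_prop)
  simp only [mem_ofPred_eq, mem_Icc] at ha hb hab hclose
  refine ⟨a, b, hab, hclose, fun s t hs ht hst hlt ↦ ?_⟩
  by_contra! h
  have hmem : (s, t) ∈ S :=
    ⟨⟨⟨by linarith, by linarith⟩, ⟨by linarith, by linarith⟩⟩, hst, h⟩
  exact hlt.not_ge (hmin hmem)

theorem norm_exp_neg_ofReal_mul_I (α : ℝ) : ‖Complex.exp (-(α * I))‖ = 1 := by
  rw [← neg_mul, ← Complex.ofReal_neg, Complex.norm_exp_ofReal_mul_I]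

theorem half_le_re_of_abs_angle_sub_le_one {x : ℝ → ℂ} {w : ℝ → ℝ}
    (hx : ∀ t, HasDerivAt x (Complex.exp (w t * I)) t) {α a b : ℝ} (hab : a ≤ b)
    (hw : ∀ r ∈ Icc a b, |w r - α| ≤ 1) :
    (b - a) / 2 ≤ ((x b - x a) * Complex.exp (-(α * I))).re := by
  have hd (t : ℝ) : HasDerivAt (fun t ↦ (x t * Complex.exp (-(α * I))).re - t / 2)
      (Real.cos (w t - α) - 1 / 2) t := by
    have hre := Complex.reCLM.hasFDerivAt.comp_hasDerivAt t
      ((hx t).mul_const (Complex.exp (-(α * I))))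
    convert! hre.sub ((hasDerivAt_id t).div_const 2) using 1
    rw [← Complex.exp_add, reCLM_apply, show (w t * I + -(α * I) : ℂ) = ((w t - α : ℝ) : ℂ) * I by
      push_cast; ring, Complex.exp_ofReal_mul_I_re]
  have hmono : MonotoneOn (fun t ↦ (x t * Complex.exp (-(α * I))).re - t / 2) (Icc a b) := by
    refine monotoneOn_of_deriv_nonneg (convex_Icc a b)
      (fun t _ ↦ (hd t).continuousAt.continuousWithinAt)
      (fun t _ ↦ (hd t).differentiableAt.differentiableWithinAt) fun t ht ↦ ?_
    rw [(hd t).deriv]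
    have hsq : (w t - α) ^ 2 ≤ 1 := (sq_le_one_iff_abs_le_one _).2 (hw t (interior_subset ht))
    linarith [Real.one_sub_sq_div_two_le_cos (x := w t - α)]
  have hle := hmono (left_mem_Icc.2 hab) (right_mem_Icc.2 hab) hab
  rw [sub_mul, Complex.sub_re]
  linarith

/-- An arc `[a, b]` of an integral curve `x` of the unit vector field `exp (i ψ)` that nearly
closes up, of minimal length among such arcs of length at least `2 * τ`. The constant `1 / 40`
makes the direction of `x` nearly constant at the time scale `τ`. -/
structure IsMinimalAlmostLoop (ψ : ℂ → ℝ) (K : ℝ≥0) (x : ℝ → ℂ) (τ a b : ℝ) : Prop where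
  lipschitzWith : LipschitzWith K ψ
  hasDerivAt : ∀ t, HasDerivAt x (Complex.exp (ψ (x t) * I)) t
  pos : 0 < τ
  mul_le : K * τ ≤ 1 / 40
  length : 2 * τ ≤ b - a
  close : ‖x b - x a‖ ≤ τ / 2
  far : ∀ s t, a ≤ s → t ≤ b → 2 * τ ≤ t - s → t - s < b - a → τ / 2 < ‖x t - x s‖

namespace IsMinimalAlmostLoop

variable {ψ : ℂ → ℝ} {K : ℝ≥0} {x : ℝ → ℂ} {τ a b : ℝ} (h : IsMinimalAlmostLoop ψ K x τ a b)

include h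

theorem continuous : Continuous x :=
  continuous_iff_continuousAt.2 fun t ↦ (h.hasDerivAt t).continuousAt

theorem continuous_angle : Continuous fun t ↦ ψ (x t) :=
  h.lipschitzWith.continuous.comp h.continuous

theorem continuous_velocity : Continuous fun t ↦ Complex.exp (ψ (x t) * I) := by
  have hψ := h.lipschitzWith.continuous
  have hx := h.continuous
  fun_prop

theorem abs_angle_sub_le_norm (s t : ℝ) : |ψ (x s) - ψ (x t)| ≤ K * ‖x s - x t‖ := by
  simpa [Real.dist_eq, dist_eq_norm] using h.lipschitzWith.dist_le_mul (x s) (x t)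

theorem abs_angle_sub_le (s t : ℝ) : |ψ (x s) - ψ (x t)| ≤ K * |s - t| := by
  have hunit : LipschitzWith 1 x := lipschitzWith_of_nnnorm_deriv_le
    (fun t ↦ (h.hasDerivAt t).differentiableAt) fun t ↦ by
      rw [(h.hasDerivAt t).deriv, ← NNReal.coe_le_coe]
      simp
  refine (h.abs_angle_sub_le_norm s t).trans (mul_le_mul_of_nonneg_left ?_ K.2)
  simpa [Real.dist_eq, dist_eq_norm] using hunit.dist_le_mul s t

theorem abs_angle_sub_endpoints_le : |ψ (x b) - ψ (x a)| ≤ 1 / 40 :=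
  (h.abs_angle_sub_le_norm b a).trans (by nlinarith [h.close, h.pos, h.mul_le, K.2])

theorem half_le_re {s t : ℝ} (hst : s ≤ t) (hts : t ≤ s + 4 * τ) :
    (t - s) / 2 ≤ ((x t - x s) * Complex.exp (-(ψ (x s) * I))).re := by
  refine half_le_re_of_abs_angle_sub_le_one h.hasDerivAt hst fun r hr ↦
    (h.abs_angle_sub_le r s).trans ?_
  rw [abs_of_nonneg (by linarith [hr.1])]
  nlinarith [hr.1, hr.2, h.mul_le, K.2]

theorem half_le_norm {s t : ℝ} (hst : s ≤ t) (hts : t ≤ s + 4 * τ) :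
    (t - s) / 2 ≤ ‖x t - x s‖ := by
  refine (h.half_le_re hst hts).trans ((Complex.re_le_norm _).trans ?_)
  rw [norm_mul, norm_exp_neg_ofReal_mul_I, mul_one]

theorem four_mul_lt_length : 4 * τ < b - a := by
  by_contra! hle
  have hprogress := h.half_le_norm (s := a) (t := b) (by linarith [h.length, h.pos]) (by linarith)
  linarith [h.length, h.close, h.pos]

theorem secantSlope_ne_zero {p : ℝ × ℝ} (hp : p ∈ chords a b (b - a - 2 * τ)) :
    secantSlope (fun t ↦ Complex.exp (ψ (x t) * I)) p ≠ 0 := by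
  obtain ⟨s, u⟩ := p
  obtain ⟨hs, hu, hsu, hu'⟩ := hp
  simp only at hs hu hsu hu'
  intro h0
  rcases hu.eq_or_lt with rfl | hupos
  · rw [secantSlope_zero] at h0
    exact Complex.exp_ne_zero _ h0
  · have hnorm : ‖x (s + u) - x s‖ = 0 := by
      rw [← mul_secantSlope h.hasDerivAt h.continuous_velocity, h0, mul_zero, norm_zero]
    rcases le_or_gt u (4 * τ) with hshort | hlong
    · linarith [h.half_le_norm (s := s) (t := s + u) (by linarith) (by linarith)]
    · linarith [h.far s (s + u) hs hsu (by linarith [h.pos]) (by linarith [h.pos]), h.pos]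

theorem exists_secantLog : ∃ g : ℝ × ℝ → ℂ, Continuous g ∧ ∀ p ∈ chords a b (b - a - 2 * τ),
    Complex.exp (g p) = secantSlope (fun t ↦ Complex.exp (ψ (x t) * I)) p :=
  exists_continuous_exp_eq_secantSlope h.continuous_velocity (by linarith [h.length])
    (by linarith [h.pos]) fun _ ↦ h.secantSlope_ne_zero

theorem re_long_chord_neg {s : ℝ} (hs : s ∈ Icc a (a + 2 * τ)) :
    ((x (s + (b - a - 2 * τ)) - x s) * Complex.exp (-(ψ (x a) * I))).re < 0 := by
  have hstart := h.half_le_re hs.1 (by linarith [hs.2, h.pos])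
  have hend : (b - (s + (b - a - 2 * τ))) / 2 ≤
      ((x b - x (s + (b - a - 2 * τ))) * Complex.exp (-(ψ (x a) * I))).re := by
    refine half_le_re_of_abs_angle_sub_le_one h.hasDerivAt (by linarith [hs.2]) fun r hr ↦ ?_
    have hr' := h.abs_angle_sub_le r b
    rw [abs_sub_comm r, abs_of_nonneg (by linarith [hr.2] : 0 ≤ b - r)] at hr'
    have htri : |ψ (x r) - ψ (x a)| ≤ |ψ (x r) - ψ (x b)| + |ψ (x b) - ψ (x a)| := abs_sub_le _ _ _
    nlinarith [hr.1, hs.1, K.2, h.mul_le, h.abs_angle_sub_endpoints_le]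
  have hclose : ((x b - x a) * Complex.exp (-(ψ (x a) * I))).re ≤ τ / 2 := by
    refine (Complex.re_le_norm _).trans ?_
    rw [norm_mul, norm_exp_neg_ofReal_mul_I, mul_one]
    exact h.close
  have hsplit : ((x (s + (b - a - 2 * τ)) - x s) * Complex.exp (-(ψ (x a) * I))).re =
      ((x b - x a) * Complex.exp (-(ψ (x a) * I))).re -
      ((x b - x (s + (b - a - 2 * τ))) * Complex.exp (-(ψ (x a) * I))).re -
      ((x s - x a) * Complex.exp (-(ψ (x a) * I))).re := by
    rw [← Complex.sub_re, ← Complex.sub_re]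
    ring_nf
  linarith [h.pos]

theorem re_complementary_chords_neg {u : ℝ} (hu : u ∈ Icc (2 * τ) (b - a - 2 * τ)) :
    ((x b - x (a + u)) * conj (x (a + u) - x a)).re < 0 := by
  have hfar := h.far a (a + u) le_rfl (by linarith [hu.2, h.pos]) (by linarith [hu.1])
    (by linarith [hu.2, h.pos])
  set o := x (a + u) - x a with ho
  have hle : ((x b - x a) * conj o).re ≤ τ / 2 * ‖o‖ := by
    refine (Complex.re_le_norm _).trans ?_
    rw [norm_mul, Complex.norm_conj]
    exact mul_le_mul_of_nonneg_right h.close (norm_nonneg o)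
  rw [show x b - x (a + u) = (x b - x a) - o by rw [ho]; ring, sub_mul, Complex.sub_re,
    Complex.mul_conj, Complex.ofReal_re, Complex.normSq_eq_norm_sq]
  nlinarith [norm_nonneg o, h.pos]

variable {g : ℝ × ℝ → ℂ} (hg : Continuous g) (hexp : ∀ p ∈ chords a b (b - a - 2 * τ),
  Complex.exp (g p) = secantSlope (fun t ↦ Complex.exp (ψ (x t) * I)) p)

include hexp

theorem mul_exp_secantLog {s u : ℝ} (hp : (s, u) ∈ chords a b (b - a - 2 * τ)) :
    u * Complex.exp (g (s, u)) = x (s + u) - x s := by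
  rw [hexp _ hp, mul_secantSlope h.hasDerivAt h.continuous_velocity]

theorem cos_secantLog_pos {s u α : ℝ} (hp : (s, u) ∈ chords a b (b - a - 2 * τ)) (hu : 0 < u)
    (hre : 0 < ((x (s + u) - x s) * Complex.exp (-(α * I))).re) :
    0 < Real.cos ((g (s, u)).im - α) := by
  rw [← h.mul_exp_secantLog hexp hp, mul_assoc, Complex.re_ofReal_mul] at hre
  have hcos := (re_exp_mul_conj_exp_pos_iff (g (s, u)) (α * I)).1 (by
    rw [← Complex.exp_conj]
    simpa using (mul_pos_iff_of_pos_left hu).1 hre)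
  simpa using hcos

include hg

theorem exists_int_secantLog_short :
    ∃ n : ℤ, ∀ p ∈ chords a b (2 * τ), |(g p).im - ψ (x p.1) - 2 * π * n| < π / 2 := by
  have hlong := h.four_mul_lt_length
  have hangle := h.continuous_angle
  refine exists_int_forall_abs_sub_lt_pi_div_two (g := fun p ↦ (g p).im - ψ (x p.1))
    (convex_chords a b (2 * τ)).isPreconnected
    ((Complex.continuous_im.comp hg).sub (hangle.comp continuous_fst)).continuousOn ?_
  rintro ⟨s, u⟩ ⟨hs, hu, hsu, hu'⟩
  simp only at hs hu hsu hu'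
  have hp : (s, u) ∈ chords a b (b - a - 2 * τ) := ⟨hs, hu, hsu, by linarith⟩
  rcases hu.eq_or_lt with rfl | hpos
  · have hcos := (re_exp_mul_conj_exp_pos_iff (g (s, 0)) (ψ (x s) * I)).1 (by
      rw [hexp _ hp, secantSlope_zero, Complex.mul_conj]
      simp [Complex.normSq_eq_norm_sq, Complex.norm_exp_ofReal_mul_I])
    simpa using hcos
  · refine h.cos_secantLog_pos hexp hp hpos ?_
    linarith [h.half_le_re (s := s) (t := s + u) (by linarith) (by linarith [h.pos])]

theorem exists_int_secantLog_long :
    ∃ m : ℤ, ∀ s ∈ Icc a (a + 2 * τ),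
      |(g (s, b - a - 2 * τ)).im - ψ (x a) - π - 2 * π * m| < π / 2 := by
  have hlong := h.four_mul_lt_length
  refine exists_int_forall_abs_sub_lt_pi_div_two
    (g := fun s ↦ (g (s, b - a - 2 * τ)).im - ψ (x a) - π) isPreconnected_Icc (by fun_prop)
    fun s hs ↦ ?_
  have hneg := h.re_long_chord_neg hs
  rw [sub_sub]
  refine h.cos_secantLog_pos hexp (α := ψ (x a) + π)
    ⟨hs.1, by linarith [h.pos], by simp only; linarith [hs.2], le_rfl⟩ (by linarith [h.pos]) ?_
  rw [Complex.ofReal_add, add_mul, neg_add, Complex.exp_add, Complex.exp_neg (π * I),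
    Complex.exp_pi_mul_I, inv_neg, inv_one, mul_neg_one, mul_neg, Complex.neg_re]
  exact neg_pos.2 hneg

theorem exists_int_secantLog_complementary :
    ∃ j : ℤ, ∀ u ∈ Icc (2 * τ) (b - a - 2 * τ),
      |(g (a + u, b - a - u)).im - (g (a, u)).im - π - 2 * π * j| < π / 2 := by
  refine exists_int_forall_abs_sub_lt_pi_div_two
    (g := fun u ↦ (g (a + u, b - a - u)).im - (g (a, u)).im - π) isPreconnected_Icc (by fun_prop)
    fun u hu ↦ ?_
  have hupos : 0 < u := by linarith [hu.1, h.pos]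
  have hupos' : 0 < b - a - u := by linarith [hu.2, h.pos]
  have hneg := h.re_complementary_chords_neg hu
  have hfirst := h.mul_exp_secantLog hexp (s := a) (u := u)
    ⟨le_rfl, hupos.le, by simp only; linarith, hu.2⟩
  have hsecond := h.mul_exp_secantLog hexp (s := a + u) (u := b - a - u)
    ⟨by simp only; linarith, hupos'.le, by simp only; linarith, by simp only; linarith [hu.1]⟩
  rw [show a + u + (b - a - u) = b by ring] at hsecond
  rw [← hfirst, ← hsecond, map_mul, Complex.conj_ofReal, mul_mul_mul_comm, ← Complex.ofReal_mul,
    Complex.re_ofReal_mul] at hneg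
  have hneg' := (pos_iff_neg_of_mul_neg hneg).1 (mul_pos hupos' hupos)
  have hcos := (re_exp_mul_conj_exp_pos_iff (g (a + u, b - a - u) + π * I) (g (a, u))).1 (by
    rw [Complex.exp_add, Complex.exp_pi_mul_I, mul_neg_one, neg_mul, Complex.neg_re]
    exact neg_pos.2 hneg')
  rw [Real.cos_sub_pi, ← Real.cos_add_pi]
  convert hcos using 2
  simp
  ring

end IsMinimalAlmostLoop

-- Going around the triangle of chords, the angle of the secant changes by `π` from the short
-- chords to the long ones at each end; complementary chords are nearly opposite, which forces the
-- two changes to have opposite signs, although the angle of the long chords is nearly constant.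
theorem not_isMinimalAlmostLoop (ψ : ℂ → ℝ) (K : ℝ≥0) (x : ℝ → ℂ) (τ a b : ℝ) :
    ¬ IsMinimalAlmostLoop ψ K x τ a b := by
  intro h
  have hlong := h.four_mul_lt_length
  have hτ := h.pos
  obtain ⟨g, hg, hexp⟩ := h.exists_secantLog
  obtain ⟨n, hshort⟩ := h.exists_int_secantLog_short hg hexp
  obtain ⟨m, hlong'⟩ := h.exists_int_secantLog_long hg hexp
  obtain ⟨j, hcompl⟩ := h.exists_int_secantLog_complementary hg hexp
  have hcompl₁ := abs_lt.1 (hcompl (2 * τ) ⟨le_rfl, by linarith⟩)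
  have hcompl₂ := abs_lt.1 (hcompl (b - a - 2 * τ) ⟨by linarith, le_rfl⟩)
  have hlong₁ := abs_lt.1 (hlong' (a + 2 * τ) ⟨by linarith, le_rfl⟩)
  have hlong₂ := abs_lt.1 (hlong' a ⟨le_rfl, by linarith⟩)
  have hshort₁ := abs_lt.1 (hshort (a, 2 * τ)
    ⟨le_rfl, by positivity, by simp only; linarith, le_rfl⟩)
  have hshort₂ := abs_lt.1 (hshort (b - 2 * τ, 2 * τ)
    ⟨by simp only; linarith, by positivity, by simp, le_rfl⟩)
  rw [show a + (b - a - 2 * τ) = b - 2 * τ by ring,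
    show b - a - (b - a - 2 * τ) = 2 * τ by ring] at hcompl₂
  have hangle : |ψ (x (b - 2 * τ)) - ψ (x a)| ≤ 1 / 10 := by
    have hend := h.abs_angle_sub_le (b - 2 * τ) b
    rw [show b - 2 * τ - b = -(2 * τ) by ring, abs_neg,
      abs_of_pos (by positivity : 0 < 2 * τ)] at hend
    have htri := abs_sub_le (ψ (x (b - 2 * τ))) (ψ (x b)) (ψ (x a))
    linarith [h.mul_le, h.abs_angle_sub_endpoints_le]
  have hangle' := abs_le.1 hangle
  have hpi := Real.pi_gt_three
  have hfirst : |((m - n - j : ℤ) : ℝ)| < 1 := by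
    rw [abs_lt]; push_cast
    constructor <;> nlinarith
  have hsecond : |((n - m - 1 - j : ℤ) : ℝ)| < 1 := by
    rw [abs_lt]; push_cast
    constructor <;> nlinarith
  have hm : m - n - j = 0 := Int.abs_lt_one_iff.1 (by exact_mod_cast hfirst)
  have hn : n - m - 1 - j = 0 := Int.abs_lt_one_iff.1 (by exact_mod_cast hsecond)
  omega

theorem not_isBounded_image_Ici {ψ : ℂ → ℝ} {K : ℝ≥0} (hψ : LipschitzWith K ψ) {x : ℝ → ℂ}
    (hx : ∀ t, HasDerivAt x (Complex.exp (ψ (x t) * I)) t) :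
    ¬ Bornology.IsBounded (x '' Ici 0) := by
  intro hb
  have hτ : (0 : ℝ) < 1 / (40 * (K + 1)) := by positivity
  obtain ⟨a, b, hlength, hclose, hfar⟩ := exists_minimal_dist_le
    (continuous_iff_continuousAt.2 fun t ↦ (hx t).continuousAt) hb (mul_pos two_pos hτ)
    (half_pos hτ)
  refine not_isMinimalAlmostLoop ψ K x _ a b ⟨hψ, hx, hτ, ?_, hlength, ?_, ?_⟩
  · rw [mul_one_div, div_le_div_iff₀ (by positivity) (by positivity)]
    linarith
  · rwa [← dist_eq_norm]
  · simpa only [dist_eq_norm] using hfar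

end NonTrapping

section SignedArea

/-- The oriented area of the parallelogram spanned by `u` and `v`. -/
def signedArea (u v : ℂ) : ℝ := u.re * v.im - u.im * v.re

theorem signedArea_one_left (v : ℂ) : signedArea 1 v = v.im := by simp [signedArea]

theorem signedArea_ofReal_mul_right (r : ℝ) (u v : ℂ) :
    signedArea u (r * v) = r * signedArea u v := by
  rw [signedArea, signedArea, re_ofReal_mul, im_ofReal_mul]
  ring

theorem signedArea_map (A : ℂ →L[ℝ] ℂ) (u v : ℂ) :
    signedArea (A u) (A v) = signedArea (A 1) (A I) * signedArea u v := by
  have hA : ∀ z : ℂ, A z = z.re • A 1 + z.im • A I := fun z ↦ by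
    rw [← map_smul, ← map_smul, ← map_add]
    congr 1
    apply Complex.ext <;> simp
  rw [hA u, hA v]
  simp only [signedArea, real_smul, add_re, mul_re, ofReal_re, ofReal_im, zero_mul, sub_zero,
    add_im, mul_im, add_zero]
  ring

theorem signedArea_exp_left (α : ℝ) (v : ℂ) :
    signedArea (Complex.exp (α * I)) v = (v * Complex.exp (-(α * I))).im := by
  have hconj : Complex.exp (-(α * I)) = conj (Complex.exp (α * I)) := by
    rw [← Complex.exp_conj]
    simp
  rw [hconj]
  simp only [signedArea, mul_im, conj_re, conj_im]
  ring

theorem isInvertible_iff_signedArea_ne_zero {A : ℂ →L[ℝ] ℂ} :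
    A.IsInvertible ↔ signedArea (A 1) (A I) ≠ 0 := by
  constructor
  · rintro ⟨e, rfl⟩ h
    have hsymm := signedArea_map e (e.symm 1) (e.symm I)
    simp only [ContinuousLinearEquiv.coe_coe, ContinuousLinearEquiv.apply_symm_apply] at hsymm h
    simp [h, signedArea_one_left] at hsymm
  · intro h
    have hinj : Function.Injective A.toLinearMap := by
      refine (injective_iff_map_eq_zero _).2 fun v (hv : A v = 0) ↦ ?_
      have him := signedArea_map A 1 v
      have hre := signedArea_map A v I
      rw [hv] at him hre
      simp only [signedArea, zero_re, zero_im, mul_zero, zero_mul, sub_zero, one_re, one_im,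
        one_mul, I_re, I_im, mul_one] at him hre
      exact Complex.ext ((zero_eq_mul.1 hre).resolve_left h) ((zero_eq_mul.1 him).resolve_left h)
    exact ⟨(LinearEquiv.ofInjectiveEndo A.toLinearMap hinj).toContinuousLinearEquiv, rfl⟩

end SignedArea

theorem exists_contDiff_inverse {E F : Type*} [NormedAddCommGroup E] [NormedSpace ℝ E]
    [CompleteSpace E] [NormedAddCommGroup F] [NormedSpace ℝ F] {Φ : E → F} (hΦ : ContDiff ℝ ∞ Φ)
    (hinv : ∀ z, (fderiv ℝ Φ z).IsInvertible) (hbij : Function.Bijective Φ) :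
    ∃ G : F → E, ContDiff ℝ ∞ G ∧ Function.LeftInverse G Φ ∧ Function.RightInverse G Φ := by
  choose e he using hinv
  have hderiv (z : E) : HasFDerivAt Φ (e z : E →L[ℝ] F) z := by
    rw [he]
    exact (hΦ.differentiable (by simp) z).hasFDerivAt
  have hopen : IsOpenMap Φ := isOpenMap_iff_nhds_le.2 fun z ↦
    (hΦ.contDiffAt.hasStrictFDerivAt' (hderiv z) (by simp)).map_nhds_eq_of_equiv.ge
  let Φ' := (Equiv.ofBijective Φ hbij).toHomeomorphOfContinuousOpen hΦ.continuous hopen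
  exact ⟨Φ'.symm, Φ'.contDiff_symm (f₀' := e) hderiv hΦ, Φ'.symm_apply_apply, Φ'.apply_symm_apply⟩

namespace IsSmoothFlow

section

variable {E : Type*} [NormedAddCommGroup E] [NormedSpace ℝ E] {V : E → E} {φ : ℝ → E → E}

theorem continuous_trajectory (hφ : IsSmoothFlow V φ) (z : E) : Continuous fun t ↦ φ t z :=
  continuous_iff_continuousAt.2 fun t ↦ (hφ.hasDerivAt z t).continuousAt

theorem neg_apply (hφ : IsSmoothFlow V φ) (t : ℝ) (z : E) : φ (-t) (φ t z) = z := by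
  rw [← hφ.map_add, neg_add_cancel, hφ.map_zero]

theorem apply_neg (hφ : IsSmoothFlow V φ) (t : ℝ) (z : E) : φ t (φ (-t) z) = z := by
  rw [← hφ.map_add, add_neg_cancel, hφ.map_zero]

theorem contDiff_apply (hφ : IsSmoothFlow V φ) (t : ℝ) : ContDiff ℝ ∞ (φ t) :=
  hφ.contDiff.comp (contDiff_prodMk_right t)

theorem hasFDerivAt_apply (hφ : IsSmoothFlow V φ) (t : ℝ) (z : E) :
    HasFDerivAt (φ t) (fderiv ℝ (φ t) z) z :=
  ((hφ.contDiff_apply t).differentiable (by simp) z).hasFDerivAt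

theorem fderiv_apply_vectorField (hφ : IsSmoothFlow V φ) (t : ℝ) (z : E) :
    fderiv ℝ (φ t) z (V z) = V (φ t z) := by
  have hpush : HasDerivAt (fun s ↦ φ t (φ s z)) (fderiv ℝ (φ t) z (V z)) 0 := by
    have hφt := hφ.hasFDerivAt_apply t (φ 0 z)
    have hφz := hφ.hasDerivAt z 0
    rw [hφ.map_zero] at hφt hφz
    exact HasFDerivAt.comp_hasDerivAt_of_eq 0 hφt hφz (hφ.map_zero z).symm
  have htrajectory : HasDerivAt (fun s ↦ φ t (φ s z)) (V (φ t z)) 0 := by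
    simpa [hφ.map_add, hφ.map_zero] using (hφ.hasDerivAt z (t + 0)).comp_const_add t 0
  exact hpush.unique htrajectory

theorem fderiv_apply_eq_comp_inr (hφ : IsSmoothFlow V φ) (t : ℝ) (z : E) :
    fderiv ℝ (φ t) z = fderiv ℝ (fun p : ℝ × E ↦ φ p.1 p.2) (t, z) ∘L .inr ℝ ℝ E :=
  (((hφ.contDiff.differentiable (by simp) (t, z)).hasFDerivAt).comp z
    (hasFDerivAt_prodMk_right t z)).fderiv

theorem hasFDerivAt_uncurry (hφ : IsSmoothFlow V φ) (t : ℝ) (z : E) :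
    HasFDerivAt (fun p : ℝ × E ↦ φ p.1 p.2)
      (fderiv ℝ (φ t) z ∘L ((ContinuousLinearMap.fst ℝ ℝ E).smulRight (V z) + .snd ℝ ℝ E))
      (t, z) := by
  have hF : HasFDerivAt (fun p : ℝ × E ↦ φ p.1 p.2) _ (t, z) :=
    (hφ.contDiff.differentiable (by simp) (t, z)).hasFDerivAt
  have htime : fderiv ℝ (fun p : ℝ × E ↦ φ p.1 p.2) (t, z) (1, 0) = fderiv ℝ (φ t) z (V z) := by
    rw [hφ.fderiv_apply_vectorField]
    simpa using (hF.comp (f := fun s : ℝ ↦ (s, z)) t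
      (hasFDerivAt_prodMk_left t z)).hasDerivAt.unique (hφ.hasDerivAt z t)
  refine hF.congr_fderiv (ContinuousLinearMap.ext fun p ↦ ?_)
  have hp : p = p.1 • ((1, 0) : ℝ × E) + (0, p.2) := by ext <;> simp
  conv_lhs => rw [hp, _root_.map_add, map_smul, htime]
  simp [hφ.fderiv_apply_eq_comp_inr]

theorem continuous_fderiv_apply (hφ : IsSmoothFlow V φ) (z : E) :
    Continuous fun t ↦ fderiv ℝ (φ t) z := by
  simp_rw [hφ.fderiv_apply_eq_comp_inr]
  have hfderiv := hφ.contDiff.continuous_fderiv (by simp)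
  exact (hfderiv.comp (Continuous.prodMk_left z)).clm_comp continuous_const

theorem isInvertible_fderiv (hφ : IsSmoothFlow V φ) (t : ℝ) (z : E) :
    (fderiv ℝ (φ t) z).IsInvertible := by
  have hleft : fderiv ℝ (φ (-t)) (φ t z) ∘L fderiv ℝ (φ t) z = .id ℝ E := by
    have hid : φ (-t) ∘ φ t = id := funext (hφ.neg_apply t)
    have hcomp := (hφ.hasFDerivAt_apply (-t) (φ t z)).comp z (hφ.hasFDerivAt_apply t z)
    exact hcomp.unique (hid ▸ hasFDerivAt_id z)
  have hright : fderiv ℝ (φ t) z ∘L fderiv ℝ (φ (-t)) (φ t z) = .id ℝ E := by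
    have hid : φ t ∘ φ (-t) = id := funext (hφ.apply_neg t)
    have hφt := hφ.hasFDerivAt_apply t (φ (-t) (φ t z))
    have hcomp := hφt.comp (φ t z) (hφ.hasFDerivAt_apply (-t) (φ t z))
    rw [hφ.neg_apply] at hcomp
    exact hcomp.unique (hid ▸ hasFDerivAt_id _)
  exact .of_inverse hright hleft

end

theorem signedArea_fderiv_pos {V : ℂ → ℂ} {φ : ℝ → ℂ → ℂ} (hφ : IsSmoothFlow V φ) (t : ℝ)
    (z : ℂ) : 0 < signedArea (fderiv ℝ (φ t) z 1) (fderiv ℝ (φ t) z I) := by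
  have hcont : Continuous fun s ↦ signedArea (fderiv ℝ (φ s) z 1) (fderiv ℝ (φ s) z I) := by
    have hfderiv (v : ℂ) := (hφ.continuous_fderiv_apply z).clm_apply (continuous_const (y := v))
    exact ((continuous_re.comp (hfderiv 1)).mul (continuous_im.comp (hfderiv I))).sub
      ((continuous_im.comp (hfderiv 1)).mul (continuous_re.comp (hfderiv I)))
  have hzero : signedArea (fderiv ℝ (φ 0) z 1) (fderiv ℝ (φ 0) z I) = 1 := by
    rw [show φ 0 = id from funext hφ.map_zero]
    simp [signedArea]
  by_contra! hneg
  obtain ⟨s, hs⟩ := mem_range_of_exists_le_of_exists_ge hcont ⟨t, hneg⟩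
    ⟨0, hzero ▸ zero_le_one⟩
  exact isInvertible_iff_signedArea_ne_zero.1 (hφ.isInvertible_fderiv s z) hs

end IsSmoothFlow

section DirectionField

theorem exists_norm_le_of_periodic {F : Type*} [SeminormedAddCommGroup F] {f : ℂ → F}
    (hf : Continuous f) (hper : f.Periodic (2 * π * I)) (R : ℝ) :
    ∃ C, ∀ z : ℂ, |z.re| ≤ R → ‖f z‖ ≤ C := by
  obtain ⟨C, hC⟩ := (isCompact_Icc (a := -R) (b := R)).reProdIm
    (isCompact_Icc (a := 0) (b := 2 * π)) |>.exists_bound_of_continuousOn hf.continuousOn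
  refine ⟨C, fun z hz ↦ ?_⟩
  obtain ⟨k, hk, -⟩ := existsUnique_add_zsmul_mem_Ico Real.two_pi_pos z.im 0
  have hshift : f (z + k * (2 * π * I)) = f z := hper.int_mul k z
  rw [← hshift]
  refine hC _ ⟨by simpa using abs_le.1 hz, ?_⟩
  simpa using Ico_subset_Icc_self hk

/-- The angle `ψ` of a direction field `exp (ψ * I)` on the cylinder `ℂ / 2πiℤ` that is horizontal
on the real line and where `|re z| ≥ R`. -/
structure IsDirectionField (ψ : ℂ → ℝ) (R : ℝ) : Prop where
  contDiff : ContDiff ℝ ∞ ψ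
  periodic : ψ.Periodic (2 * π * I)
  pos : 0 < R
  eq_zero_of_le_abs_re : ∀ z : ℂ, R ≤ |z.re| → ψ z = 0
  eq_zero_of_im_eq_zero : ∀ z : ℂ, z.im = 0 → ψ z = 0

namespace IsDirectionField

variable {ψ : ℂ → ℝ} {R : ℝ} {φ : ℝ → ℂ → ℂ}

theorem eq_zero_of_im_eq (h : IsDirectionField ψ R) {k : ℤ} {z : ℂ} (hz : z.im = 2 * π * k) :
    ψ z = 0 := by
  have hshift : ψ (z - k * (2 * π * I)) = ψ z := h.periodic.sub_int_mul_eq k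
  rw [← hshift]
  refine h.eq_zero_of_im_eq_zero _ ?_
  simp [hz]
  ring

theorem exists_norm_fderiv_le (h : IsDirectionField ψ R) : ∃ C, ∀ z, ‖fderiv ℝ ψ z‖ ≤ C := by
  have hper : (fderiv ℝ ψ).Periodic (2 * π * I) := fun z ↦ by
    rw [← fderiv_comp_add_right]
    exact congrArg (fderiv ℝ · z) (funext h.periodic)
  obtain ⟨C, hC⟩ := exists_norm_le_of_periodic (h.contDiff.continuous_fderiv (by simp)) hper R
  refine ⟨max C 0, fun z ↦ ?_⟩
  rcases le_or_gt |z.re| R with hz | hz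
  · exact (hC z hz).trans (le_max_left _ _)
  · have hfar : ψ =ᶠ[𝓝 z] fun _ ↦ 0 := by
      filter_upwards [(continuous_re.abs.tendsto z).eventually_const_lt hz] with y hy
      exact h.eq_zero_of_le_abs_re y hy.le
    simp [hfar.fderiv_eq]

theorem exists_lipschitzWith (h : IsDirectionField ψ R) : ∃ K, LipschitzWith K ψ := by
  obtain ⟨C, hC⟩ := h.exists_norm_fderiv_le
  exact ⟨⟨C, (norm_nonneg _).trans (hC 0)⟩,
    lipschitzWith_of_nnnorm_fderiv_le (h.contDiff.differentiable (by simp)) hC⟩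

theorem exists_lipschitzWith_exp (h : IsDirectionField ψ R) :
    ∃ K, LipschitzWith K fun z ↦ Complex.exp (ψ z * I) := by
  obtain ⟨K, hK⟩ := h.exists_lipschitzWith
  have hexp : LipschitzWith 1 fun α : ℝ ↦ Complex.exp (α * I) := by
    refine lipschitzWith_of_nnnorm_deriv_le (by fun_prop) fun α ↦ ?_
    have hderiv : HasDerivAt (fun α : ℝ ↦ Complex.exp (α * I)) (Complex.exp (α * I) * (1 * I)) α :=
      (ofRealCLM.hasDerivAt.mul_const I).cexp
    rw [hderiv.deriv, ← NNReal.coe_le_coe]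
    simp
  exact ⟨1 * K, hexp.comp hK⟩

theorem exists_flow (h : IsDirectionField ψ R) :
    ∃ φ, IsSmoothFlow (fun z ↦ Complex.exp (ψ z * I)) φ := by
  obtain ⟨K, hK⟩ := h.exists_lipschitzWith_exp
  have hsmooth : ContDiff ℝ ∞ fun z ↦ Complex.exp (ψ z * I) :=
    ((ofRealCLM.contDiff.comp h.contDiff).mul contDiff_const).cexp
  exact exists_isSmoothFlow hsmooth (C := 1) (fun z ↦ by simp) hK

theorem flow_add_two_pi_I (h : IsDirectionField ψ R)
    (hφ : IsSmoothFlow (fun z ↦ Complex.exp (ψ z * I)) φ) (t : ℝ) (z : ℂ) :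
    φ t (z + 2 * π * I) = φ t z + 2 * π * I := by
  obtain ⟨K, hK⟩ := h.exists_lipschitzWith_exp
  have hshift (s : ℝ) : HasDerivAt (fun s ↦ φ s z + 2 * π * I)
      (Complex.exp (ψ (φ s z + 2 * π * I) * I)) s := by
    rw [h.periodic]
    exact (hφ.hasDerivAt z s).add_const _
  exact congrFun (eq_of_hasDerivAt hK (hφ.hasDerivAt _) hshift (t₀ := 0) (by simp [hφ.map_zero])) t

theorem flow_eq_add_of_forall (h : IsDirectionField ψ R)
    (hφ : IsSmoothFlow (fun z ↦ Complex.exp (ψ z * I)) φ) {t : ℝ} {z : ℂ}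
    (hz : ∀ s ∈ uIcc 0 t, ψ (z + s) = 0) : φ t z = z + t := by
  obtain ⟨K, hK⟩ := h.exists_lipschitzWith_exp
  have forward {t : ℝ} (ht : 0 ≤ t) {z : ℂ} (hz : ∀ s ∈ Icc 0 t, ψ (z + s) = 0) :
      φ t z = z + t := by
    have hline (s : ℝ) : HasDerivAt (fun s : ℝ ↦ z + s) 1 s :=
      (ofRealCLM.hasDerivAt (x := s)).const_add z
    refine ODE_solution_unique_of_mem_Icc_right (v := fun _ z ↦ Complex.exp (ψ z * I))
      (s := fun _ ↦ univ) (f := fun t ↦ φ t z) (g := fun t ↦ z + t) (a := 0) (b := t)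
      (fun _ _ ↦ hK.lipschitzOnWith) (hφ.continuous_trajectory z).continuousOn
      (fun s _ ↦ (hφ.hasDerivAt z s).hasDerivWithinAt) (fun _ _ ↦ trivial)
      (fun s _ ↦ (hline s).continuousAt.continuousWithinAt) (fun s hs ↦ ?_) (fun _ _ ↦ trivial)
      (by simp [hφ.map_zero]) (right_mem_Icc.2 ht)
    rw [hz s ⟨hs.1, hs.2.le⟩]
    simpa using (hline s).hasDerivWithinAt
  rcases le_total 0 t with ht | ht
  · exact forward ht (uIcc_of_le ht ▸ hz)
  · have hback : φ (-t) (z + t) = z + t + (-t : ℝ) := forward (by linarith) fun s hs ↦ by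
      have hst := hz (t + s) (uIcc_of_ge ht ▸ ⟨by linarith [hs.1], by linarith [hs.2]⟩)
      rwa [ofReal_add, ← add_assoc] at hst
    rw [ofReal_neg, add_neg_cancel_right] at hback
    rw [← hφ.apply_neg t (z + t), hback]

theorem flow_eq_add_of_im_eq (h : IsDirectionField ψ R)
    (hφ : IsSmoothFlow (fun z ↦ Complex.exp (ψ z * I)) φ) {k : ℤ} {z : ℂ}
    (hz : z.im = 2 * π * k) (t : ℝ) : φ t z = z + t :=
  h.flow_eq_add_of_forall hφ fun s _ ↦ h.eq_zero_of_im_eq (k := k) (by simpa using hz)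

theorem flow_eq_add_of_le_re (h : IsDirectionField ψ R)
    (hφ : IsSmoothFlow (fun z ↦ Complex.exp (ψ z * I)) φ) {z : ℂ} (hz : R ≤ z.re) {t : ℝ}
    (ht : 0 ≤ t) : φ t z = z + t :=
  h.flow_eq_add_of_forall hφ fun s hs ↦ h.eq_zero_of_le_abs_re _ <| by
    rw [uIcc_of_le ht] at hs
    simpa using (by linarith [hs.1] : R ≤ z.re + s).trans (le_abs_self _)

theorem flow_eq_add_of_re_le (h : IsDirectionField ψ R)
    (hφ : IsSmoothFlow (fun z ↦ Complex.exp (ψ z * I)) φ) {z : ℂ} (hz : z.re ≤ -R) {t : ℝ}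
    (ht : t ≤ 0) : φ t z = z + t :=
  h.flow_eq_add_of_forall hφ fun s hs ↦ h.eq_zero_of_le_abs_re _ <| by
    rw [uIcc_of_ge ht] at hs
    simpa using (by linarith [hs.2] : R ≤ -(z.re + s)).trans (neg_le_abs _)

theorem flow_im_ne (h : IsDirectionField ψ R)
    (hφ : IsSmoothFlow (fun z ↦ Complex.exp (ψ z * I)) φ) {k : ℤ} {z : ℂ}
    (hz : z.im ≠ 2 * π * k) (t : ℝ) : (φ t z).im ≠ 2 * π * k := fun him ↦ hz <| by
  have hback := h.flow_eq_add_of_im_eq hφ him (-t)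
  rw [hφ.neg_apply] at hback
  rw [hback, ← him]
  simp

theorem flow_im_lt (h : IsDirectionField ψ R)
    (hφ : IsSmoothFlow (fun z ↦ Complex.exp (ψ z * I)) φ) {k : ℤ} {z : ℂ}
    (hz : z.im < 2 * π * k) (t : ℝ) : (φ t z).im < 2 * π * k := by
  by_contra! hge
  obtain ⟨s, hs⟩ := mem_range_of_exists_le_of_exists_ge
    (continuous_im.comp (hφ.continuous_trajectory z))
    ⟨0, by simpa [hφ.map_zero] using hz.le⟩ ⟨t, hge⟩
  exact h.flow_im_ne hφ hz.ne s hs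

theorem lt_flow_im (h : IsDirectionField ψ R)
    (hφ : IsSmoothFlow (fun z ↦ Complex.exp (ψ z * I)) φ) {k : ℤ} {z : ℂ}
    (hz : 2 * π * k < z.im) (t : ℝ) : 2 * π * k < (φ t z).im := by
  by_contra! hle
  obtain ⟨s, hs⟩ := mem_range_of_exists_le_of_exists_ge
    (continuous_im.comp (hφ.continuous_trajectory z)) ⟨t, hle⟩
    ⟨0, by simpa [hφ.map_zero] using hz.le⟩
  exact h.flow_im_ne hφ hz.ne' s hs

theorem exists_abs_flow_im_le (h : IsDirectionField ψ R)
    (hφ : IsSmoothFlow (fun z ↦ Complex.exp (ψ z * I)) φ) (z : ℂ) :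
    ∃ M, ∀ t, |(φ t z).im| ≤ M := by
  obtain ⟨k, hk⟩ := exists_int_gt (z.im / (2 * π))
  obtain ⟨l, hl⟩ := exists_int_lt (z.im / (2 * π))
  rw [div_lt_iff₀ Real.two_pi_pos, mul_comm] at hk
  rw [lt_div_iff₀ Real.two_pi_pos, mul_comm] at hl
  exact ⟨_, fun t ↦ abs_le_max_abs_abs (h.lt_flow_im hφ hl t).le (h.flow_im_lt hφ hk t).le⟩

theorem exists_flow_re_le (h : IsDirectionField ψ R)
    (hφ : IsSmoothFlow (fun z ↦ Complex.exp (ψ z * I)) φ) (z : ℂ) :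
    ∃ t, 0 ≤ t ∧ (φ (-t) z).re ≤ -R := by
  by_contra! hgt
  have hre {t : ℝ} (ht : 0 ≤ t) : (φ (-t) z).re ≤ max R z.re := by
    by_contra! hlt
    have hforward := h.flow_eq_add_of_le_re hφ (max_lt_iff.1 hlt).1.le ht
    rw [hφ.apply_neg] at hforward
    have hzre := congrArg Complex.re hforward
    simp only [add_re, ofReal_re] at hzre
    linarith [(max_lt_iff.1 hlt).2]
  obtain ⟨M, hM⟩ := h.exists_abs_flow_im_le hφ z
  obtain ⟨K, hK⟩ := h.exists_lipschitzWith
  have hreverse (t : ℝ) : HasDerivAt (fun t ↦ φ (-t) z)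
      (Complex.exp ((ψ (φ (-t) z) + π : ℝ) * I)) t := by
    convert! (hφ.hasDerivAt z (-t)).scomp t (hasDerivAt_neg t) using 1
    rw [ofReal_add, add_mul, Complex.exp_add, Complex.exp_pi_mul_I]
    simp
  refine not_isBounded_image_Ici (ψ := fun z ↦ ψ z + π)
    (hK.add (LipschitzWith.const π)) hreverse ?_
  refine isBounded_iff_forall_norm_le.2 ⟨max R z.re + R + M, ?_⟩
  rintro _ ⟨t, ht, rfl⟩
  refine (Complex.norm_le_abs_re_add_abs_im _).trans (add_le_add (abs_le.2 ⟨?_, ?_⟩) (hM _))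
  · linarith [hgt t ht, h.pos, le_max_left R z.re]
  · linarith [hre ht, h.pos]

end IsDirectionField

end DirectionField

section CylinderDiffeo

/-- `Φ` is an orientation-preserving diffeomorphism of the cylinder `ℂ / 2πiℤ` with inverse `G`
(both lifted to `ℂ`) that translates the real line and preserves both half-planes. -/
structure IsCylinderDiffeo (Φ G : ℂ → ℂ) : Prop where
  contDiff : ContDiff ℝ ∞ Φ
  contDiff_inverse : ContDiff ℝ ∞ G
  leftInverse : Function.LeftInverse G Φ
  rightInverse : Function.RightInverse G Φ
  add_two_pi_I : ∀ z, Φ (z + 2 * π * I) = Φ z + 2 * π * I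
  exists_translation : ∃ x : ℝ, ∀ z : ℂ, z.im = 0 → Φ z = z + x
  im_pos : ∀ z, 0 < z.im → 0 < (Φ z).im
  im_neg : ∀ z, z.im < 0 → (Φ z).im < 0
  signedArea_pos : ∀ z, 0 < signedArea (fderiv ℝ Φ z 1) (fderiv ℝ Φ z I)

/-- Flows the line `re z = -R` for time `re ζ + R`, which carries the horizontal direction field
to the one generating the flow `φ`. -/
noncomputable def straightening (φ : ℝ → ℂ → ℂ) (R : ℝ) (ζ : ℂ) : ℂ :=
  φ (ζ.re + R) (-R + ζ.im * I)

namespace IsDirectionField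

variable {ψ : ℂ → ℝ} {R : ℝ} {φ : ℝ → ℂ → ℂ}

theorem eq_zero_left (h : IsDirectionField ψ R) (y : ℝ) : ψ (-R + y * I) = 0 :=
  h.eq_zero_of_le_abs_re _ (by simpa using le_abs_self R)

theorem hasFDerivAt_straightening (h : IsDirectionField ψ R)
    (hφ : IsSmoothFlow (fun z ↦ Complex.exp (ψ z * I)) φ) (ζ : ℂ) :
    HasFDerivAt (straightening φ R) (fderiv ℝ (φ (ζ.re + R)) (-R + ζ.im * I)) ζ := by
  have him : HasFDerivAt (fun ζ : ℂ ↦ -R + ζ.im * I) ((ofRealCLM ∘L imCLM).smulRight I) ζ :=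
    ((ofRealCLM ∘L imCLM).hasFDerivAt.smul_const I).const_add (-(R : ℂ))
  have hcomp := HasFDerivAt.comp ζ (hφ.hasFDerivAt_uncurry (ζ.re + R) (-R + ζ.im * I))
    ((reCLM.hasFDerivAt.add_const R).prodMk him)
  refine hcomp.congr_fderiv (ContinuousLinearMap.ext fun u ↦ ?_)
  simp [h.eq_zero_left, ← _root_.map_add, re_add_im]

theorem injective_straightening (h : IsDirectionField ψ R)
    (hφ : IsSmoothFlow (fun z ↦ Complex.exp (ψ z * I)) φ) :
    Function.Injective (straightening φ R) := by
  have eq_of_re_le {ζ η : ℂ} (hle : ζ.re ≤ η.re)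
      (heq : straightening φ R ζ = straightening φ R η) : ζ = η := by
    have hback : φ (-(η.re + R)) (straightening φ R ζ) = -R + η.im * I := by
      rw [heq]
      exact hφ.neg_apply _ _
    rw [straightening, ← hφ.map_add, h.flow_eq_add_of_re_le hφ (by simp) (by linarith)] at hback
    have hre := congrArg Complex.re hback
    have him := congrArg Complex.im hback
    simp only [add_re, neg_re, ofReal_re, mul_re, I_re, mul_zero, ofReal_im, I_im, mul_one,
      sub_self, add_zero, neg_add_rev] at hre
    simp only [add_im, neg_im, ofReal_im, mul_im, ofReal_re, I_re, mul_zero, I_im, mul_one,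
      neg_zero, zero_add, add_zero] at him
    exact Complex.ext (by linarith) him
  intro ζ η heq
  rcases le_total ζ.re η.re with hle | hle
  · exact eq_of_re_le hle heq
  · exact (eq_of_re_le hle heq.symm).symm

theorem surjective_straightening (h : IsDirectionField ψ R)
    (hφ : IsSmoothFlow (fun z ↦ Complex.exp (ψ z * I)) φ) :
    Function.Surjective (straightening φ R) := by
  intro z
  obtain ⟨t, -, ht⟩ := h.exists_flow_re_le hφ z
  set p := φ (-t) z
  have hstart : φ (p.re + R) (-R + p.im * I) = p := by
    rw [h.flow_eq_add_of_re_le hφ (by simp) (by linarith)]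
    apply Complex.ext <;> simp
  refine ⟨(t + p.re : ℝ) + p.im * I, ?_⟩
  calc straightening φ R ((t + p.re : ℝ) + p.im * I)
      = φ (t + (p.re + R)) (-R + p.im * I) := by simp [straightening, add_assoc]
    _ = φ t p := by rw [hφ.map_add, hstart]
    _ = z := hφ.apply_neg t z

theorem isCylinderDiffeo_straightening (h : IsDirectionField ψ R)
    (hφ : IsSmoothFlow (fun z ↦ Complex.exp (ψ z * I)) φ) :
    ∃ G, IsCylinderDiffeo (straightening φ R) G := by
  have hsmooth : ContDiff ℝ ∞ (straightening φ R) :=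
    hφ.contDiff.comp ((reCLM.contDiff.add contDiff_const).prodMk
      (contDiff_const.add ((ofRealCLM.contDiff.comp imCLM.contDiff).mul contDiff_const)))
  have harea (ζ : ℂ) : 0 < signedArea (fderiv ℝ (straightening φ R) ζ 1)
      (fderiv ℝ (straightening φ R) ζ I) := by
    rw [(h.hasFDerivAt_straightening hφ ζ).fderiv]
    exact hφ.signedArea_fderiv_pos _ _
  obtain ⟨G, hG, hleft, hright⟩ := exists_contDiff_inverse hsmooth
    (fun ζ ↦ isInvertible_iff_signedArea_ne_zero.2 (harea ζ).ne')
    ⟨h.injective_straightening hφ, h.surjective_straightening hφ⟩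
  refine ⟨G, hsmooth, hG, hleft, hright, fun ζ ↦ ?_, ⟨0, fun ζ hζ ↦ ?_⟩, fun ζ hζ ↦ ?_,
    fun ζ hζ ↦ ?_, harea⟩
  · rw [straightening, straightening, ← h.flow_add_two_pi_I hφ]
    simp [add_mul, add_assoc]
  · rw [straightening, h.flow_eq_add_of_im_eq hφ (k := 0) (by simpa using hζ)]
    apply Complex.ext <;> simp
  · simpa [straightening] using
      h.lt_flow_im hφ (k := 0) (z := -R + ζ.im * I) (by simpa using hζ) (ζ.re + R)
  · simpa [straightening] using
      h.flow_im_lt hφ (k := 0) (z := -R + ζ.im * I) (by simpa using hζ) (ζ.re + R)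

theorem exists_isCylinderDiffeo (h : IsDirectionField ψ R) :
    ∃ Φ G, IsCylinderDiffeo Φ G ∧ ∀ ζ, fderiv ℝ Φ ζ 1 = Complex.exp (ψ (Φ ζ) * I) := by
  obtain ⟨φ, hφ⟩ := h.exists_flow
  obtain ⟨G, hG⟩ := h.isCylinderDiffeo_straightening hφ
  refine ⟨straightening φ R, G, hG, fun ζ ↦ ?_⟩
  rw [(h.hasFDerivAt_straightening hφ ζ).fderiv, straightening, ← hφ.fderiv_apply_vectorField,
    h.eq_zero_left]
  simp

end IsDirectionField

end CylinderDiffeo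

section AdmissibleCurve

theorem exists_int_add_mem_Ico (s a : ℝ) : ∃ k : ℤ, a + 2 * π * k ∈ Ico s (s + 2 * π) := by
  obtain ⟨k, hk, -⟩ := existsUnique_add_zsmul_mem_Ico Real.two_pi_pos a s
  exact ⟨k, by simpa [mul_comm] using hk⟩

theorem exp_ofReal_mul_I_eq_one_iff {a : ℝ} :
    Complex.exp (a * I) = 1 ↔ ∃ k : ℤ, a = 2 * π * k := by
  rw [Complex.exp_eq_one_iff]
  refine exists_congr fun k ↦ ?_
  rw [← mul_assoc, mul_left_inj' I_ne_zero]
  norm_cast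
  rw [mul_comm]

theorem apply_eq_of_exp_apply_mul_I_eq {X : Type*} [TopologicalSpace X] {S : Set X}
    (hS : IsPreconnected S) {g : X → ℝ} (hg : ContinuousOn g S) {w : ℂ}
    (hw : ∀ x ∈ S, Complex.exp (g x * I) = w) {x y : X} (hx : x ∈ S) (hy : y ∈ S) :
    g x = g y := by
  have hmem : MapsTo (fun z ↦ g z - g x) S (AddSubgroup.zmultiples (2 * π)) := fun z hz ↦ by
    have hone : Complex.exp ((g z - g x : ℝ) * I) = 1 := by
      rw [ofReal_sub, sub_mul, Complex.exp_sub, hw z hz, hw x hx, div_self]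
      rw [← hw x hx]
      exact Complex.exp_ne_zero _
    obtain ⟨k, hk⟩ := exp_ofReal_mul_I_eq_one_iff.1 hone
    exact AddSubgroup.mem_zmultiples_iff.2 ⟨k, by simp [hk, mul_comm]⟩
  have hdiscrete : IsDiscrete (AddSubgroup.zmultiples (2 * π) : Set ℝ) :=
    isDiscrete_iff_discreteTopology.2
      (inferInstance : DiscreteTopology (AddSubgroup.zmultiples (2 * π)))
  exact sub_left_inj.1 (hS.constant_of_mapsTo hdiscrete (hg.sub continuousOn_const) hmem hx hy)

theorem mem_Ioo_zero_pi_of_abs_lt_pi {x : ℝ} (hx : |x| < π) (hsin : 0 < Real.sin x) :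
    x ∈ Ioo 0 π := by
  refine ⟨?_, (abs_lt.1 hx).2⟩
  by_contra! hle
  exact hsin.not_ge (Real.sin_nonpos_of_nonpos_of_neg_pi_le hle (abs_lt.1 hx).1.le)

/-- A lift `c` to `ℂ` of an embedded closed curve in the cylinder `ℂ / 2πiℤ` winding once around
it and crossing the real line only at the parameter `s₀`, upwards. -/
structure IsAdmissibleCurve (c : ℝ → ℂ) (s₀ : ℝ) : Prop where
  contDiff : ContDiff ℝ ∞ c
  add_two_pi : ∀ θ, c (θ + 2 * π) = c θ + 2 * π * I
  deriv_ne_zero : ∀ θ, deriv c θ ≠ 0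
  injective : Function.Injective c
  im_base : (c s₀).im = 0
  im_deriv_base_pos : 0 < (deriv c s₀).im
  im_mem_Ioo : ∀ θ ∈ Ioo s₀ (s₀ + 2 * π), (c θ).im ∈ Ioo 0 (2 * π)

/-- A continuous argument `Θ (s, u)` of the secant slope of `c` from `s` to `s + u`, normalized so
that the full-period secants, which are vertical, have angle `π / 2`. -/
structure IsSecantAngle (c : ℝ → ℂ) (Θ : ℝ × ℝ → ℝ) : Prop where
  continuous : Continuous Θ
  secantSlope_eq : ∀ p,
    secantSlope (deriv c) p = ‖secantSlope (deriv c) p‖ * Complex.exp (Θ p * I)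
  apply_two_pi : ∀ s, Θ (s, 2 * π) = π / 2

variable {c : ℝ → ℂ} {s₀ : ℝ} {Θ : ℝ × ℝ → ℝ}

theorem apply_add_two_pi_mul_int (hc : ∀ θ, c (θ + 2 * π) = c θ + 2 * π * I) (k : ℤ) (θ : ℝ) :
    c (θ + 2 * π * k) = c θ + 2 * π * k * I := by
  have hper : (fun θ : ℝ ↦ c θ - θ * I).Periodic (2 * π) := fun θ ↦ by
    simp only [hc, ofReal_add, ofReal_mul, ofReal_ofNat]
    ring
  have hshift := hper.int_mul k θ
  rw [mul_comm (k : ℝ)] at hshift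
  push_cast at hshift
  linear_combination hshift

namespace IsAdmissibleCurve

theorem hasDerivAt (h : IsAdmissibleCurve c s₀) (s : ℝ) : HasDerivAt c (deriv c s) s :=
  (h.contDiff.differentiable (by simp) s).hasDerivAt

theorem continuous_deriv (h : IsAdmissibleCurve c s₀) : Continuous (deriv c) :=
  h.contDiff.continuous_deriv (by simp)

theorem add_two_pi_mul_int (h : IsAdmissibleCurve c s₀) (k : ℤ) (θ : ℝ) :
    c (θ + 2 * π * k) = c θ + 2 * π * k * I :=
  apply_add_two_pi_mul_int h.add_two_pi k θ

theorem periodic_deriv (h : IsAdmissibleCurve c s₀) : (deriv c).Periodic (2 * π) := fun s ↦ by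
  rw [← deriv_comp_add_const]
  simp_rw [h.add_two_pi]
  simp

theorem mul_secantSlope (h : IsAdmissibleCurve c s₀) (s u : ℝ) :
    u * secantSlope (deriv c) (s, u) = c (s + u) - c s :=
  AnnulusFraming.mul_secantSlope h.hasDerivAt h.continuous_deriv s u

theorem secantSlope_ne_zero (h : IsAdmissibleCurve c s₀) (p : ℝ × ℝ) :
    secantSlope (deriv c) p ≠ 0 := by
  obtain ⟨s, u⟩ := p
  rcases eq_or_ne u 0 with rfl | hu
  · rw [secantSlope_zero]
    exact h.deriv_ne_zero s
  · intro h0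
    have hchord := h.mul_secantSlope s u
    rw [h0, mul_zero] at hchord
    exact hu (add_eq_left.1 (h.injective (sub_eq_zero.1 hchord.symm)))

theorem secantSlope_two_pi (h : IsAdmissibleCurve c s₀) (s : ℝ) :
    secantSlope (deriv c) (s, 2 * π) = I := by
  have hchord := h.mul_secantSlope s (2 * π)
  rw [h.add_two_pi, add_sub_cancel_left] at hchord
  push_cast at hchord
  exact mul_left_cancel₀ (by simp [Real.pi_ne_zero]) hchord

theorem exists_isSecantAngle (h : IsAdmissibleCurve c s₀) : ∃ Θ, IsSecantAngle c Θ := by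
  obtain ⟨g, hg, hexp⟩ :=
    exists_continuous_exp_eq (continuous_secantSlope h.continuous_deriv) h.secantSlope_ne_zero
  have hpolar (p : ℝ × ℝ) : secantSlope (deriv c) p =
      ‖secantSlope (deriv c) p‖ * Complex.exp ((g p).im * I) := by
    rw [← hexp p, Complex.norm_exp, ofReal_exp, ← Complex.exp_add, re_add_im]
  have hlast (s : ℝ) : Complex.exp ((g (s, 2 * π)).im * I) = I := by
    simpa [h.secantSlope_two_pi] using (hpolar (s, 2 * π)).symm
  have hconst (s : ℝ) : (g (s, 2 * π)).im = (g (0, 2 * π)).im :=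
    apply_eq_of_exp_apply_mul_I_eq isPreconnected_univ (g := fun s ↦ (g (s, 2 * π)).im)
      (by fun_prop) (fun s _ ↦ hlast s) trivial trivial
  refine ⟨fun p ↦ (g p).im - (g (0, 2 * π)).im + π / 2, by fun_prop, fun p ↦ ?_, fun s ↦ ?_⟩
  · rw [ofReal_add, ofReal_sub, add_mul, sub_mul, Complex.exp_add, Complex.exp_sub, hlast]
    push_cast
    rw [Complex.exp_pi_div_two_mul_I, div_mul_cancel₀ _ I_ne_zero]
    exact hpolar p
  · rw [hconst, sub_self, zero_add]

theorem eq_of_im_eq (h : IsAdmissibleCurve c s₀) {a : ℝ} {n : ℤ} (ha : (c a).im = 2 * π * n) :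
    a = s₀ + 2 * π * n := by
  obtain ⟨k, hk⟩ := exists_int_add_mem_Ico s₀ a
  have him : (c (a + 2 * π * k)).im = 2 * π * (n + k : ℤ) := by
    rw [h.add_two_pi_mul_int]
    simp [ha]
    ring
  suffices hnk : n + k = 0 ∧ s₀ = a + 2 * π * k by
    have hn : (n : ℝ) = -k := by exact_mod_cast eq_neg_of_add_eq_zero_left hnk.1
    rw [hnk.2, hn]
    ring
  have htwo_pi := Real.two_pi_pos
  rcases hk.1.eq_or_lt with heq | hlt
  · rw [← heq, h.im_base, zero_eq_mul] at him
    exact ⟨by exact_mod_cast him.resolve_left htwo_pi.ne', heq⟩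
  · have hmem := h.im_mem_Ioo _ ⟨hlt, hk.2⟩
    rw [him] at hmem
    have hpos : 0 < n + k := by exact_mod_cast pos_of_mul_pos_right hmem.1 htwo_pi.le
    have hlt_one : n + k < 1 := by exact_mod_cast (mul_lt_iff_lt_one_right htwo_pi).1 hmem.2
    omega

theorem exists_abs_re_le (h : IsAdmissibleCurve c s₀) : ∃ R, ∀ θ, |(c θ).re| ≤ R := by
  have hper : (fun θ ↦ (c θ).re).Periodic (2 * π) := fun θ ↦ by simp [h.add_two_pi]
  obtain ⟨R, hR⟩ := isBounded_iff_forall_norm_le.1 (hper.isBounded_of_continuous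
    Real.two_pi_pos.ne' (continuous_re.comp h.contDiff.continuous))
  exact ⟨R, fun θ ↦ hR _ (mem_range_self θ)⟩

end IsAdmissibleCurve

namespace IsSecantAngle

theorem deriv_eq (hΘ : IsSecantAngle c Θ) (s : ℝ) :
    deriv c s = ‖deriv c s‖ * Complex.exp (Θ (s, 0) * I) := by
  simpa only [secantSlope_zero] using hΘ.secantSlope_eq (s, 0)

theorem re_secantSlope (hΘ : IsSecantAngle c Θ) (p : ℝ × ℝ) :
    (secantSlope (deriv c) p).re = ‖secantSlope (deriv c) p‖ * Real.cos (Θ p) := by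
  conv_lhs => rw [hΘ.secantSlope_eq, re_ofReal_mul, exp_ofReal_mul_I_re]

theorem im_secantSlope (hΘ : IsSecantAngle c Θ) (p : ℝ × ℝ) :
    (secantSlope (deriv c) p).im = ‖secantSlope (deriv c) p‖ * Real.sin (Θ p) := by
  conv_lhs => rw [hΘ.secantSlope_eq, im_ofReal_mul, exp_ofReal_mul_I_im]

theorem add_two_pi (hΘ : IsSecantAngle c Θ) (h : IsAdmissibleCurve c s₀) (s u : ℝ) :
    Θ (s + 2 * π, u) = Θ (s, u) := by
  have hslope (p : ℝ × ℝ) : secantSlope (deriv c) (p.1 + 2 * π, p.2) = secantSlope (deriv c) p := by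
    refine intervalIntegral.integral_congr fun r _ ↦ ?_
    simp only [← h.periodic_deriv (p.1 + r * p.2)]
    congr 1
    ring
  have hexp (p : ℝ × ℝ) : Complex.exp ((Θ (p.1 + 2 * π, p.2) - Θ p : ℝ) * I) = 1 := by
    have hnorm : (‖secantSlope (deriv c) p‖ : ℂ) ≠ 0 := by simpa using h.secantSlope_ne_zero p
    have hshift := hΘ.secantSlope_eq (p.1 + 2 * π, p.2)
    rw [hslope] at hshift
    rw [ofReal_sub, sub_mul, Complex.exp_sub,
      mul_left_cancel₀ hnorm (hshift.symm.trans (hΘ.secantSlope_eq p)),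
      div_self (Complex.exp_ne_zero _)]
  have hcont := hΘ.continuous
  have hconst := apply_eq_of_exp_apply_mul_I_eq isPreconnected_univ
    (g := fun p : ℝ × ℝ ↦ Θ (p.1 + 2 * π, p.2) - Θ p) (by fun_prop) (fun p _ ↦ hexp p)
    (mem_univ (s, u)) (mem_univ (0, 2 * π))
  simpa [hΘ.apply_two_pi, sub_eq_zero] using hconst

theorem add_two_pi_mul_int (hΘ : IsSecantAngle c Θ) (h : IsAdmissibleCurve c s₀) (k : ℤ) (s : ℝ) :
    Θ (s + 2 * π * k, 0) = Θ (s, 0) := by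
  have hper : (fun s ↦ Θ (s, 0)).Periodic (2 * π) := fun s ↦ hΘ.add_two_pi h s 0
  rw [mul_comm (2 * π)]
  exact hper.int_mul k s

theorem abs_lt_pi (hΘ : IsSecantAngle c Θ) {s : ℝ}
    (hcos : ∀ u ∈ Icc 0 (2 * π), Real.cos (Θ (s, u)) ≠ -1) : |Θ (s, 0)| < π := by
  have hcont := hΘ.continuous
  obtain ⟨m, hm⟩ := exists_int_forall_abs_sub_lt_pi isPreconnected_Icc
    (g := fun u ↦ Θ (s, u)) (by fun_prop) hcos
  have hlast := hm (2 * π) ⟨Real.two_pi_pos.le, le_rfl⟩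
  rw [hΘ.apply_two_pi, abs_lt] at hlast
  have hm_zero : m = 0 := by
    have hlt : (m : ℝ) < 1 := by nlinarith [hlast.1, Real.pi_pos]
    have hgt : (-1 : ℝ) < m := by nlinarith [hlast.2, Real.pi_pos]
    have hlt' : m < 1 := by exact_mod_cast hlt
    have hgt' : -1 < m := by exact_mod_cast hgt
    omega
  simpa [hm_zero] using hm 0 ⟨le_rfl, Real.two_pi_pos.le⟩

theorem base_mem_Ioo (hΘ : IsSecantAngle c Θ) (h : IsAdmissibleCurve c s₀) :
    Θ (s₀, 0) ∈ Ioo 0 π := by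
  have him : ∀ u ∈ Icc 0 (2 * π), 0 < (secantSlope (deriv c) (s₀, u)).im := by
    intro u hu
    rcases hu.1.eq_or_lt with rfl | hpos
    · rw [secantSlope_zero]
      exact h.im_deriv_base_pos
    rcases hu.2.eq_or_lt with rfl | hlt
    · simp [h.secantSlope_two_pi]
    · have hchord := congrArg Complex.im (h.mul_secantSlope s₀ u)
      rw [im_ofReal_mul, sub_im, h.im_base, sub_zero] at hchord
      exact pos_of_mul_pos_right
        (hchord ▸ (h.im_mem_Ioo (s₀ + u) ⟨by linarith, by linarith⟩).1) hpos.le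
  have hsin : ∀ u ∈ Icc 0 (2 * π), 0 < Real.sin (Θ (s₀, u)) := fun u hu ↦
    pos_of_mul_pos_right (hΘ.im_secantSlope _ ▸ him u hu) (norm_nonneg _)
  refine mem_Ioo_zero_pi_of_abs_lt_pi (hΘ.abs_lt_pi fun u hu hcos ↦ ?_)
    (hsin 0 ⟨le_rfl, Real.two_pi_pos.le⟩)
  nlinarith [hsin u hu, Real.sin_sq_add_cos_sq (Θ (s₀, u))]

theorem apply_zero_eq_pi_div_two (hΘ : IsSecantAngle c Θ) (h : IsAdmissibleCurve c s₀)
    (hre : ∀ s, 0 ≤ (c s).re) {b : ℝ} (hb : (c b).re = 0) (him : 0 < (deriv c b).im) :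
    Θ (b, 0) = π / 2 := by
  have hderiv_re : (deriv c b).re = 0 := by
    have hmin : IsLocalMin (fun s ↦ (c s).re) b := .of_forall fun s ↦ hb.trans_le (hre s)
    exact hmin.hasDerivAt_eq_zero (reCLM.hasFDerivAt.comp_hasDerivAt b (h.hasDerivAt b))
  have hcos : ∀ u ∈ Icc 0 (2 * π), 0 ≤ Real.cos (Θ (b, u)) := by
    intro u hu
    refine nonneg_of_mul_nonneg_right (?_ : 0 ≤ ‖secantSlope (deriv c) (b, u)‖ * _)
      (norm_pos_iff.2 (h.secantSlope_ne_zero _))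
    rw [← hΘ.re_secantSlope]
    rcases hu.1.eq_or_lt with rfl | hpos
    · rw [secantSlope_zero, hderiv_re]
    · have hchord := congrArg Complex.re (h.mul_secantSlope b u)
      rw [re_ofReal_mul, sub_re, hb, sub_zero] at hchord
      exact nonneg_of_mul_nonneg_right (hchord ▸ hre (b + u)) hpos
  have hcos_zero : Real.cos (Θ (b, 0)) = 0 := by
    have hslope := hΘ.re_secantSlope (b, 0)
    rw [secantSlope_zero, hderiv_re, zero_eq_mul] at hslope
    exact hslope.resolve_left (norm_ne_zero_iff.2 (h.deriv_ne_zero b))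
  have hsin_pos : 0 < Real.sin (Θ (b, 0)) := by
    rw [← secantSlope_zero (deriv c) b, hΘ.im_secantSlope] at him
    exact pos_of_mul_pos_right him (norm_nonneg _)
  have hmem := mem_Ioo_zero_pi_of_abs_lt_pi
    (hΘ.abs_lt_pi fun u hu ↦ by linarith [hcos u hu]) hsin_pos
  exact Real.injOn_cos (Ioo_subset_Icc_self hmem) ⟨by positivity, by linarith [Real.pi_pos]⟩
    (hcos_zero.trans Real.cos_pi_div_two.symm)

theorem isOpen_setOf_forall_mem_Ioo (hΘ : IsSecantAngle c Θ) (h : IsAdmissibleCurve c s₀) (x : ℝ) :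
    IsOpen {w : ℂ | ∀ a, Complex.exp (c a) = w → x ∈ Ioo (Θ (a, 0) - π) (Θ (a, 0))} := by
  have hΘ0 : Continuous fun a ↦ Θ (a, 0) := hΘ.continuous.comp (by fun_prop)
  have hopen : IsOpen {a | x ∈ Ioo (Θ (a, 0) - π) (Θ (a, 0))} :=
    (isOpen_lt (hΘ0.sub continuous_const) continuous_const).inter (isOpen_lt continuous_const hΘ0)
  have hclosed := ((isCompact_Icc (a := 0) (b := 2 * π)).inter_right hopen.isClosed_compl).image
    h.contDiff.continuous.cexp |>.isClosed
  convert! hclosed.isOpen_compl using 1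
  ext w
  simp only [mem_ofPred_eq, mem_compl_iff, mem_image, not_exists, not_and]
  refine ⟨fun hw a ha haw ↦ ha.2 (hw a haw), fun hw a haw ↦ ?_⟩
  by_contra hmem
  obtain ⟨k, hk⟩ := exists_int_add_mem_Ico 0 a
  refine hw (a + 2 * π * k) ⟨⟨hk.1, by linarith [hk.2]⟩, ?_⟩ ?_
  · simpa only [mem_compl_iff, mem_ofPred_eq, hΘ.add_two_pi_mul_int h] using hmem
  · rw [h.add_two_pi_mul_int, ← haw, Complex.exp_eq_exp_iff_exists_int]
    exact ⟨k, by ring⟩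

end IsSecantAngle

/-- The image under `exp` of the part of the cylinder on which a direction field is required to be
horizontal, namely the real line and `|re z| ≥ R`, together with the origin. -/
def horizontalLocus (R : ℝ) : Set ℂ :=
  {w | (‖w‖ : ℂ) = w} ∪ {w | ‖w‖ ∉ Ioo (Real.exp (-R)) (Real.exp R)}

theorem isClosed_horizontalLocus (R : ℝ) : IsClosed (horizontalLocus R) :=
  (isClosed_eq (by fun_prop) continuous_id).union
    (isOpen_Ioo.preimage continuous_norm).isClosed_compl

theorem exp_mem_horizontalLocus_iff {R : ℝ} {z : ℂ} :
    Complex.exp z ∈ horizontalLocus R ↔ (∃ n : ℤ, z.im = 2 * π * n) ∨ R ≤ |z.re| := by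
  have hre : (‖Complex.exp z‖ : ℂ) = Complex.exp z ↔ Complex.exp (z.im * I) = 1 := by
    rw [Complex.norm_exp, ofReal_exp]
    nth_rw 2 [← re_add_im z]
    rw [Complex.exp_add, eq_comm, mul_eq_left₀ (Complex.exp_ne_zero _)]
  simp only [horizontalLocus, mem_union, mem_ofPred_eq, hre, exp_ofReal_mul_I_eq_one_iff]
  rw [Complex.norm_exp, mem_Ioo, Real.exp_lt_exp, Real.exp_lt_exp, ← abs_lt, not_lt]

/-- The angles that a direction field may take at `w = exp z` in order to be transverse to the
curves `c i`, whose tangents have the angles `Θ i (·, 0)`, and horizontal on `horizontalLocus R`. -/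
def allowedAngles {ι : Type*} (c : ι → ℝ → ℂ) (Θ : ι → ℝ × ℝ → ℝ) (R : ℝ) (w : ℂ) : Set ℝ :=
  {x | (∀ i a, Complex.exp (c i a) = w → x ∈ Ioo (Θ i (a, 0) - π) (Θ i (a, 0))) ∧
    (w ∈ horizontalLocus R → x = 0)}

section Family

variable {ι : Type*} {c : ι → ℝ → ℂ} {s₀ : ι → ℝ} {Θ : ι → ℝ × ℝ → ℝ} {R : ℝ}

theorem convex_allowedAngles (w : ℂ) : Convex ℝ (allowedAngles c Θ R w) := by
  intro x hx y hy α β hα hβ hαβ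
  refine ⟨fun i a ha ↦ convex_Ioo _ _ (hx.1 i a ha) (hy.1 i a ha) hα hβ hαβ, fun hw ↦ ?_⟩
  simp [hx.2 hw, hy.2 hw]

theorem apply_zero_eq_of_exp_eq (h : ∀ i, IsAdmissibleCurve (c i) (s₀ i))
    (hΘ : ∀ i, IsSecantAngle (c i) (Θ i))
    (hcontact : ∀ i j a b, c i a = c j b → Θ i (a, 0) = Θ j (b, 0)) {i j : ι} {a b : ℝ}
    (hab : Complex.exp (c i a) = Complex.exp (c j b)) : Θ i (a, 0) = Θ j (b, 0) := by
  obtain ⟨k, hk⟩ := Complex.exp_eq_exp_iff_exists_int.1 hab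
  rw [← (hΘ j).add_two_pi_mul_int (h j) k b]
  refine hcontact _ _ _ _ ?_
  rw [hk, (h j).add_two_pi_mul_int]
  ring

theorem allowedAngles_nonempty (h : ∀ i, IsAdmissibleCurve (c i) (s₀ i))
    (hΘ : ∀ i, IsSecantAngle (c i) (Θ i))
    (hcontact : ∀ i j a b, c i a = c j b → Θ i (a, 0) = Θ j (b, 0))
    (hR : ∀ i a, |(c i a).re| < R) (w : ℂ) : (allowedAngles c Θ R w).Nonempty := by
  by_cases hw : w ∈ horizontalLocus R
  · refine ⟨0, fun i a ha ↦ ?_, fun _ ↦ rfl⟩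
    obtain ⟨n, hn⟩ := (exp_mem_horizontalLocus_iff.1 (ha ▸ hw)).resolve_right (hR i a).not_ge
    have hmem := (hΘ i).base_mem_Ioo (h i)
    rw [(h i).eq_of_im_eq hn, (hΘ i).add_two_pi_mul_int (h i)]
    exact ⟨by linarith [hmem.2], hmem.1⟩
  by_cases hcurve : ∃ j b, Complex.exp (c j b) = w
  · obtain ⟨j, b, hjb⟩ := hcurve
    refine ⟨Θ j (b, 0) - π / 2, fun i a ha ↦ ?_, fun hw' ↦ absurd hw' hw⟩
    rw [apply_zero_eq_of_exp_eq h hΘ hcontact (ha.trans hjb.symm)]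
    constructor <;> linarith [Real.pi_pos]
  · push Not at hcurve
    exact ⟨0, fun i a ha ↦ absurd ha (hcurve i a), fun _ ↦ rfl⟩

theorem eventually_mem_allowedAngles [Finite ι] (h : ∀ i, IsAdmissibleCurve (c i) (s₀ i))
    (hΘ : ∀ i, IsSecantAngle (c i) (Θ i)) {w : ℂ} {x : ℝ} (hx : x ∈ allowedAngles c Θ R w) :
    ∀ᶠ w' in 𝓝 w, x ∈ allowedAngles c Θ R w' := by
  have hcurve := Filter.eventually_all.2 fun i ↦
    ((hΘ i).isOpen_setOf_forall_mem_Ioo (h i) x).mem_nhds (hx.1 i)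
  have hzero : ∀ᶠ w' in 𝓝 w, w' ∈ horizontalLocus R → x = 0 := by
    by_cases hw : w ∈ horizontalLocus R
    · exact .of_forall fun _ _ ↦ hx.2 hw
    · filter_upwards [(isClosed_horizontalLocus R).isOpen_compl.mem_nhds hw] with w' hw' hmem
      exact absurd hmem hw'
  filter_upwards [hcurve, hzero] with w' h₁ h₂ using ⟨h₁, h₂⟩

theorem exists_isDirectionField [Finite ι] (h : ∀ i, IsAdmissibleCurve (c i) (s₀ i))
    (hΘ : ∀ i, IsSecantAngle (c i) (Θ i))
    (hcontact : ∀ i j a b, c i a = c j b → Θ i (a, 0) = Θ j (b, 0)) :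
    ∃ ψ R, IsDirectionField ψ R ∧ ∀ i a, Θ i (a, 0) - ψ (c i a) ∈ Ioo 0 π := by
  choose r hr using fun i ↦ (h i).exists_abs_re_le
  obtain ⟨C, hC⟩ := (finite_range r).bddAbove
  set R := |C| + 1
  have hR (i : ι) (a : ℝ) : |(c i a).re| < R :=
    (hr i a).trans_lt (by linarith [hC (mem_range_self i), le_abs_self C])
  have hlocal (w : ℂ) : ∃ x, ∀ᶠ w' in 𝓝 w, x ∈ allowedAngles c Θ R w' :=
    (allowedAngles_nonempty h hΘ hcontact hR w).imp fun _ ↦ eventually_mem_allowedAngles h hΘ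
  obtain ⟨g, hg⟩ := exists_contMDiffMap_forall_mem_convex_of_local_const (n := (⊤ : ℕ∞))
    (modelWithCornersSelf ℝ ℂ) convex_allowedAngles hlocal
  refine ⟨fun z ↦ g (Complex.exp z), R, ⟨?_, fun z ↦ ?_, by positivity, fun z hz ↦ ?_,
    fun z hz ↦ ?_⟩, fun i a ↦ ?_⟩
  · exact (contMDiff_iff_contDiff.1 g.contMDiff).comp Complex.contDiff_exp
  · rw [Complex.exp_add, Complex.exp_two_pi_mul_I, mul_one]
  · exact (hg _).2 (exp_mem_horizontalLocus_iff.2 (.inr hz))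
  · exact (hg _).2 (exp_mem_horizontalLocus_iff.2 (.inl ⟨0, by simpa using hz⟩))
  · have hmem := (hg (Complex.exp (c i a))).1 i a rfl
    constructor <;> linarith [hmem.1, hmem.2]

end Family

end AdmissibleCurve

section CylinderDiffeo

namespace IsCylinderDiffeo

variable {Φ G Ψ K : ℂ → ℂ}

theorem hasFDerivAt (h : IsCylinderDiffeo Φ G) (z : ℂ) : HasFDerivAt Φ (fderiv ℝ Φ z) z :=
  (h.contDiff.differentiable (by simp) z).hasFDerivAt

theorem injective_fderiv (h : IsCylinderDiffeo Φ G) (z : ℂ) :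
    Function.Injective (fderiv ℝ Φ z) :=
  ((isInvertible_iff_signedArea_ne_zero.2 (h.signedArea_pos z).ne').bijective).injective

theorem comp (h : IsCylinderDiffeo Φ G) (k : IsCylinderDiffeo Ψ K) :
    IsCylinderDiffeo (Φ ∘ Ψ) (K ∘ G) where
  contDiff := h.contDiff.comp k.contDiff
  contDiff_inverse := k.contDiff_inverse.comp h.contDiff_inverse
  leftInverse := h.leftInverse.comp k.leftInverse
  rightInverse := h.rightInverse.comp k.rightInverse
  add_two_pi_I z := by simp only [Function.comp_apply, k.add_two_pi_I, h.add_two_pi_I]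
  exists_translation := by
    obtain ⟨x, hx⟩ := h.exists_translation
    obtain ⟨y, hy⟩ := k.exists_translation
    refine ⟨y + x, fun z hz ↦ ?_⟩
    rw [Function.comp_apply, hy z hz, hx _ (by simp [hz]), ofReal_add, add_assoc]
  im_pos z hz := h.im_pos _ (k.im_pos z hz)
  im_neg z hz := h.im_neg _ (k.im_neg z hz)
  signedArea_pos z := by
    rw [((h.hasFDerivAt (Ψ z)).comp z (k.hasFDerivAt z)).fderiv, ContinuousLinearMap.comp_apply,
      ContinuousLinearMap.comp_apply, signedArea_map]
    exact mul_pos (h.signedArea_pos _) (k.signedArea_pos _)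

theorem im_apply_of_im_eq_zero (h : IsCylinderDiffeo Φ G) {z : ℂ} (hz : z.im = 0) :
    (Φ z).im = 0 := by
  obtain ⟨x, hx⟩ := h.exists_translation
  simp [hx z hz, hz]

theorem im_apply_pos_iff (h : IsCylinderDiffeo Φ G) {z : ℂ} : 0 < (Φ z).im ↔ 0 < z.im := by
  refine ⟨fun hpos ↦ ?_, h.im_pos z⟩
  rcases lt_trichotomy z.im 0 with hneg | hzero | hz
  · exact absurd (h.im_neg z hneg) hpos.not_gt
  · exact absurd (h.im_apply_of_im_eq_zero hzero) hpos.ne'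
  · exact hz

theorem im_apply_neg_iff (h : IsCylinderDiffeo Φ G) {z : ℂ} : (Φ z).im < 0 ↔ z.im < 0 := by
  refine ⟨fun hneg ↦ ?_, h.im_neg z⟩
  rcases lt_trichotomy z.im 0 with hz | hzero | hpos
  · exact hz
  · exact absurd (h.im_apply_of_im_eq_zero hzero) hneg.ne
  · exact absurd (h.im_pos z hpos) hneg.not_gt

theorem symm (h : IsCylinderDiffeo Φ G) : IsCylinderDiffeo G Φ where
  contDiff := h.contDiff_inverse
  contDiff_inverse := h.contDiff
  leftInverse := h.rightInverse
  rightInverse := h.leftInverse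
  add_two_pi_I z := by
    apply h.leftInverse.injective
    rw [h.rightInverse, h.add_two_pi_I, h.rightInverse]
  exists_translation := by
    obtain ⟨x, hx⟩ := h.exists_translation
    refine ⟨-x, fun z hz ↦ h.leftInverse.injective ?_⟩
    rw [h.rightInverse, hx _ (by simp [hz]), ofReal_neg, neg_add_cancel_right]
  im_pos z hz := h.im_apply_pos_iff.1 (by rwa [h.rightInverse])
  im_neg z hz := h.im_apply_neg_iff.1 (by rwa [h.rightInverse])
  signedArea_pos z := by
    have hG : HasFDerivAt G (fderiv ℝ G z) z :=
      (h.contDiff_inverse.differentiable (by simp) z).hasFDerivAt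
    have hid : (fderiv ℝ Φ (G z)).comp (fderiv ℝ G z) = .id ℝ ℂ :=
      ((h.hasFDerivAt (G z)).comp z hG).unique
        ((hasFDerivAt_id z).congr_of_eventuallyEq (.of_forall h.rightInverse))
    have harea := signedArea_map (fderiv ℝ Φ (G z)) (fderiv ℝ G z 1) (fderiv ℝ G z I)
    rw [← ContinuousLinearMap.comp_apply, ← ContinuousLinearMap.comp_apply, hid] at harea
    refine pos_of_mul_pos_right ?_ (h.signedArea_pos (G z)).le
    rw [← harea]
    simp [signedArea]

theorem fderiv_apply_one (h : IsCylinderDiffeo Φ G) {z : ℂ} (hz : z.im = 0) :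
    fderiv ℝ Φ z 1 = 1 := by
  obtain ⟨x, hx⟩ := h.exists_translation
  have hline : (fun t : ℝ ↦ Φ (z + t)) = fun t : ℝ ↦ z + t + x :=
    funext fun t ↦ hx _ (by simp [hz])
  have hΦ : HasDerivAt (fun t : ℝ ↦ Φ (z + t)) (fderiv ℝ Φ z 1) 0 := by
    have hΦz : HasFDerivAt Φ (fderiv ℝ Φ z) (z + (0 : ℝ)) := by simpa using h.hasFDerivAt z
    exact hΦz.comp_hasDerivAt 0 (ofRealCLM.hasDerivAt.const_add z)
  rw [hline] at hΦ
  exact hΦ.unique ((ofRealCLM.hasDerivAt.const_add z).add_const (x : ℂ))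

theorem deriv_comp (h : IsCylinderDiffeo Φ G) {c : ℝ → ℂ} {θ : ℝ} (hc : DifferentiableAt ℝ c θ) :
    deriv (Φ ∘ c) θ = fderiv ℝ Φ (c θ) (deriv c θ) :=
  ((h.hasFDerivAt (c θ)).comp_hasDerivAt θ hc.hasDerivAt).deriv

end IsCylinderDiffeo

/-- The horizontal shear of the plane that moves the imaginary axis to the graph of `f`. -/
def shear (f : ℝ → ℝ) (z : ℂ) : ℂ := z + f z.im

theorem contDiff_shear {f : ℝ → ℝ} (hf : ContDiff ℝ ∞ f) : ContDiff ℝ ∞ (shear f) :=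
  contDiff_id.add (ofRealCLM.contDiff.comp (hf.comp imCLM.contDiff))

theorem isCylinderDiffeo_shear {f : ℝ → ℝ} (hf : ContDiff ℝ ∞ f)
    (hper : Function.Periodic f (2 * π)) : IsCylinderDiffeo (shear f) (shear (-f)) where
  contDiff := contDiff_shear hf
  contDiff_inverse := contDiff_shear hf.neg
  leftInverse z := by simp [shear]
  rightInverse z := by simp [shear]
  add_two_pi_I z := by
    have him : (z + 2 * π * I).im = z.im + 2 * π := by simp
    rw [shear, him, hper, shear, add_right_comm]
  exists_translation := ⟨f 0, fun z hz ↦ by rw [shear, hz]⟩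
  im_pos z hz := by simpa [shear] using hz
  im_neg z hz := by simpa [shear] using hz
  signedArea_pos z := by
    have him := (hf.differentiable (by simp) z.im).hasDerivAt.comp_hasFDerivAt z
      (imCLM.hasFDerivAt (x := z))
    have hshear : HasFDerivAt (shear f) _ z :=
      (hasFDerivAt_id z).add (ofRealCLM.hasFDerivAt.comp z him)
    simp [hshear.fderiv, signedArea]

theorem IsAdmissibleCurve.comp {c : ℝ → ℂ} {s₀ : ℝ} {Φ G : ℂ → ℂ} (hc : IsAdmissibleCurve c s₀)
    (h : IsCylinderDiffeo Φ G) : IsAdmissibleCurve (Φ ∘ c) s₀ where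
  contDiff := h.contDiff.comp hc.contDiff
  add_two_pi θ := by rw [Function.comp_apply, hc.add_two_pi, h.add_two_pi_I, Function.comp_apply]
  deriv_ne_zero θ := by
    rw [h.deriv_comp (hc.hasDerivAt θ).differentiableAt]
    exact (_root_.map_ne_zero_iff _ (h.injective_fderiv (c θ))).2 (hc.deriv_ne_zero θ)
  injective := h.leftInverse.injective.comp hc.injective
  im_base := h.im_apply_of_im_eq_zero hc.im_base
  im_deriv_base_pos := by
    have hone := h.fderiv_apply_one hc.im_base
    have harea := signedArea_map (fderiv ℝ Φ (c s₀)) 1 (deriv c s₀)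
    have hpos := h.signedArea_pos (c s₀)
    simp only [hone, signedArea_one_left] at harea hpos
    rw [h.deriv_comp (hc.hasDerivAt s₀).differentiableAt, harea]
    exact mul_pos hpos hc.im_deriv_base_pos
  im_mem_Ioo θ hθ := by
    refine ⟨h.im_pos _ (hc.im_mem_Ioo θ hθ).1, ?_⟩
    have hperiod := h.add_two_pi_I (c θ - 2 * π * I)
    rw [sub_add_cancel] at hperiod
    have hneg := h.im_neg (c θ - 2 * π * I) (by simpa using (hc.im_mem_Ioo θ hθ).2)
    simpa [hperiod] using hneg

end CylinderDiffeo

section Straightening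

theorem exists_isCylinderDiffeo_im_deriv_comp_pos {ι : Type*} [Finite ι] {c : ι → ℝ → ℂ}
    {s₀ : ι → ℝ} {Θ : ι → ℝ × ℝ → ℝ} (h : ∀ i, IsAdmissibleCurve (c i) (s₀ i))
    (hΘ : ∀ i, IsSecantAngle (c i) (Θ i))
    (hcontact : ∀ i j a b, c i a = c j b → Θ i (a, 0) = Θ j (b, 0)) :
    ∃ Φ G, IsCylinderDiffeo Φ G ∧ ∀ i θ, 0 < (deriv (Φ ∘ c i) θ).im := by
  obtain ⟨ψ, R, hψ, hangle⟩ := exists_isDirectionField h hΘ hcontact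
  obtain ⟨G, Φ, hG, hdir⟩ := hψ.exists_isCylinderDiffeo
  refine ⟨Φ, G, hG.symm, fun i θ ↦ ?_⟩
  set v := deriv (Φ ∘ c i) θ
  have hchain : deriv (c i) θ = fderiv ℝ G (Φ (c i θ)) v := by
    have hcomp := hG.deriv_comp
      (((h i).comp hG.symm).hasDerivAt θ).differentiableAt
    rwa [← Function.comp_assoc, hG.rightInverse.comp_eq_id, Function.id_comp] at hcomp
  have hdirection : fderiv ℝ G (Φ (c i θ)) 1 = Complex.exp (ψ (c i θ) * I) := by
    rw [hdir, hG.rightInverse]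
  have htransverse : 0 < signedArea (Complex.exp (ψ (c i θ) * I)) (deriv (c i) θ) := by
    rw [signedArea_exp_left, (hΘ i).deriv_eq, mul_assoc, ← Complex.exp_add, ← neg_mul, ← add_mul,
      ← sub_eq_add_neg, ← ofReal_sub, im_ofReal_mul, Complex.exp_ofReal_mul_I_im]
    exact mul_pos (norm_pos_iff.2 ((h i).deriv_ne_zero θ)) (Real.sin_pos_of_mem_Ioo (hangle i θ))
  rw [hchain, ← hdirection, signedArea_map, signedArea_one_left] at htransverse
  exact pos_of_mul_pos_right htransverse (hG.signedArea_pos _).le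

end Straightening

section Graph

theorem surjective_of_add_two_pi {Y : ℝ → ℝ} (hY : Continuous Y)
    (hadd : ∀ θ, Y (θ + 2 * π) = Y θ + 2 * π) : Function.Surjective Y := by
  have hperiodic : Function.Periodic (fun θ ↦ Y θ - θ) (2 * π) := fun θ ↦ by
    simp only [hadd, add_sub_add_right_eq_sub]
  intro y
  obtain ⟨k, hk⟩ := exists_int_add_mem_Ico (Y 0) y
  have hlast : Y (2 * π) = Y 0 + 2 * π := by simpa using hadd 0
  obtain ⟨θ, -, hθ⟩ := intermediate_value_Icc Real.two_pi_pos.le hY.continuousOn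
    (hlast ▸ Ico_subset_Icc_self hk)
  have hshift := hperiodic.sub_zsmul_eq (x := θ) k
  refine ⟨θ - k • (2 * π), ?_⟩
  simp only [zsmul_eq_mul] at hshift ⊢
  linarith

theorem deriv_im_eq {c : ℝ → ℂ} {θ : ℝ} (hc : DifferentiableAt ℝ c θ) :
    deriv (fun θ ↦ (c θ).im) θ = (deriv c θ).im :=
  (imCLM.hasFDerivAt.comp_hasDerivAt θ hc.hasDerivAt).deriv

theorem strictMono_im_of_im_deriv_pos {c : ℝ → ℂ} (hc : Differentiable ℝ c)
    (hderiv : ∀ θ, 0 < (deriv c θ).im) : StrictMono fun θ ↦ (c θ).im :=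
  strictMono_of_deriv_pos fun θ ↦ (deriv_im_eq (hc θ)).symm ▸ hderiv θ

namespace IsAdmissibleCurve

variable {c : ℝ → ℂ} {s₀ : ℝ} {f : ℝ → ℝ}

theorem im_add_two_pi (h : IsAdmissibleCurve c s₀) (θ : ℝ) :
    (c (θ + 2 * π)).im = (c θ).im + 2 * π := by simp [h.add_two_pi]

theorem surjective_im (h : IsAdmissibleCurve c s₀) : Function.Surjective fun θ ↦ (c θ).im :=
  surjective_of_add_two_pi (Complex.continuous_im.comp h.contDiff.continuous) h.im_add_two_pi

theorem exists_re_eq_apply_im (h : IsAdmissibleCurve c s₀) (hderiv : ∀ θ, 0 < (deriv c θ).im) :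
    ∃ f : ℝ → ℝ, ContDiff ℝ ∞ f ∧ Function.Periodic f (2 * π) ∧ ∀ θ, (c θ).re = f (c θ).im := by
  have him (θ : ℝ) : HasDerivAt (fun θ ↦ (c θ).im) (deriv c θ).im θ :=
    imCLM.hasFDerivAt.comp_hasDerivAt θ (h.hasDerivAt θ)
  have hmono := strictMono_im_of_im_deriv_pos (h.contDiff.differentiable (by simp)) hderiv
  let height : ℝ ≃ₜ ℝ := (hmono.orderIsoOfSurjective _ h.surjective_im).toHomeomorph
  have hsymm : ContDiff ℝ ∞ height.symm :=
    height.contDiff_symm_deriv (fun θ ↦ (hderiv θ).ne') him (imCLM.contDiff.comp h.contDiff)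
  refine ⟨fun y ↦ (c (height.symm y)).re, reCLM.contDiff.comp (h.contDiff.comp hsymm), fun y ↦ ?_,
    fun θ ↦ congrArg (fun t ↦ (c t).re) (height.symm_apply_apply θ).symm⟩
  obtain ⟨θ, rfl⟩ := height.surjective y
  have hshift : height θ + 2 * π = height (θ + 2 * π) := (h.im_add_two_pi θ).symm
  simp [hshift, h.add_two_pi]

theorem range_eq_of_re_eq (h : IsAdmissibleCurve c s₀) (hf : ∀ θ, (c θ).re = f (c θ).im) :
    range c = {z | z.re = f z.im} := by
  refine Subset.antisymm (range_subset_iff.2 hf) fun z hz ↦ ?_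
  obtain ⟨θ, hθ⟩ := h.surjective_im z.im
  exact ⟨θ, Complex.ext (by rw [hf, show (c θ).im = z.im from hθ, hz]) hθ⟩

end IsAdmissibleCurve

theorem image_shear (f : ℝ → ℝ) (s : Set ℂ) : shear f '' s = shear (-f) ⁻¹' s :=
  congrFun (image_eq_preimage_of_inverse (g := shear (-f)) (fun z ↦ by simp [shear])
    fun z ↦ by simp [shear]) s

theorem isPreconnected_setOf_re_lt {f : ℝ → ℝ} (hf : Continuous f) :
    IsPreconnected {z : ℂ | z.re < f z.im} := by
  have hshear := (convex_halfSpace_re_lt 0).isPreconnected.image (shear f)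
    (by unfold shear; fun_prop)
  simpa [image_shear, shear] using hshear

theorem isPreconnected_setOf_lt_re {f : ℝ → ℝ} (hf : Continuous f) :
    IsPreconnected {z : ℂ | f z.im < z.re} := by
  have hshear := (convex_halfSpace_re_gt 0).isPreconnected.image (shear f)
    (by unfold shear; fun_prop)
  simpa [image_shear, shear] using hshear

/-- The complement of the curve `c` splits into the open sets `S` and `T`, which contain the left
and the right end of the real line, respectively. -/
structure HasSides (c : ℝ → ℂ) (S T : Set ℂ) : Prop where
  isOpen_left : IsOpen S
  isOpen_right : IsOpen T
  disjoint : Disjoint S T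
  union_eq : S ∪ T = (range c)ᶜ
  eventually_atBot : ∀ᶠ x : ℝ in atBot, (x : ℂ) ∈ S
  eventually_atTop : ∀ᶠ x : ℝ in atTop, (x : ℂ) ∈ T

namespace HasSides

variable {c : ℝ → ℂ} {S T : Set ℂ}

theorem comp (h : HasSides c S T) {Φ G : ℂ → ℂ} (hΦ : IsCylinderDiffeo Φ G) :
    HasSides (Φ ∘ c) (G ⁻¹' S) (G ⁻¹' T) := by
  obtain ⟨x₀, hx₀⟩ := hΦ.symm.exists_translation
  have htranslate (x : ℝ) : G x = (x + x₀ : ℝ) := by rw [hx₀ x (by simp), ofReal_add]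
  refine ⟨h.isOpen_left.preimage hΦ.contDiff_inverse.continuous,
    h.isOpen_right.preimage hΦ.contDiff_inverse.continuous, h.disjoint.preimage G, ?_, ?_, ?_⟩
  · rw [← preimage_union, h.union_eq, preimage_compl, range_comp,
      image_eq_preimage_of_inverse hΦ.leftInverse hΦ.rightInverse]
  · simp only [mem_preimage, htranslate]
    exact (tendsto_atBot_add_const_right _ x₀ tendsto_id).eventually h.eventually_atBot
  · simp only [mem_preimage, htranslate]
    exact (tendsto_atTop_add_const_right _ x₀ tendsto_id).eventually h.eventually_atTop

variable {f : ℝ → ℝ}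

theorem setOf_re_lt_subset (h : HasSides c S T) (hf : Continuous f)
    (hc : range c = {z | z.re = f z.im}) : {z | z.re < f z.im} ⊆ S := by
  refine (isPreconnected_setOf_re_lt hf).subset_left_of_subset_union h.isOpen_left
    h.isOpen_right h.disjoint ?_ ?_
  · rw [h.union_eq, hc]
    exact fun z hz ↦ ne_of_lt hz
  · obtain ⟨x, hxS, hx⟩ := (h.eventually_atBot.and (eventually_lt_atBot (f 0))).exists
    exact ⟨x, by simpa using hx, hxS⟩

theorem setOf_lt_re_subset (h : HasSides c S T) (hf : Continuous f)
    (hc : range c = {z | z.re = f z.im}) : {z | f z.im < z.re} ⊆ T := by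
  refine (isPreconnected_setOf_lt_re hf).subset_right_of_subset_union h.isOpen_left
    h.isOpen_right h.disjoint ?_ ?_
  · rw [h.union_eq, hc]
    exact fun z hz ↦ ne_of_gt hz
  · obtain ⟨x, hxT, hx⟩ := (h.eventually_atTop.and (eventually_gt_atTop (f 0))).exists
    exact ⟨x, by simpa using hx, hxT⟩

theorem notMem_range (h : HasSides c S T) {z : ℂ} (hz : z ∈ S ∪ T) : z ∉ range c := by
  rwa [← mem_compl_iff, ← h.union_eq]

theorem left_eq (h : HasSides c S T) (hf : Continuous f) (hc : range c = {z | z.re = f z.im}) :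
    S = {z | z.re < f z.im} := by
  refine Subset.antisymm (fun z hz ↦ ?_) (h.setOf_re_lt_subset hf hc)
  have hne : z ∉ {z | z.re = f z.im} := hc ▸ h.notMem_range (.inl hz)
  refine lt_of_le_of_ne (not_lt.1 fun hlt ↦ ?_) hne
  exact disjoint_left.1 h.disjoint hz (h.setOf_lt_re_subset hf hc hlt)

theorem right_eq (h : HasSides c S T) (hf : Continuous f) (hc : range c = {z | z.re = f z.im}) :
    T = {z | f z.im < z.re} := by
  refine Subset.antisymm (fun z hz ↦ ?_) (h.setOf_lt_re_subset hf hc)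
  have hne : z ∉ {z | z.re = f z.im} := hc ▸ h.notMem_range (.inr hz)
  refine lt_of_le_of_ne (not_lt.1 fun hlt ↦ ?_) (Ne.symm hne)
  exact disjoint_left.1 h.disjoint (h.setOf_re_lt_subset hf hc hlt) hz

end HasSides

end Graph

section Interpolation

/-- The point dividing the segment from `u x` to `v x` in the ratio `t : 1 - t`, as a function of
`p = (x, t)`. -/
def interpolation (u v : ℝ → ℝ) (p : ℝ × ℝ) : ℝ := (1 - p.2) * u p.1 + p.2 * v p.1

theorem contDiff_interpolation {u v : ℝ → ℝ} (hu : ContDiff ℝ ∞ u) (hv : ContDiff ℝ ∞ v) :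
    ContDiff ℝ ∞ (interpolation u v) :=
  ((contDiff_const.sub contDiff_snd).mul (hu.comp contDiff_fst)).add
    (contDiff_snd.mul (hv.comp contDiff_fst))

theorem hasDerivAt_interpolation_comp {u v x τ : ℝ → ℝ} {u' v' x' τ' s : ℝ}
    (hu : HasDerivAt u u' (x s)) (hv : HasDerivAt v v' (x s)) (hx : HasDerivAt x x' s)
    (hτ : HasDerivAt τ τ' s) :
    HasDerivAt (fun r ↦ interpolation u v (x r, τ r))
      (((1 - τ s) * u' + τ s * v') * x' + (v (x s) - u (x s)) * τ') s := by
  refine (((hτ.const_sub 1).mul (hu.comp s hx)).add (hτ.mul (hv.comp s hx))).congr_deriv ?_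
  simp only [Function.comp_apply]
  ring

theorem interpolation_pos {u v : ℝ → ℝ} {x t : ℝ} (hu : 0 < u x) (hv : 0 < v x)
    (ht : t ∈ Icc (0 : ℝ) 1) : 0 < interpolation u v (x, t) :=
  convex_Ioi (0 : ℝ) hu hv (sub_nonneg.2 ht.2) ht.1 (sub_add_cancel 1 t)

theorem interpolation_mem_Icc {u v : ℝ → ℝ} {x t : ℝ} (hle : u x ≤ v x)
    (ht : t ∈ Icc (0 : ℝ) 1) : interpolation u v (x, t) ∈ Icc (u x) (v x) :=
  convex_Icc (u x) (v x) (left_mem_Icc.2 hle) (right_mem_Icc.2 hle) (sub_nonneg.2 ht.2) ht.1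
    (sub_add_cancel 1 t)

theorem exists_interpolation_eq {u v : ℝ → ℝ} {x y : ℝ} (hy : y ∈ Icc (u x) (v x)) :
    ∃ t ∈ Icc (0 : ℝ) 1, interpolation u v (x, t) = y := by
  rw [← segment_eq_Icc (hy.1.trans hy.2)] at hy
  obtain ⟨a, b, ha, hb, hab, rfl⟩ := hy
  refine ⟨b, ⟨hb, by linarith⟩, ?_⟩
  rw [interpolation, ← hab, add_sub_cancel_right, smul_eq_mul, smul_eq_mul]

end Interpolation

section Sweep

/-- A smooth family `H (·, t)`, `0 ≤ t ≤ 1`, of lifts of embedded closed curves in the cylinder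
`ℂ / 2πiℤ` that moves weakly to the right from `c` to `d` and sweeps out `A`. -/
structure IsSweep (H : ℝ × ℝ → ℂ) (c d : ℝ → ℂ) (A : Set ℂ) : Prop where
  contDiff : ContDiff ℝ ∞ H
  add_two_pi : ∀ θ t, H (θ + 2 * π, t) = H (θ, t) + 2 * π * I
  apply_zero : ∀ θ, H (θ, 0) = c θ
  apply_one : ∀ θ, H (θ, 1) = d θ
  injective : ∀ t ∈ Icc (0 : ℝ) 1, Function.Injective fun θ ↦ H (θ, t)
  deriv_ne_zero : ∀ θ, ∀ t ∈ Icc (0 : ℝ) 1, deriv (fun x ↦ H (x, t)) θ ≠ 0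
  signedArea_nonpos : ∀ θ, ∀ t ∈ Icc (0 : ℝ) 1,
    signedArea (deriv (fun x ↦ H (x, t)) θ) (deriv (fun r ↦ H (θ, r)) t) ≤ 0
  image_eq : H '' (univ ×ˢ Icc (0 : ℝ) 1) = A

theorem IsSweep.comp {H : ℝ × ℝ → ℂ} {c d : ℝ → ℂ} {A : Set ℂ} (h : IsSweep H c d A)
    {Φ G : ℂ → ℂ} (hΦ : IsCylinderDiffeo Φ G) : IsSweep (Φ ∘ H) (Φ ∘ c) (Φ ∘ d) (G ⁻¹' A) := by
  have hH : Differentiable ℝ H := h.contDiff.differentiable (by simp)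
  have hfst (θ t : ℝ) : deriv (fun x ↦ (Φ ∘ H) (x, t)) θ =
      fderiv ℝ Φ (H (θ, t)) (deriv (fun x ↦ H (x, t)) θ) :=
    hΦ.deriv_comp (c := fun x ↦ H (x, t)) (by fun_prop)
  have hsnd (θ t : ℝ) : deriv (fun r ↦ (Φ ∘ H) (θ, r)) t =
      fderiv ℝ Φ (H (θ, t)) (deriv (fun r ↦ H (θ, r)) t) :=
    hΦ.deriv_comp (c := fun r ↦ H (θ, r)) (by fun_prop)
  refine ⟨hΦ.contDiff.comp h.contDiff, fun θ t ↦ ?_, fun θ ↦ congrArg Φ (h.apply_zero θ),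
    fun θ ↦ congrArg Φ (h.apply_one θ), fun t ht ↦ hΦ.leftInverse.injective.comp (h.injective t ht),
    fun θ t ht ↦ ?_, fun θ t ht ↦ ?_, ?_⟩
  · rw [Function.comp_apply, h.add_two_pi, hΦ.add_two_pi_I, Function.comp_apply]
  · rw [hfst]
    exact (_root_.map_ne_zero_iff _ (hΦ.injective_fderiv _)).2 (h.deriv_ne_zero θ t ht)
  · rw [hfst, hsnd, signedArea_map]
    exact mul_nonpos_of_nonneg_of_nonpos (hΦ.signedArea_pos _).le (h.signedArea_nonpos θ t ht)
  · rw [image_comp, h.image_eq, image_eq_preimage_of_inverse hΦ.leftInverse hΦ.rightInverse]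

/-- Interpolates between the curves with real parts `f` and `g` as functions of their imaginary
parts, which are `Y` and `Z` as functions of the parameter. -/
def graphInterpolation (f g Y Z : ℝ → ℝ) (p : ℝ × ℝ) : ℂ :=
  interpolation f g (interpolation Y Z p, p.2) + interpolation Y Z p * I

section

variable {f g Y Z : ℝ → ℝ}

theorem contDiff_graphInterpolation (hf : ContDiff ℝ ∞ f) (hg : ContDiff ℝ ∞ g)
    (hY : ContDiff ℝ ∞ Y) (hZ : ContDiff ℝ ∞ Z) :
    ContDiff ℝ ∞ (graphInterpolation f g Y Z) := by
  have hheight := contDiff_interpolation hY hZ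
  have hre := (contDiff_interpolation hf hg).comp (hheight.prodMk contDiff_snd)
  exact (ofRealCLM.contDiff.comp hre).add ((ofRealCLM.contDiff.comp hheight).mul contDiff_const)

theorem interpolation_add_two_pi (hY : ∀ θ, Y (θ + 2 * π) = Y θ + 2 * π)
    (hZ : ∀ θ, Z (θ + 2 * π) = Z θ + 2 * π) (θ t : ℝ) :
    interpolation Y Z (θ + 2 * π, t) = interpolation Y Z (θ, t) + 2 * π := by
  simp only [interpolation, hY, hZ]
  ring

theorem graphInterpolation_add_two_pi (hf : Function.Periodic f (2 * π))
    (hg : Function.Periodic g (2 * π)) (hY : ∀ θ, Y (θ + 2 * π) = Y θ + 2 * π)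
    (hZ : ∀ θ, Z (θ + 2 * π) = Z θ + 2 * π) (θ t : ℝ) :
    graphInterpolation f g Y Z (θ + 2 * π, t) = graphInterpolation f g Y Z (θ, t) + 2 * π * I := by
  rw [graphInterpolation, graphInterpolation, interpolation_add_two_pi hY hZ]
  simp only [interpolation, hf _, hg _]
  push_cast
  ring

theorem hasDerivAt_graphInterpolation_comp {θ τ : ℝ → ℝ} {s θ' τ' y y' : ℝ}
    (hf : Differentiable ℝ f) (hg : Differentiable ℝ g) (hY : Differentiable ℝ Y)
    (hZ : Differentiable ℝ Z) (hθ : HasDerivAt θ θ' s) (hτ : HasDerivAt τ τ' s)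
    (hy : interpolation Y Z (θ s, τ s) = y)
    (hy' : interpolation (deriv Y) (deriv Z) (θ s, τ s) * θ' + (Z (θ s) - Y (θ s)) * τ' = y') :
    HasDerivAt (fun r ↦ graphInterpolation f g Y Z (θ r, τ r))
      ((interpolation (deriv f) (deriv g) (y, τ s) * y' + (g y - f y) * τ' : ℝ) + y' * I) s := by
  subst hy hy'
  have hheight := hasDerivAt_interpolation_comp (hY _).hasDerivAt (hZ _).hasDerivAt hθ hτ
  have hre := hasDerivAt_interpolation_comp (hf _).hasDerivAt (hg _).hasDerivAt hheight hτ
  exact hre.ofReal_comp.add (hheight.ofReal_comp.mul_const I)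

theorem im_deriv_graphInterpolation_fst (hf : Differentiable ℝ f) (hg : Differentiable ℝ g)
    (hY : Differentiable ℝ Y) (hZ : Differentiable ℝ Z) (θ t : ℝ) :
    (deriv (fun x ↦ graphInterpolation f g Y Z (x, t)) θ).im =
      interpolation (deriv Y) (deriv Z) (θ, t) := by
  rw [(hasDerivAt_graphInterpolation_comp hf hg hY hZ (hasDerivAt_id' θ) (hasDerivAt_const θ t)
    rfl rfl).deriv]
  simp

theorem signedArea_graphInterpolation (hf : Differentiable ℝ f) (hg : Differentiable ℝ g)
    (hY : Differentiable ℝ Y) (hZ : Differentiable ℝ Z) (θ t : ℝ) :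
    signedArea (deriv (fun x ↦ graphInterpolation f g Y Z (x, t)) θ)
      (deriv (fun r ↦ graphInterpolation f g Y Z (θ, r)) t) =
      -(interpolation (deriv Y) (deriv Z) (θ, t) *
        (g (interpolation Y Z (θ, t)) - f (interpolation Y Z (θ, t)))) := by
  rw [(hasDerivAt_graphInterpolation_comp hf hg hY hZ (hasDerivAt_id' θ) (hasDerivAt_const θ t)
    rfl rfl).deriv, (hasDerivAt_graphInterpolation_comp hf hg hY hZ (hasDerivAt_const t θ)
    (hasDerivAt_id' t) rfl rfl).deriv]
  simp only [signedArea, add_re, add_im, ofReal_re, ofReal_im, re_ofReal_mul, im_ofReal_mul, I_re,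
    I_im]
  ring

theorem image_graphInterpolation (hfg : ∀ y, f y ≤ g y) (hYc : Continuous Y) (hZc : Continuous Z)
    (hY : ∀ θ, Y (θ + 2 * π) = Y θ + 2 * π) (hZ : ∀ θ, Z (θ + 2 * π) = Z θ + 2 * π) :
    graphInterpolation f g Y Z '' (univ ×ˢ Icc (0 : ℝ) 1) =
      {z | z.re ∈ Icc (f z.im) (g z.im)} := by
  refine Subset.antisymm ?_ fun z hz ↦ ?_
  · rintro _ ⟨⟨θ, t⟩, ⟨-, ht⟩, rfl⟩
    simpa [graphInterpolation] using interpolation_mem_Icc (hfg _) ht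
  · obtain ⟨t, ht, hre⟩ := exists_interpolation_eq hz
    obtain ⟨θ, hθ⟩ := surjective_of_add_two_pi (Y := fun θ ↦ interpolation Y Z (θ, t))
      (by unfold interpolation; fun_prop) (fun θ ↦ interpolation_add_two_pi hY hZ θ t) z.im
    refine ⟨(θ, t), ⟨trivial, ht⟩, ?_⟩
    simp only [graphInterpolation, hθ, hre, re_add_im]

end

theorem IsAdmissibleCurve.isSweep_graphInterpolation {c d : ℝ → ℂ} {s₀ t₀ : ℝ} {f g : ℝ → ℝ}
    (hc : IsAdmissibleCurve c s₀) (hd : IsAdmissibleCurve d t₀)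
    (hc' : ∀ θ, 0 < (deriv c θ).im) (hd' : ∀ θ, 0 < (deriv d θ).im)
    (hf : ContDiff ℝ ∞ f) (hfper : Function.Periodic f (2 * π)) (hfc : ∀ θ, (c θ).re = f (c θ).im)
    (hg : ContDiff ℝ ∞ g) (hgper : Function.Periodic g (2 * π)) (hgd : ∀ θ, (d θ).re = g (d θ).im)
    (hfg : ∀ y, f y ≤ g y) :
    IsSweep (graphInterpolation f g (fun θ ↦ (c θ).im) fun θ ↦ (d θ).im) c d
      {z | z.re ∈ Icc (f z.im) (g z.im)} := by
  have hY : ContDiff ℝ ∞ fun θ ↦ (c θ).im := imCLM.contDiff.comp hc.contDiff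
  have hZ : ContDiff ℝ ∞ fun θ ↦ (d θ).im := imCLM.contDiff.comp hd.contDiff
  have hderivY (θ : ℝ) : 0 < deriv (fun θ ↦ (c θ).im) θ :=
    (deriv_im_eq (hc.hasDerivAt θ).differentiableAt).symm ▸ hc' θ
  have hderivZ (θ : ℝ) : 0 < deriv (fun θ ↦ (d θ).im) θ :=
    (deriv_im_eq (hd.hasDerivAt θ).differentiableAt).symm ▸ hd' θ
  have him (θ t : ℝ) := im_deriv_graphInterpolation_fst (hf.differentiable (by simp))
    (hg.differentiable (by simp)) (hY.differentiable (by simp)) (hZ.differentiable (by simp)) θ t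
  have hpos (θ : ℝ) {t : ℝ} (ht : t ∈ Icc (0 : ℝ) 1) :=
    interpolation_pos (hderivY θ) (hderivZ θ) ht
  refine ⟨contDiff_graphInterpolation hf hg hY hZ,
    graphInterpolation_add_two_pi hfper hgper hc.im_add_two_pi hd.im_add_two_pi,
    fun θ ↦ ?_, fun θ ↦ ?_, fun t ht ↦ ?_, fun θ t ht h0 ↦ ?_, fun θ t ht ↦ ?_,
    image_graphInterpolation hfg hY.continuous hZ.continuous hc.im_add_two_pi hd.im_add_two_pi⟩
  · simp [graphInterpolation, interpolation, ← hfc, re_add_im]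
  · simp [graphInterpolation, interpolation, ← hgd, re_add_im]
  · have hsmooth := (contDiff_graphInterpolation hf hg hY hZ).differentiable (by simp)
    exact (strictMono_im_of_im_deriv_pos (c := fun θ ↦ graphInterpolation f g _ _ (θ, t))
      (by fun_prop) fun θ ↦ (him θ t).symm ▸ hpos θ ht).injective.of_comp
  · exact (hpos θ ht).ne' (by rw [← him, h0, zero_im])
  · rw [signedArea_graphInterpolation (hf.differentiable (by simp)) (hg.differentiable (by simp))
      (hY.differentiable (by simp)) (hZ.differentiable (by simp)), neg_nonpos]
    exact mul_nonneg (hpos θ ht).le (sub_nonneg.2 (hfg _))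

theorem IsAdmissibleCurve.exists_isSweep_of_im_deriv_pos {c d : ℝ → ℂ} {s₀ t₀ : ℝ}
    {S T S' T' : Set ℂ} (hc : IsAdmissibleCurve c s₀) (hd : IsAdmissibleCurve d t₀)
    (hS : HasSides c S T) (hT : HasSides d S' T') (hdisj : ∀ θ, d θ ∉ S)
    (hc' : ∀ θ, 0 < (deriv c θ).im) (hd' : ∀ θ, 0 < (deriv d θ).im) :
    ∃ H, IsSweep H c d (S ∪ T')ᶜ := by
  obtain ⟨f, hf, hfper, hfc⟩ := hc.exists_re_eq_apply_im hc'
  obtain ⟨g, hg, hgper, hgd⟩ := hd.exists_re_eq_apply_im hd'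
  rw [hS.left_eq hf.continuous (hc.range_eq_of_re_eq hfc)] at hdisj ⊢
  rw [hT.right_eq hg.continuous (hd.range_eq_of_re_eq hgd)]
  have hfg (y : ℝ) : f y ≤ g y := by
    obtain ⟨θ, rfl⟩ := hd.surjective_im y
    simpa [hgd] using hdisj θ
  refine ⟨graphInterpolation f g (fun θ ↦ (c θ).im) fun θ ↦ (d θ).im, ?_⟩
  convert! hc.isSweep_graphInterpolation hd hc' hd' hf hfper hfc hg hgper hgd hfg using 1
  ext z
  simp

end Sweep

section Straightening

theorem IsAdmissibleCurve.exists_isCylinderDiffeo_re_comp_eq_zero {c : ℝ → ℂ} {s₀ : ℝ}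
    (hc : IsAdmissibleCurve c s₀) : ∃ Φ G, IsCylinderDiffeo Φ G ∧
      ∀ θ, ((Φ ∘ c) θ).re = 0 ∧ 0 < (deriv (Φ ∘ c) θ).im := by
  obtain ⟨Θ, hΘ⟩ := hc.exists_isSecantAngle
  obtain ⟨Φ, G, hΦ, him⟩ := exists_isCylinderDiffeo_im_deriv_comp_pos (c := fun _ : Unit ↦ c)
    (fun _ ↦ hc) (fun _ ↦ hΘ) fun _ _ a b hab ↦ by rw [hc.injective hab]
  obtain ⟨f, hf, hfper, hfc⟩ := (hc.comp hΦ).exists_re_eq_apply_im (him ())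
  have hshear := (isCylinderDiffeo_shear hf hfper).symm
  refine ⟨_, _, hshear.comp hΦ, fun θ ↦ ⟨?_, ?_⟩⟩
  · simpa [shear, ← sub_eq_add_neg, sub_eq_zero] using hfc θ
  · have him_shear (w : ℂ) : (shear (-f) w).im = w.im := by simp [shear]
    rw [← deriv_im_eq ((hc.comp (hshear.comp hΦ)).hasDerivAt θ).differentiableAt]
    simp only [Function.comp_apply, him_shear]
    exact (deriv_im_eq ((hc.comp hΦ).hasDerivAt θ).differentiableAt).symm ▸ him () θ

theorem exists_isCylinderDiffeo_im_deriv_comp_pos_of_re_eq_zero {c d : ℝ → ℂ} {s₀ t₀ : ℝ}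
    (hc : IsAdmissibleCurve c s₀) (hd : IsAdmissibleCurve d t₀) (hcre : ∀ θ, (c θ).re = 0)
    (hcim : ∀ θ, 0 < (deriv c θ).im) (hdre : ∀ θ, 0 ≤ (d θ).re)
    (hcontact : ∀ a b, c a = d b → SameRay ℝ (deriv c a) (deriv d b)) :
    ∃ Φ G, IsCylinderDiffeo Φ G ∧
      ∀ θ, 0 < (deriv (Φ ∘ c) θ).im ∧ 0 < (deriv (Φ ∘ d) θ).im := by
  obtain ⟨Θc, hΘc⟩ := hc.exists_isSecantAngle
  obtain ⟨Θd, hΘd⟩ := hd.exists_isSecantAngle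
  have hvertical (a b : ℝ) (hab : c a = d b) : Θc (a, 0) = Θd (b, 0) := by
    obtain ⟨r, r', hr, hr', hrr'⟩ :=
      (hcontact a b hab).exists_pos (hc.deriv_ne_zero a) (hd.deriv_ne_zero b)
    have hdim : 0 < (deriv d b).im := by
      have himr : r * (deriv c a).im = r' * (deriv d b).im := by simpa using congrArg im hrr'
      exact pos_of_mul_pos_right (himr ▸ mul_pos hr (hcim a)) hr'.le
    rw [hΘc.apply_zero_eq_pi_div_two hc (fun θ ↦ (hcre θ).ge) (hcre a) (hcim a),
      hΘd.apply_zero_eq_pi_div_two hd hdre (hab ▸ hcre a) hdim]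
  obtain ⟨Φ, G, hΦ, hpos⟩ := exists_isCylinderDiffeo_im_deriv_comp_pos
    (c := fun i : Bool ↦ bif i then c else d) (s₀ := fun i ↦ bif i then s₀ else t₀)
    (Θ := fun i ↦ bif i then Θc else Θd) (Bool.forall_bool.2 ⟨hd, hc⟩)
    (Bool.forall_bool.2 ⟨hΘd, hΘc⟩) fun
      | true, true, a, b, hab => by simp [hc.injective hab]
      | true, false, a, b, hab => hvertical a b hab
      | false, true, a, b, hab => (hvertical b a hab.symm).symm
      | false, false, a, b, hab => by simp [hd.injective hab]
  exact ⟨Φ, G, hΦ, fun θ ↦ ⟨hpos true θ, hpos false θ⟩⟩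

theorem IsAdmissibleCurve.exists_isSweep {c d : ℝ → ℂ} {s₀ t₀ : ℝ} {S T S' T' : Set ℂ}
    (hc : IsAdmissibleCurve c s₀) (hd : IsAdmissibleCurve d t₀) (hS : HasSides c S T)
    (hT : HasSides d S' T') (hdisj : ∀ θ, d θ ∉ S)
    (hcontact : ∀ a b, c a = d b → SameRay ℝ (deriv c a) (deriv d b)) :
    ∃ H, IsSweep H c d (S ∪ T')ᶜ := by
  obtain ⟨Φ, G, hΦ, hvertical⟩ := hc.exists_isCylinderDiffeo_re_comp_eq_zero
  have hdre (θ : ℝ) : 0 ≤ ((Φ ∘ d) θ).re := by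
    have hleft := (hS.comp hΦ).left_eq (f := 0) continuous_zero
      ((hc.comp hΦ).range_eq_of_re_eq fun θ ↦ (hvertical θ).1)
    have hmem : (Φ ∘ d) θ ∉ G ⁻¹' S := by simpa [hΦ.leftInverse _] using hdisj θ
    simpa [hleft] using hmem
  have hcontactΦ (a b : ℝ) (hab : (Φ ∘ c) a = (Φ ∘ d) b) :
      SameRay ℝ (deriv (Φ ∘ c) a) (deriv (Φ ∘ d) b) := by
    have hcd : c a = d b := hΦ.leftInverse.injective hab
    rw [hΦ.deriv_comp (hc.hasDerivAt a).differentiableAt,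
      hΦ.deriv_comp (hd.hasDerivAt b).differentiableAt, hcd]
    exact (hcontact a b hcd).map (fderiv ℝ Φ (d b)).toLinearMap
  obtain ⟨Ψ, K, hΨ, hpos⟩ := exists_isCylinderDiffeo_im_deriv_comp_pos_of_re_eq_zero
    (hc.comp hΦ) (hd.comp hΦ) (fun θ ↦ (hvertical θ).1) (fun θ ↦ (hvertical θ).2) hdre hcontactΦ
  have hΨΦ := hΨ.comp hΦ
  obtain ⟨H, hH⟩ := (hc.comp hΨΦ).exists_isSweep_of_im_deriv_pos (hd.comp hΨΦ) (hS.comp hΨΦ)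
    (hT.comp hΨΦ) (fun θ ↦ by simpa [hΨ.leftInverse _, hΦ.leftInverse _] using hdisj θ)
    (fun θ ↦ (hpos θ).1) (fun θ ↦ (hpos θ).2)
  have hid (w : ℂ) : (G ∘ K) ((Ψ ∘ Φ) w) = w := hΨΦ.leftInverse w
  refine ⟨(G ∘ K) ∘ H, ?_⟩
  convert! hH.comp hΨΦ.symm using 1
  · exact funext fun θ ↦ (hid (c θ)).symm
  · exact funext fun θ ↦ (hid (d θ)).symm
  · ext w
    simp [hΦ.leftInverse w, hΨ.leftInverse (Φ w)]

end Straightening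

section CauchyIntegral

/-- The Cauchy integral along the arc `γ` on `[a, b]`. Its imaginary part is the variation along
the arc of the angle as seen from `z`; for a closed curve it is `2πi` times the winding number. -/
noncomputable def cauchyIntegral (γ : ℝ → ℂ) (a b : ℝ) (z : ℂ) : ℂ :=
  ∫ x in a..b, deriv γ x / (γ x - z)

variable {γ : ℝ → ℂ} {a b : ℝ} {z : ℂ}

theorem tendsto_cauchyIntegral (hγ : ContDiff ℝ 1 γ) (hab : a ≤ b) {l : Filter ℂ}
    [l.IsCountablyGenerated] {r : ℝ} (hr : 0 < r)
    (hdist : ∀ᶠ z in l, ∀ x ∈ Icc a b, r ≤ ‖γ x - z‖) {f : ℝ → ℂ}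
    (hf : ∀ x ∈ Icc a b, Tendsto (fun z ↦ deriv γ x / (γ x - z)) l (𝓝 (f x))) :
    Tendsto (cauchyIntegral γ a b) l (𝓝 (∫ x in a..b, f x)) := by
  have hγ' : Continuous (deriv γ) := hγ.continuous_deriv le_rfl
  obtain ⟨C, hC⟩ := (isCompact_Icc (a := a) (b := b)).exists_bound_of_continuousOn hγ'.continuousOn
  have hmem {x : ℝ} (hx : x ∈ uIoc a b) : x ∈ Icc a b :=
    Ioc_subset_Icc_self (uIoc_of_le hab ▸ hx)
  refine intervalIntegral.tendsto_integral_filter_of_dominated_convergence (fun _ ↦ C / r) ?_ ?_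
    intervalIntegrable_const (.of_forall fun x hx ↦ hf x (hmem hx))
  · exact .of_forall fun z ↦
      (hγ'.measurable.div (hγ.continuous.measurable.sub_const z)).aestronglyMeasurable
  · filter_upwards [hdist] with z hz
    refine .of_forall fun x hx ↦ ?_
    rw [norm_div]
    exact div_le_div₀ ((norm_nonneg _).trans (hC x (hmem hx))) (hC x (hmem hx)) hr (hz x (hmem hx))

theorem eventually_forall_ne (hγ : Continuous γ) (hz : ∀ x ∈ Icc a b, γ x ≠ z) :
    ∀ᶠ w in 𝓝 z, ∀ x ∈ Icc a b, γ x ≠ w := by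
  have hmem : (γ '' Icc a b)ᶜ ∈ 𝓝 z :=
    (isCompact_Icc.image hγ).isClosed.isOpen_compl.mem_nhds fun ⟨x, hx, hxz⟩ ↦ hz x hx hxz
  filter_upwards [hmem] with w hw x hx hxw using hw ⟨x, hx, hxw⟩

theorem continuousAt_cauchyIntegral (hγ : ContDiff ℝ 1 γ) (hab : a ≤ b)
    (hz : ∀ x ∈ Icc a b, γ x ≠ z) : ContinuousAt (cauchyIntegral γ a b) z := by
  obtain ⟨r, hr, hball⟩ := Metric.eventually_nhds_iff_ball.1 (eventually_forall_ne hγ.continuous hz)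
  refine tendsto_cauchyIntegral hγ hab (half_pos hr) ?_ fun x hx ↦
    ContinuousAt.div (by fun_prop) (by fun_prop) (sub_ne_zero.2 (hz x hx))
  filter_upwards [Metric.ball_mem_nhds z (half_pos hr)] with w hw x hx
  by_contra! hlt
  refine hball (γ x) ?_ x hx rfl
  rw [← dist_eq_norm] at hlt
  rw [Metric.mem_ball] at hw ⊢
  linarith [dist_triangle (γ x) w z]

theorem tendsto_cauchyIntegral_cobounded (hγ : ContDiff ℝ 1 γ) (hab : a ≤ b) :
    Tendsto (cauchyIntegral γ a b) (Bornology.cobounded ℂ) (𝓝 0) := by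
  obtain ⟨M, hM⟩ := (isCompact_Icc (a := a) (b := b)).exists_bound_of_continuousOn
    hγ.continuous.continuousOn
  have : (Bornology.cobounded ℂ).IsCountablyGenerated := comap_norm_atTop (E := ℂ) ▸ inferInstance
  rw [← intervalIntegral.integral_zero (a := a) (b := b) (μ := MeasureTheory.volume)]
  refine tendsto_cauchyIntegral hγ hab one_pos ?_ fun x _ ↦ ?_
  · filter_upwards [tendsto_norm_cobounded_atTop.eventually_ge_atTop (M + 1)] with z hz x hx
    linarith [norm_sub_norm_le z (γ x), norm_sub_rev z (γ x), hM x hx]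
  · simpa [div_eq_mul_inv] using (tendsto_inv₀_cobounded.comp
      (tendsto_const_sub_cobounded (γ x))).const_mul (deriv γ x)

theorem exp_cauchyIntegral_mul (hγ : ContDiff ℝ 1 γ) (hz : ∀ x, γ x ≠ z) (a b : ℝ) :
    Complex.exp (cauchyIntegral γ a b z) * (γ a - z) = γ b - z := by
  have hne (x : ℝ) : γ x - z ≠ 0 := sub_ne_zero.2 (hz x)
  have hcont : Continuous fun x ↦ deriv γ x / (γ x - z) :=
    (hγ.continuous_deriv le_rfl).div (hγ.continuous.sub continuous_const) hne
  have hderiv (x : ℝ) :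
      HasDerivAt (fun x ↦ Complex.exp (-cauchyIntegral γ a x z) * (γ x - z)) 0 x := by
    have hint : HasDerivAt (fun x ↦ cauchyIntegral γ a x z) (deriv γ x / (γ x - z)) x :=
      intervalIntegral.integral_hasDerivAt_right (hcont.intervalIntegrable _ _)
        (hcont.stronglyMeasurableAtFilter _ _) hcont.continuousAt
    convert! hint.neg.cexp.mul ((hγ.differentiable one_ne_zero x).hasDerivAt.sub_const z) using 1
    field [hne x]
  have hconst := is_const_of_deriv_eq_zero (fun x ↦ (hderiv x).differentiableAt)
    (fun x ↦ (hderiv x).deriv) b a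
  have hself : cauchyIntegral γ a a z = 0 := intervalIntegral.integral_same
  rw [hself, neg_zero, Complex.exp_zero, one_mul] at hconst
  rw [← hconst, ← mul_assoc, ← Complex.exp_add, add_neg_cancel, Complex.exp_zero, one_mul]

theorem cauchyIntegral_comp_affine (γ : ℝ → ℂ) (a b θ₀ : ℝ) (z w : ℂ) {T : ℂ} (hT : T ≠ 0) :
    cauchyIntegral (fun x ↦ (γ (θ₀ + x) - w) / T) a b z =
      cauchyIntegral γ (θ₀ + a) (θ₀ + b) (w + z * T) := by
  rw [cauchyIntegral, cauchyIntegral, ← intervalIntegral.integral_comp_add_left]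
  congr 1 with x
  rw [deriv_div_const, deriv_sub_const, deriv_comp_const_add]
  have hdenom : γ (θ₀ + x) - (w + z * T) = T * ((γ (θ₀ + x) - w) / T - z) := by field
  rw [hdenom, div_div]

theorem cauchyIntegral_neg_comp_neg (γ : ℝ → ℂ) (a b : ℝ) (z : ℂ) :
    cauchyIntegral (fun x ↦ -γ (-x)) (-b) (-a) z = -cauchyIntegral γ a b (-z) := by
  rw [cauchyIntegral, cauchyIntegral, ← intervalIntegral.integral_comp_neg,
    ← intervalIntegral.integral_neg]
  congr 1 with x
  rw [deriv.fun_neg, deriv_comp_neg, neg_neg, ← div_neg]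
  rw [neg_neg]
  ring

theorem cauchyIntegral_eq_log_sub_log (hγ : ContDiff ℝ 1 γ) (hab : a ≤ b)
    (hslit : ∀ x ∈ Icc a b, I * (γ x - z) ∈ Complex.slitPlane) :
    cauchyIntegral γ a b z = Complex.log (I * (γ b - z)) - Complex.log (I * (γ a - z)) := by
  rw [← uIcc_of_le hab] at hslit
  have hne : ∀ x ∈ uIcc a b, γ x - z ≠ 0 := fun x hx ↦
    right_ne_zero_of_mul (Complex.slitPlane_ne_zero (hslit x hx))
  refine intervalIntegral.integral_eq_sub_of_hasDerivAt
    (f := fun x ↦ Complex.log (I * (γ x - z))) (fun x hx ↦ ?_)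
    ((hγ.continuous_deriv le_rfl).continuousOn.div
      (hγ.continuous.sub continuous_const).continuousOn hne).intervalIntegrable
  have hderiv := (hγ.differentiable one_ne_zero x).hasDerivAt.sub_const z |>.const_mul I
  convert! hderiv.clog_real (hslit x hx) using 1
  rw [mul_div_mul_left _ _ I_ne_zero]

theorem pi_div_four_le_arg (hre : |z.re| ≤ z.im) (him : 0 < z.im) : π / 4 ≤ Complex.arg z := by
  by_contra! hlt
  have hnonneg : 0 ≤ Complex.arg z := Complex.arg_nonneg_iff.2 him.le
  have hsin : Real.sin (Complex.arg z) < Real.sin (π / 4) :=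
    Real.sin_lt_sin_of_lt_of_le_pi_div_two (by linarith) (by linarith [Real.pi_pos]) hlt
  have hcos : Real.cos (π / 4) < Real.cos (Complex.arg z) :=
    Real.cos_lt_cos_of_nonneg_of_le_pi_div_two hnonneg (by linarith [Real.pi_pos]) hlt
  rw [Real.sin_pi_div_four] at hsin
  rw [Real.cos_pi_div_four] at hcos
  have hz : 0 < ‖z‖ := norm_pos_iff.2 fun h ↦ by simp [h] at him
  have hlt' := mul_lt_mul_of_pos_left (hsin.trans hcos) hz
  rw [Complex.norm_mul_cos_arg, Complex.norm_mul_sin_arg] at hlt'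
  linarith [le_abs_self z.re]

theorem arg_le_neg_pi_div_four (hre : |z.re| ≤ -z.im) (him : z.im < 0) :
    Complex.arg z ≤ -(π / 4) := by
  have hconj := pi_div_four_le_arg (z := conj z) (by simpa using hre) (by simpa using him)
  rw [Complex.arg_conj, if_neg fun harg ↦ him.ne (Complex.arg_eq_pi_iff.1 harg).2] at hconj
  linarith

theorem I_mul_sub_mem_slitPlane {x η : ℝ} {w k : ℂ} (hη₀ : 0 ≤ η) (hη₁ : η ≤ 1)
    (hk : η * (|k.re| + k.im) < k.im) (hw : ‖w - x‖ ≤ η * |x|) :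
    I * (w - k) ∈ Complex.slitPlane := by
  rw [Complex.mem_slitPlane_iff]
  by_contra! hcut
  have hre : |w.re - x| ≤ η * |x| := by simpa using (Complex.abs_re_le_norm (w - x)).trans hw
  have him : |w.im| ≤ η * |x| := by simpa using (Complex.abs_im_le_norm (w - x)).trans hw
  simp only [mul_re, I_re, sub_re, zero_mul, I_im, sub_im, one_mul, zero_sub, mul_im, zero_add,
    neg_sub] at hcut
  have hx : (1 - η) * |x| ≤ |k.re| := by
    have habs : |x| ≤ |k.re| + |w.re - x| := by
      rw [← sub_eq_zero.1 hcut.2, ← abs_sub_comm x]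
      linarith [abs_sub_abs_le_abs_sub x w.re]
    linarith
  have hkim : k.im ≤ η * |x| := by linarith [hcut.1, le_abs_self w.im]
  nlinarith [mul_le_mul_of_nonneg_left hx hη₀, mul_le_mul_of_nonneg_left hkim (sub_nonneg.2 hη₁)]

theorem pi_div_two_le_im_cauchyIntegral {δ η : ℝ} {k : ℂ} (hγ : ContDiff ℝ 1 γ) (hδ : 0 < δ)
    (hη₀ : 0 ≤ η) (hη₁ : η ≤ 1 / 4) (hk : η * (|k.re| + k.im) < k.im) (hkδ : ‖k‖ ≤ δ / 4)
    (happrox : ∀ x ∈ Icc (-δ) δ, ‖γ x - x‖ ≤ η * |x|) :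
    (∀ x ∈ Icc (-δ) δ, γ x ≠ k) ∧ π / 2 ≤ (cauchyIntegral γ (-δ) δ k).im := by
  have hδδ : -δ ≤ δ := by linarith
  have hslit : ∀ x ∈ Icc (-δ) δ, I * (γ x - k) ∈ Complex.slitPlane := fun x hx ↦
    I_mul_sub_mem_slitPlane hη₀ (by linarith) hk (happrox x hx)
  refine ⟨fun x hx ↦ sub_ne_zero.1 (right_ne_zero_of_mul (Complex.slitPlane_ne_zero (hslit x hx))),
    ?_⟩
  have hnorm (x : ℝ) (hx : x ∈ Icc (-δ) δ) (hxδ : |x| = δ) : ‖γ x - k - x‖ ≤ δ / 2 := by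
    have happ := happrox x hx
    rw [hxδ] at happ
    rw [sub_right_comm]
    nlinarith [norm_sub_le (γ x - x) k]
  have hright := hnorm δ (right_mem_Icc.2 hδδ) (abs_of_pos hδ)
  have hleft := hnorm (-δ) (left_mem_Icc.2 hδδ) (by rw [abs_neg, abs_of_pos hδ])
  have hre₁ := abs_le.1 ((Complex.abs_re_le_norm _).trans hright)
  have him₁ := (Complex.abs_im_le_norm _).trans hright
  have hre₂ := abs_le.1 ((Complex.abs_re_le_norm _).trans hleft)
  have him₂ := (Complex.abs_im_le_norm _).trans hleft
  simp only [sub_re, ofReal_re, sub_im, ofReal_im, sub_zero] at hre₁ him₁ hre₂ him₂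
  rw [abs_sub_comm] at him₁ him₂
  have harg₁ : π / 4 ≤ Complex.arg (I * (γ δ - k)) :=
    pi_div_four_le_arg (by simp; linarith) (by simp; linarith)
  have harg₂ : Complex.arg (I * (γ (-δ) - k)) ≤ -(π / 4) :=
    arg_le_neg_pi_div_four (by simp; linarith) (by simp; linarith)
  rw [cauchyIntegral_eq_log_sub_log hγ hδδ hslit, sub_im, Complex.log_im, Complex.log_im]
  linarith

theorem im_cauchyIntegral_neg_le {δ η : ℝ} {k : ℂ} (hγ : ContDiff ℝ 1 γ) (hδ : 0 < δ)
    (hη₀ : 0 ≤ η) (hη₁ : η ≤ 1 / 4) (hk : η * (|k.re| + k.im) < k.im) (hkδ : ‖k‖ ≤ δ / 4)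
    (happrox : ∀ x ∈ Icc (-δ) δ, ‖γ x - x‖ ≤ η * |x|) :
    (∀ x ∈ Icc (-δ) δ, γ x ≠ -k) ∧ (cauchyIntegral γ (-δ) δ (-k)).im ≤ -(π / 2) := by
  have hneg {x : ℝ} (hx : x ∈ Icc (-δ) δ) : -x ∈ Icc (-δ) δ :=
    ⟨neg_le_neg hx.2, neg_le.1 hx.1⟩
  obtain ⟨hne, him⟩ := pi_div_two_le_im_cauchyIntegral (γ := fun x ↦ -γ (-x)) (by fun_prop) hδ hη₀
    hη₁ hk hkδ fun x hx ↦ by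
      rw [← norm_neg, ← abs_neg x]
      convert! happrox (-x) (hneg hx) using 2
      push_cast
      ring
  refine ⟨fun x hx h ↦ hne (-x) (hneg hx) (by simp [h]), ?_⟩
  have hreflect := cauchyIntegral_neg_comp_neg γ (-δ) δ k
  rw [neg_neg] at hreflect
  rw [hreflect, neg_im] at him
  linarith

theorem exists_pi_le_im_cauchyIntegral_sub {γ : ℝ → ℂ} (hγ : ContDiff ℝ 1 γ) {θ₀ : ℝ}
    (hθ₀ : deriv γ θ₀ ≠ 0) {k : ℂ} (hk : 0 < k.im) :
    ∃ δ > 0, δ < π ∧ ∀ᶠ ε : ℝ in 𝓝[>] 0,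
      (∀ x ∈ Icc (θ₀ - δ) (θ₀ + δ),
        γ x ≠ γ θ₀ + ε * (k * deriv γ θ₀) ∧ γ x ≠ γ θ₀ - ε * (k * deriv γ θ₀)) ∧
      π ≤ (cauchyIntegral γ (θ₀ - δ) (θ₀ + δ) (γ θ₀ + ε * (k * deriv γ θ₀))).im -
        (cauchyIntegral γ (θ₀ - δ) (θ₀ + δ) (γ θ₀ - ε * (k * deriv γ θ₀))).im := by
  set T := deriv γ θ₀
  set g : ℝ → ℂ := fun x ↦ (γ (θ₀ + x) - γ θ₀) / T with hg_def
  have hg : ContDiff ℝ 1 g := by fun_prop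
  have hg' : HasDerivAt g 1 0 := by
    have hγθ₀ : HasDerivAt γ T (θ₀ + 0) := by
      rw [add_zero]
      exact (hγ.differentiable one_ne_zero θ₀).hasDerivAt
    simpa [hθ₀] using ((hγθ₀.comp_const_add θ₀ 0).sub_const (γ θ₀)).div_const T
  obtain ⟨η, hη, hη₁, hηk⟩ : ∃ η > 0, η ≤ 1 / 4 ∧ η * (|k.re| + k.im) < k.im := by
    have hη : ∀ᶠ η in 𝓝 0, η ≤ 1 / 4 ∧ η * (|k.re| + k.im) < k.im :=
      (eventually_le_nhds (by norm_num)).and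
        ((continuous_mul_const _).continuousAt.eventually_lt_const (by simpa using hk))
    have hη' : ∀ᶠ η : ℝ in 𝓝[>] 0, η ≤ 1 / 4 ∧ η * (|k.re| + k.im) < k.im := nhdsWithin_le_nhds hη
    exact (eventually_mem_nhdsWithin.and hη').exists
  obtain ⟨r, hr, happrox⟩ := Metric.eventually_nhds_iff.1
    ((hasDerivAt_iff_isLittleO_nhds_zero.1 hg').def hη)
  obtain ⟨δ, hδ, hδmin⟩ := exists_between (lt_min hr Real.pi_pos)
  obtain ⟨hδr, hδπ⟩ := lt_min_iff.1 hδmin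
  refine ⟨δ, hδ, hδπ, ?_⟩
  have hsmall : ∀ᶠ ε : ℝ in 𝓝[>] 0, ‖ε * k‖ < δ / 4 := by
    have hcont : Continuous fun ε : ℝ ↦ ‖ε * k‖ := by fun_prop
    exact nhdsWithin_le_nhds (hcont.continuousAt.eventually_lt_const (by simpa using by positivity))
  filter_upwards [hsmall, self_mem_nhdsWithin] with ε hεδ hε
  have hεk : η * (|(ε * k).re| + (ε * k).im) < (ε * k).im := by
    rw [re_ofReal_mul, im_ofReal_mul, abs_mul, abs_of_pos hε]
    linarith [mul_lt_mul_of_pos_left hηk hε]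
  have happ : ∀ x ∈ Icc (-δ) δ, ‖g x - x‖ ≤ η * |x| := fun x hx ↦ by
    have hxr := happrox (y := x) (by simpa using (abs_le.2 hx).trans_lt hδr)
    simpa [hg_def] using hxr
  obtain ⟨hne₁, him₁⟩ := pi_div_two_le_im_cauchyIntegral hg hδ hη.le hη₁ hεk hεδ.le happ
  obtain ⟨hne₂, him₂⟩ := im_cauchyIntegral_neg_le hg hδ hη.le hη₁ hεk hεδ.le happ
  rw [hg_def, cauchyIntegral_comp_affine _ _ _ _ _ _ hθ₀, mul_assoc, ← sub_eq_add_neg] at him₁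
  rw [hg_def, cauchyIntegral_comp_affine _ _ _ _ _ _ hθ₀, neg_mul, mul_assoc, ← sub_eq_add_neg,
    ← sub_eq_add_neg] at him₂
  refine ⟨fun x hx ↦ ?_, by linarith⟩
  have hxδ : x - θ₀ ∈ Icc (-δ) δ := ⟨by linarith [hx.1], by linarith [hx.2]⟩
  refine ⟨fun h ↦ hne₁ _ hxδ ?_, fun h ↦ hne₂ _ hxδ ?_⟩ <;>
  · simp only [hg_def, add_sub_cancel, h]
    field

end CauchyIntegral

section JordanCurves

/-- A smooth positively oriented Jordan curve `γ` with inside `B` and outside `U`. -/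
structure IsJordanCurve (γ : ℝ → ℂ) (B U : Set ℂ) : Prop where
  contDiff : ContDiff ℝ ∞ γ
  add_two_pi : ∀ θ, γ (θ + 2 * π) = γ θ
  injOn_Ico : InjOn γ (Ico 0 (2 * π))
  deriv_ne_zero : ∀ θ, deriv γ θ ≠ 0
  isOpen_inside : IsOpen B
  isOpen_outside : IsOpen U
  isPreconnected_outside : IsPreconnected U
  isBounded_inside : Bornology.IsBounded B
  not_isBounded_outside : ¬ Bornology.IsBounded U
  disjoint : Disjoint B U
  union_eq : B ∪ U = (range γ)ᶜ
  cauchyIntegral_eq_two_pi_I : ∀ z ∈ B, cauchyIntegral γ 0 (2 * π) z = 2 * π * I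

namespace IsJordanCurve

variable {γ : ℝ → ℂ} {B U : Set ℂ} {z : ℂ}

theorem contDiff_one (h : IsJordanCurve γ B U) : ContDiff ℝ 1 γ :=
  h.contDiff.of_le (by simp)

theorem hasDerivAt (h : IsJordanCurve γ B U) (θ : ℝ) : HasDerivAt γ (deriv γ θ) θ :=
  (h.contDiff_one.differentiable one_ne_zero θ).hasDerivAt

theorem deriv_add_two_pi (h : IsJordanCurve γ B U) (θ : ℝ) :
    deriv γ (θ + 2 * π) = deriv γ θ := by
  rw [← deriv_comp_add_const]
  simp_rw [h.add_two_pi]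

theorem add_two_pi_mul_int (h : IsJordanCurve γ B U) (θ : ℝ) (k : ℤ) :
    γ (θ + 2 * π * k) = γ θ := by
  rw [mul_comm]
  exact (show Function.Periodic γ (2 * π) from h.add_two_pi).int_mul k θ

theorem exists_int_of_apply_eq (h : IsJordanCurve γ B U) {a b : ℝ} (hab : γ a = γ b) :
    ∃ k : ℤ, a = b + 2 * π * k := by
  obtain ⟨k, hk⟩ := exists_int_add_mem_Ico 0 a
  obtain ⟨l, hl⟩ := exists_int_add_mem_Ico 0 b
  rw [zero_add] at hk hl
  have heq := h.injOn_Ico hk hl (by rw [h.add_two_pi_mul_int, h.add_two_pi_mul_int, hab])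
  refine ⟨l - k, ?_⟩
  push_cast
  linarith

theorem ne_of_mem_inside (h : IsJordanCurve γ B U) (hz : z ∈ B) (θ : ℝ) : γ θ ≠ z := fun hθ ↦
  (h.union_eq ▸ Or.inl hz : z ∈ (range γ)ᶜ) ⟨θ, hθ⟩

theorem ne_of_mem_outside (h : IsJordanCurve γ B U) (hz : z ∈ U) (θ : ℝ) : γ θ ≠ z := fun hθ ↦
  (h.union_eq ▸ Or.inr hz : z ∈ (range γ)ᶜ) ⟨θ, hθ⟩

theorem mem_inside_or_mem_outside (h : IsJordanCurve γ B U) (hz : ∀ θ, γ θ ≠ z) :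
    z ∈ B ∨ z ∈ U :=
  show z ∈ B ∪ U from h.union_eq ▸ fun ⟨θ, hθ⟩ ↦ hz θ hθ

theorem exp_cauchyIntegral_eq_one (h : IsJordanCurve γ B U) (hz : ∀ θ, γ θ ≠ z) :
    Complex.exp (cauchyIntegral γ 0 (2 * π) z) = 1 := by
  have hexp := exp_cauchyIntegral_mul h.contDiff_one hz 0 (2 * π)
  rw [← zero_add (2 * π), h.add_two_pi, zero_add] at hexp
  exact mul_right_cancel₀ (sub_ne_zero.2 (hz 0)) (hexp.trans (one_mul _).symm)

theorem cauchyIntegral_eq_zero (h : IsJordanCurve γ B U) (hz : z ∈ U) :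
    cauchyIntegral γ 0 (2 * π) z = 0 := by
  set W := cauchyIntegral γ 0 (2 * π)
  have hre : ∀ w ∈ U, (W w).re = 0 := fun w hw ↦ by
    rw [← Real.exp_eq_one_iff, ← Complex.norm_exp,
      h.exp_cauchyIntegral_eq_one (h.ne_of_mem_outside hw), norm_one]
  have hcont : ContinuousOn (fun w ↦ (W w).im) U := fun w hw ↦
    (Complex.continuous_im.continuousAt.comp (continuousAt_cauchyIntegral h.contDiff_one
      Real.two_pi_pos.le fun θ _ ↦ h.ne_of_mem_outside hw θ)).continuousWithinAt
  have hexp : ∀ w ∈ U, Complex.exp ((W w).im * I) = 1 := fun w hw ↦ by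
    have hW : W w = (W w).im * I := Complex.ext (by simp [hre w hw]) (by simp)
    rw [← hW, h.exp_cauchyIntegral_eq_one (h.ne_of_mem_outside hw)]
  have hconst : ∀ w ∈ U, W w = W z := fun w hw ↦ Complex.ext (by rw [hre w hw, hre z hz])
    (apply_eq_of_exp_apply_mul_I_eq h.isPreconnected_outside hcont hexp hw hz)
  have hfrequently : ∃ᶠ w in Bornology.cobounded ℂ, w ∈ U := fun hU ↦
    h.not_isBounded_outside (Bornology.isBounded_def.2 hU)
  by_contra hne
  obtain ⟨w, hw, hwz⟩ := (hfrequently.and_eventually ((tendsto_cauchyIntegral_cobounded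
    h.contDiff_one Real.two_pi_pos.le).eventually_ne (Ne.symm hne))).exists
  exact hwz (hconst w hw)

theorem mem_inside_and_mem_outside_of_im_lt (h : IsJordanCurve γ B U) {z w : ℂ}
    (hz : ∀ θ, γ θ ≠ z) (hw : ∀ θ, γ θ ≠ w)
    (hlt : (cauchyIntegral γ 0 (2 * π) w).im < (cauchyIntegral γ 0 (2 * π) z).im) :
    z ∈ B ∧ w ∈ U := by
  rcases h.mem_inside_or_mem_outside hz with hz | hz <;>
    rcases h.mem_inside_or_mem_outside hw with hw | hw
  · simp [h.cauchyIntegral_eq_two_pi_I z hz, h.cauchyIntegral_eq_two_pi_I w hw] at hlt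
  · exact ⟨hz, hw⟩
  · simp [h.cauchyIntegral_eq_zero hz, h.cauchyIntegral_eq_two_pi_I w hw] at hlt
    linarith [Real.pi_pos]
  · simp [h.cauchyIntegral_eq_zero hz, h.cauchyIntegral_eq_zero hw] at hlt

theorem cauchyIntegral_eq_add (h : IsJordanCurve γ B U) (hz : ∀ θ, γ θ ≠ z) (a b : ℝ) :
    cauchyIntegral γ 0 (2 * π) z =
      cauchyIntegral γ a b z + cauchyIntegral γ b (a + 2 * π) z := by
  have hcont : Continuous fun x ↦ deriv γ x / (γ x - z) :=
    (h.contDiff_one.continuous_deriv le_rfl).div (h.contDiff.continuous.sub continuous_const)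
      fun x ↦ sub_ne_zero.2 (hz x)
  have hper : Function.Periodic (fun x ↦ deriv γ x / (γ x - z)) (2 * π) := fun x ↦ by
    simp only [h.add_two_pi, h.deriv_add_two_pi]
  have hshift := hper.intervalIntegral_add_eq 0 a
  rw [zero_add] at hshift
  exact hshift.trans (intervalIntegral.integral_add_adjacent_intervals
    (hcont.intervalIntegrable _ _) (hcont.intervalIntegrable _ _)).symm

theorem ne_of_mem_complementary_arc (h : IsJordanCurve γ B U) {θ₀ δ : ℝ} (hδ : 0 < δ) :
    ∀ x ∈ Icc (θ₀ + δ) (θ₀ - δ + 2 * π), γ x ≠ γ θ₀ := fun x hx hxθ₀ ↦ by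
  obtain ⟨n, rfl⟩ := h.exists_int_of_apply_eq hxθ₀
  have hpos : (0 : ℝ) < n := by
    by_contra! hn
    nlinarith [hx.1, Real.pi_pos]
  have hlt : (n : ℝ) < 1 := by
    by_contra! hn
    nlinarith [hx.2, Real.pi_pos]
  norm_cast at hpos hlt
  lia

theorem ne_of_ne_on_arcs (h : IsJordanCurve γ B U) {a b : ℝ} (hab : ∀ x ∈ Icc a b, γ x ≠ z)
    (hba : ∀ x ∈ Icc b (a + 2 * π), γ x ≠ z) (x : ℝ) : γ x ≠ z := by
  obtain ⟨n, hn⟩ := exists_int_add_mem_Ico a x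
  rw [← h.add_two_pi_mul_int x n]
  rcases le_total (x + 2 * π * n) b with hb | hb
  exacts [hab _ ⟨hn.1, hb⟩, hba _ ⟨hb, hn.2.le⟩]

theorem eventually_mem_inside_and_mem_outside (h : IsJordanCurve γ B U) (θ₀ : ℝ) {k : ℂ}
    (hk : 0 < k.im) : ∀ᶠ ε : ℝ in 𝓝[>] 0,
      γ θ₀ + ε * (k * deriv γ θ₀) ∈ B ∧ γ θ₀ - ε * (k * deriv γ θ₀) ∈ U := by
  obtain ⟨δ, hδ, hδπ, hjump⟩ :=
    exists_pi_le_im_cauchyIntegral_sub h.contDiff_one (h.deriv_ne_zero θ₀) hk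
  have hfar := h.ne_of_mem_complementary_arc (θ₀ := θ₀) hδ
  have hnear : ∀ᶠ z in 𝓝 (γ θ₀), (∀ x ∈ Icc (θ₀ + δ) (θ₀ - δ + 2 * π), γ x ≠ z) ∧
      |(cauchyIntegral γ (θ₀ + δ) (θ₀ - δ + 2 * π) z).im -
        (cauchyIntegral γ (θ₀ + δ) (θ₀ - δ + 2 * π) (γ θ₀)).im| < 1 :=
    (eventually_forall_ne h.contDiff.continuous hfar).and <| Metric.tendsto_nhds.1
      (Complex.continuous_im.continuousAt.comp (continuousAt_cauchyIntegral h.contDiff_one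
        (by linarith) hfar)) 1 one_pos
  have hadd : Tendsto (fun ε : ℝ ↦ γ θ₀ + ε * (k * deriv γ θ₀)) (𝓝[>] 0) (𝓝 (γ θ₀)) :=
    tendsto_nhdsWithin_of_tendsto_nhds (Continuous.tendsto' (by fun_prop) _ _ (by simp))
  have hsub : Tendsto (fun ε : ℝ ↦ γ θ₀ - ε * (k * deriv γ θ₀)) (𝓝[>] 0) (𝓝 (γ θ₀)) :=
    tendsto_nhdsWithin_of_tendsto_nhds (Continuous.tendsto' (by fun_prop) _ _ (by simp))
  filter_upwards [hjump, hadd.eventually hnear, hsub.eventually hnear]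
    with ε ⟨hne, him⟩ ⟨hne_add, him_add⟩ ⟨hne_sub, him_sub⟩
  have hadd_ne := h.ne_of_ne_on_arcs (fun x hx ↦ (hne x hx).1) hne_add
  have hsub_ne := h.ne_of_ne_on_arcs (fun x hx ↦ (hne x hx).2) hne_sub
  refine h.mem_inside_and_mem_outside_of_im_lt hadd_ne hsub_ne ?_
  rw [h.cauchyIntegral_eq_add hadd_ne (θ₀ - δ) (θ₀ + δ),
    h.cauchyIntegral_eq_add hsub_ne (θ₀ - δ) (θ₀ + δ), add_im, add_im]
  linarith [(abs_lt.1 him_add).1, (abs_lt.1 him_sub).2, Real.pi_gt_three]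

end IsJordanCurve

end JordanCurves

section NestedJordanCurves

theorem exists_eq_mul_of_sameRay {u v : ℂ} (h : SameRay ℝ u v) (hu : u ≠ 0) (hv : v ≠ 0) :
    ∃ r : ℝ, 0 < r ∧ u = r * v := by
  obtain ⟨a, b, ha, hb, hab⟩ := h.exists_pos hu hv
  refine ⟨b / a, by positivity, ?_⟩
  have ha' : (a : ℂ) ≠ 0 := mod_cast ha.ne'
  rw [real_smul, real_smul] at hab
  rw [ofReal_div, div_mul_eq_mul_div, ← hab, mul_div_cancel_left₀ _ ha']

theorem exists_eq_ofReal_mul_I_mul_of_isLocalMin {f : ℝ → ℂ} {f' p : ℂ} {s : ℝ}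
    (hf : HasDerivAt f f' s) (hp : f s ≠ p) (hmin : IsLocalMin (fun x ↦ ‖f x - p‖) s) :
    ∃ ρ : ℝ, f' = ρ * (I * (f s - p)) := by
  have hn : f s - p ≠ 0 := sub_ne_zero.2 hp
  have horth : (f' / (f s - p)).re = 0 := by
    have hmin_sq : IsLocalMin (fun x ↦ ‖f x - p‖ ^ 2) s := by
      filter_upwards [hmin] with x hx
      gcongr
    have hinner := hmin_sq.hasDerivAt_eq_zero (hf.sub_const p).norm_sq
    rw [Complex.inner] at hinner
    have hre : (f' * conj (f s - p)).re = 0 := by simpa using hinner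
    rw [div_eq_mul_inv, inv_def, ← mul_assoc, mul_comm, re_ofReal_mul, hre, mul_zero]
  refine ⟨(f' / (f s - p)).im, ?_⟩
  have hquot : f' / (f s - p) = (f' / (f s - p)).im * I := Complex.ext (by simp [horth]) (by simp)
  rw [← mul_assoc, ← hquot, div_mul_cancel₀ _ hn]

namespace IsJordanCurve

variable {γ : ℝ → ℂ} {B U K : Set ℂ} {s : ℝ} {n z : ℂ}

theorem subset_inside (h : IsJordanCurve γ B U) (hK : IsPreconnected K) (hγK : ∀ θ, γ θ ∉ K)
    (hz : z ∈ K) (hzB : z ∈ B) : K ⊆ B :=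
  hK.subset_left_of_subset_union h.isOpen_inside h.isOpen_outside h.disjoint
    (fun _ hw ↦ h.mem_inside_or_mem_outside fun θ hθ ↦ hγK θ (hθ ▸ hw)) ⟨z, hz, hzB⟩

theorem subset_outside (h : IsJordanCurve γ B U) (hK : IsPreconnected K) (hγK : ∀ θ, γ θ ∉ K)
    (hz : z ∈ K) (hzU : z ∈ U) : K ⊆ U :=
  hK.subset_right_of_subset_union h.isOpen_inside h.isOpen_outside h.disjoint
    (fun _ hw ↦ h.mem_inside_or_mem_outside fun θ hθ ↦ hγK θ (hθ ▸ hw)) ⟨z, hz, hzU⟩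

theorem eventually_sub_mem_inside_and_add_mem_outside (h : IsJordanCurve γ B U) (hn : n ≠ 0)
    (hray : SameRay ℝ (deriv γ s) (I * n)) :
    ∀ᶠ x : ℝ in 𝓝[>] 0, γ s - x * n ∈ B ∧ γ s + x * n ∈ U := by
  obtain ⟨r, hr, hIn⟩ :=
    exists_eq_mul_of_sameRay hray.symm (mul_ne_zero I_ne_zero hn) (h.deriv_ne_zero s)
  have hmul : I * r * deriv γ s = -n := by
    rw [mul_assoc, ← hIn, ← mul_assoc, I_mul_I, neg_one_mul]
  simpa only [hmul, mul_neg, ← sub_eq_add_neg, sub_neg_eq_add] using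
    h.eventually_mem_inside_and_mem_outside s (k := I * r) (by simpa using hr)

theorem sameRay_deriv_or_sameRay_deriv_neg {ρ : ℝ} (hρ : deriv γ s = ρ * (I * n)) :
    SameRay ℝ (deriv γ s) (I * n) ∨ SameRay ℝ (deriv γ s) (I * -n) := by
  rw [hρ, ← real_smul]
  rcases le_total 0 ρ with hpos | hneg
  · exact Or.inl (SameRay.sameRay_nonneg_smul_left _ hpos)
  · rw [← neg_smul_neg, mul_neg]
    exact Or.inr (SameRay.sameRay_nonneg_smul_left _ (neg_nonneg.2 hneg))

theorem sameRay_deriv_of_add_mem_outside (h : IsJordanCurve γ B U) (hn : n ≠ 0) {ρ : ℝ}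
    (hρ : deriv γ s = ρ * (I * n)) (hU : γ s + n ∈ U)
    (hseg : ∀ θ, ∀ x ∈ Icc 0 1, γ θ = γ s + (x : ℝ) * n → x = 0) :
    SameRay ℝ (deriv γ s) (I * n) := by
  refine (sameRay_deriv_or_sameRay_deriv_neg hρ).resolve_right fun hray ↦ ?_
  have hsubset : (fun x : ℝ ↦ γ s + x * n) '' Ioc 0 1 ⊆ U := by
    refine h.subset_outside (isPreconnected_Ioc.image _ (by fun_prop)) ?_
      ⟨1, ⟨one_pos, le_rfl⟩, by simp⟩ hU
    rintro θ ⟨x, hx, hxθ⟩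
    exact hx.1.ne' (hseg θ x ⟨hx.1.le, hx.2⟩ hxθ.symm)
  obtain ⟨x, ⟨hxB, -⟩, hx⟩ := ((h.eventually_sub_mem_inside_and_add_mem_outside
    (neg_ne_zero.2 hn) hray).and (Ioc_mem_nhdsGT one_pos)).exists
  rw [mul_neg, sub_neg_eq_add] at hxB
  exact disjoint_left.1 h.disjoint hxB (hsubset ⟨x, hx, rfl⟩)

theorem sameRay_deriv_of_sub_mem_inside (h : IsJordanCurve γ B U) (hn : n ≠ 0) {ρ : ℝ}
    (hρ : deriv γ s = ρ * (I * n)) (hB : γ s - n ∈ B)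
    (hseg : ∀ θ, ∀ x ∈ Icc 0 1, γ θ = γ s - (x : ℝ) * n → x = 0) :
    SameRay ℝ (deriv γ s) (I * n) := by
  refine (sameRay_deriv_or_sameRay_deriv_neg hρ).resolve_right fun hray ↦ ?_
  have hsubset : (fun x : ℝ ↦ γ s - x * n) '' Ioc 0 1 ⊆ B := by
    refine h.subset_inside (isPreconnected_Ioc.image _ (by fun_prop)) ?_
      ⟨1, ⟨one_pos, le_rfl⟩, by simp⟩ hB
    rintro θ ⟨x, hx, hxθ⟩
    exact hx.1.ne' (hseg θ x ⟨hx.1.le, hx.2⟩ hxθ.symm)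
  obtain ⟨x, ⟨-, hxU⟩, hx⟩ := ((h.eventually_sub_mem_inside_and_add_mem_outside
    (neg_ne_zero.2 hn) hray).and (Ioc_mem_nhdsGT one_pos)).exists
  rw [mul_neg, ← sub_eq_add_neg] at hxU
  exact disjoint_left.1 h.disjoint (hsubset ⟨x, hx, rfl⟩) hxU

end IsJordanCurve

/-- Two Jordan curves such that the closed inside of the first one lies in the closed inside of the
second one; the curves may touch. -/
structure NestedJordanCurves (γi : ℝ → ℂ) (Bi Ui : Set ℂ) (γo : ℝ → ℂ) (Bo Uo : Set ℂ) :
    Prop where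
  inner : IsJordanCurve γi Bi Ui
  outer : IsJordanCurve γo Bo Uo
  subset : Bi ∪ range γi ⊆ Bo ∪ range γo

/-- The segment from `γi s` to `γo t = γi s + d * n` meets each of the curves `γi`, `γo` only at its
endpoint, orthogonally and from the inside to the outside. It is degenerate (`d = 0`) when the
curves touch there. -/
structure IsBridge (γi γo : ℝ → ℂ) (s t d : ℝ) (n : ℂ) : Prop where
  ne_zero : n ≠ 0
  nonneg : 0 ≤ d
  apply_eq : γo t = γi s + d * n
  sameRay_inner : SameRay ℝ (deriv γi s) (I * n)
  sameRay_outer : SameRay ℝ (deriv γo t) (I * n)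
  eq_zero_of_apply_eq : ∀ θ, ∀ x ∈ Icc 0 d, γi θ = γi s + (x : ℝ) * n → x = 0
  eq_of_apply_eq : ∀ θ, ∀ x ∈ Icc 0 d, γo θ = γi s + (x : ℝ) * n → x = d

/-- The segment from `z₀` to `z₁` meets the curve `γ` only at its interior point
`γ s = z₀ + a * (z₁ - z₀)`, where it crosses the curve orthogonally from left to right. -/
structure IsOrthogonalCut (γ : ℝ → ℂ) (z₀ z₁ : ℂ) (s a : ℝ) : Prop where
  mem_Ioo : a ∈ Ioo 0 1
  apply_eq : γ s = z₀ + a * (z₁ - z₀)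
  sameRay : SameRay ℝ (deriv γ s) (I * (z₁ - z₀))
  eq_of_apply_eq : ∀ θ, ∀ x ∈ Icc 0 1, γ θ = z₀ + (x : ℝ) * (z₁ - z₀) → x = a

theorem isOrthogonalCut_of_line {γ : ℝ → ℂ} {p n : ℂ} {l r s u : ℝ} (hu : u ∈ Ioo l r)
    (happly : γ s = p + u * n) (hray : SameRay ℝ (deriv γ s) (I * n))
    (huniq : ∀ θ, ∀ x ∈ Icc l r, γ θ = p + x * n → x = u) :
    IsOrthogonalCut γ (p + l * n) (p + r * n) s ((u - l) / (r - l)) := by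
  have hlr : 0 < r - l := by linarith [hu.1, hu.2]
  have hlrC : (r - l : ℂ) ≠ 0 := mod_cast hlr.ne'
  have hsub : p + r * n - (p + l * n) = (r - l : ℝ) * n := by
    push_cast
    ring
  refine ⟨⟨div_pos (by linarith [hu.1]) hlr, (div_lt_one hlr).2 (by linarith [hu.2])⟩, ?_, ?_, ?_⟩
  · rw [happly, hsub]
    push_cast
    field_simp
    ring
  · rw [hsub, mul_left_comm, ← real_smul]
    exact hray.nonneg_smul_right hlr.le
  · intro θ x hx hθ
    rw [eq_div_iff hlr.ne', eq_sub_iff_add_eq]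
    refine huniq θ _ ⟨by nlinarith [hx.1], by nlinarith [hx.2]⟩ ?_
    rw [hθ, hsub]
    push_cast
    ring

theorem eq_zero_of_norm_le_norm_one_sub_mul {n : ℂ} (hn : n ≠ 0) {x : ℝ} (hx : x ∈ Icc 0 1)
    (hle : ‖n‖ ≤ ‖(1 - x) * n‖) : x = 0 := by
  rw [← ofReal_one, ← ofReal_sub, norm_mul, norm_real, Real.norm_of_nonneg (by linarith [hx.2]),
    le_mul_iff_one_le_left (norm_pos_iff.2 hn)] at hle
  linarith [hx.1]

theorem sameRay_of_forall_im_mul_div_nonneg {u v : ℂ} (hv : v ≠ 0)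
    (h : ∀ k : ℂ, 0 < k.im → 0 ≤ (k * (u / v)).im) : SameRay ℝ u v := by
  set κ := u / v with hκ
  have hline : ∀ y : ℝ, 0 ≤ y * κ.im + κ.re := fun y ↦ by simpa using h (y + I) (by simp)
  have him : κ.im = 0 := by
    by_contra hne
    have hneg := hline (-(κ.re + 1) / κ.im)
    rw [div_mul_cancel₀ _ hne] at hneg
    linarith
  have hκ_real : κ = κ.re := Complex.ext rfl him
  have hu_eq : u = κ.re • v := by rw [real_smul, ← hκ_real, hκ, div_mul_cancel₀ _ hv]
  rw [hu_eq]
  exact SameRay.sameRay_nonneg_smul_left _ (by simpa using hline 0)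

namespace NestedJordanCurves

variable {γi γo : ℝ → ℂ} {Bi Ui Bo Uo : Set ℂ}

theorem notMem_outside (h : NestedJordanCurves γi Bi Ui γo Bo Uo) {z : ℂ}
    (hz : z ∈ Bi ∪ range γi) : z ∉ Uo := fun hzU ↦ by
  rcases h.subset hz with hzB | ⟨θ, hθ⟩
  exacts [disjoint_left.1 h.outer.disjoint hzB hzU, h.outer.ne_of_mem_outside hzU θ hθ]

theorem outer_notMem_inside (h : NestedJordanCurves γi Bi Ui γo Bo Uo) (θ : ℝ) : γo θ ∉ Bi :=
  fun hθ ↦ by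
  have htendsto : Tendsto (fun ε : ℝ ↦ γo θ - ε * (I * deriv γo θ)) (𝓝[>] 0) (𝓝 (γo θ)) :=
    tendsto_nhdsWithin_of_tendsto_nhds (Continuous.tendsto' (by fun_prop) _ _ (by simp))
  obtain ⟨ε, hεB, -, hεU⟩ := ((htendsto.eventually (h.inner.isOpen_inside.mem_nhds hθ)).and
    (h.outer.eventually_mem_inside_and_mem_outside θ (k := I) (by simp))).exists
  exact h.notMem_outside (Or.inl hεB) hεU

theorem inside_subset (h : NestedJordanCurves γi Bi Ui γo Bo Uo) : Bi ⊆ Bo := fun _ hz ↦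
  (h.subset (Or.inl hz)).resolve_right fun ⟨θ, hθ⟩ ↦ h.outer_notMem_inside θ (hθ ▸ hz)

theorem outside_subset (h : NestedJordanCurves γi Bi Ui γo Bo Uo) : Uo ⊆ Ui := fun _ hz ↦
  (h.inner.mem_inside_or_mem_outside fun θ hθ ↦
    h.notMem_outside (Or.inr ⟨θ, hθ⟩) hz).resolve_left fun hzB ↦ h.notMem_outside (Or.inl hzB) hz

theorem sameRay_deriv (h : NestedJordanCurves γi Bi Ui γo Bo Uo) {a b : ℝ}
    (hab : γi a = γo b) : SameRay ℝ (deriv γi a) (deriv γo b) := by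
  refine sameRay_of_forall_im_mul_div_nonneg (h.outer.deriv_ne_zero b) fun k hk ↦ ?_
  by_contra! hneg
  rw [← neg_pos, ← neg_im] at hneg
  obtain ⟨ε, ⟨hεB, -⟩, -, hεU⟩ := ((h.inner.eventually_mem_inside_and_mem_outside a hk).and
    (h.outer.eventually_mem_inside_and_mem_outside b
      (k := -(k * (deriv γi a / deriv γo b))) hneg)).exists
  rw [neg_mul, mul_assoc k, div_mul_cancel₀ _ (h.outer.deriv_ne_zero b), mul_neg, sub_neg_eq_add,
    ← hab] at hεU
  exact h.notMem_outside (Or.inl hεB) hεU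

theorem isBridge_of_apply_eq (h : NestedJordanCurves γi Bi Ui γo Bo Uo) {a b : ℝ}
    (hab : γi a = γo b) : IsBridge γi γo a b 0 (-I * deriv γi a) := by
  have hmul : I * (-I * deriv γi a) = deriv γi a := by
    rw [← mul_assoc, mul_neg, I_mul_I, neg_neg, one_mul]
  exact
    { ne_zero := mul_ne_zero (neg_ne_zero.2 I_ne_zero) (h.inner.deriv_ne_zero a)
      nonneg := le_rfl
      apply_eq := by rw [ofReal_zero, zero_mul, add_zero, hab]
      sameRay_inner := by rw [hmul]
      sameRay_outer := by
        rw [hmul]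
        exact (h.sameRay_deriv hab).symm
      eq_zero_of_apply_eq := fun _ _ hx _ ↦ le_antisymm hx.2 hx.1
      eq_of_apply_eq := fun _ _ hx _ ↦ le_antisymm hx.2 hx.1 }

theorem exists_forall_norm_sub_le (h : NestedJordanCurves γi Bi Ui γo Bo Uo) :
    ∃ s t, ∀ s' t', ‖γi s - γo t‖ ≤ ‖γi s' - γo t'‖ := by
  have hcompact : IsCompact (range γi ×ˢ range γo) :=
    (Function.Periodic.compact_of_continuous h.inner.add_two_pi Real.two_pi_pos.ne'
      h.inner.contDiff.continuous).prod (Function.Periodic.compact_of_continuous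
        h.outer.add_two_pi Real.two_pi_pos.ne' h.outer.contDiff.continuous)
  obtain ⟨⟨_, _⟩, ⟨⟨s, rfl⟩, t, rfl⟩, hst⟩ := hcompact.exists_isMinOn
    ⟨(γi 0, γo 0), mem_range_self 0, mem_range_self 0⟩
    (f := fun x : ℂ × ℂ ↦ ‖x.1 - x.2‖) (by fun_prop)
  exact ⟨s, t, fun s' t' ↦ hst (a := (γi s', γo t')) ⟨mem_range_self s', mem_range_self t'⟩⟩

theorem exists_isBridge_of_forall_ne (h : NestedJordanCurves γi Bi Ui γo Bo Uo)
    (hdisj : ∀ a b, γi a ≠ γo b) : ∃ s t n, IsBridge γi γo s t 1 n := by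
  obtain ⟨s, t, hmin⟩ := h.exists_forall_norm_sub_le
  have hn : γo t - γi s ≠ 0 := sub_ne_zero.2 (hdisj s t).symm
  have hseg_inner : ∀ θ, ∀ x ∈ Icc 0 1, γi θ = γi s + (x : ℝ) * (γo t - γi s) → x = 0 :=
    fun θ x hx hθ ↦ by
    refine eq_zero_of_norm_le_norm_one_sub_mul hn hx ?_
    rw [norm_sub_rev (γo t)]
    refine (hmin θ t).trans_eq ?_
    rw [hθ, ← norm_neg]
    ring_nf
  have hseg_outer : ∀ θ, ∀ x ∈ Icc 0 1, γo θ = γo t - (x : ℝ) * (γo t - γi s) → x = 0 :=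
    fun θ x hx hθ ↦ by
    refine eq_zero_of_norm_le_norm_one_sub_mul hn hx ?_
    rw [norm_sub_rev (γo t)]
    refine (hmin s θ).trans_eq ?_
    rw [hθ, ← norm_neg]
    ring_nf
  obtain ⟨ρ, hρ⟩ := exists_eq_ofReal_mul_I_mul_of_isLocalMin (h.inner.hasDerivAt s) (hdisj s t)
    (Eventually.of_forall fun s' ↦ hmin s' t)
  obtain ⟨σ, hσ⟩ := exists_eq_ofReal_mul_I_mul_of_isLocalMin (h.outer.hasDerivAt t)
    (hdisj s t).symm (Eventually.of_forall fun t' ↦ by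
      simpa only [norm_sub_rev] using hmin s t')
  have hU : γo t ∈ Ui := (h.inner.mem_inside_or_mem_outside fun θ ↦ hdisj θ t).resolve_left
    (h.outer_notMem_inside t)
  have hB : γi s ∈ Bo := (h.subset (Or.inr ⟨s, rfl⟩)).resolve_right fun ⟨θ, hθ⟩ ↦
    hdisj s θ hθ.symm
  exact ⟨s, t, γo t - γi s,
    { ne_zero := hn
      nonneg := zero_le_one
      apply_eq := by simp
      sameRay_inner := h.inner.sameRay_deriv_of_add_mem_outside (ρ := -ρ) hn
        (by rw [hρ, ofReal_neg]; ring) (by rwa [add_sub_cancel]) hseg_inner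
      sameRay_outer := h.outer.sameRay_deriv_of_sub_mem_inside hn hσ (by rwa [sub_sub_cancel])
        hseg_outer
      eq_zero_of_apply_eq := hseg_inner
      eq_of_apply_eq := fun θ x hx hθ ↦ by
        have hx' := hseg_outer θ (1 - x) ⟨by linarith [hx.2], by linarith [hx.1]⟩ (by
          rw [hθ, ofReal_sub, ofReal_one]; ring)
        linarith }⟩

theorem exists_isBridge (h : NestedJordanCurves γi Bi Ui γo Bo Uo) :
    ∃ s t d n, IsBridge γi γo s t d n := by
  by_cases hcontact : ∃ a b, γi a = γo b
  · obtain ⟨a, b, hab⟩ := hcontact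
    exact ⟨a, b, _, _, h.isBridge_of_apply_eq hab⟩
  · push Not at hcontact
    obtain ⟨s, t, n, hbridge⟩ := h.exists_isBridge_of_forall_ne hcontact
    exact ⟨s, t, 1, n, hbridge⟩

end NestedJordanCurves

theorem IsBridge.exists_forall_mem {γi γo : ℝ → ℂ} {Bi Ui Bo Uo : Set ℂ} {s t d : ℝ} {n : ℂ}
    (hb : IsBridge γi γo s t d n) (hi : IsJordanCurve γi Bi Ui) (ho : IsJordanCurve γo Bo Uo) :
    ∃ ε > 0, (∀ x ∈ Ico (-ε) 0, γi s + (x : ℝ) * n ∈ Bi) ∧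
      ∀ x ∈ Ioc d (d + ε), γi s + (x : ℝ) * n ∈ Uo := by
  obtain ⟨ε, hε, hsub⟩ := mem_nhdsGT_iff_exists_Ioc_subset.1
    ((hi.eventually_sub_mem_inside_and_add_mem_outside hb.ne_zero hb.sameRay_inner).and
      (ho.eventually_sub_mem_inside_and_add_mem_outside hb.ne_zero hb.sameRay_outer))
  refine ⟨ε, hε, fun x hx ↦ ?_, fun x hx ↦ ?_⟩
  · have hB := (hsub (show -x ∈ Ioc 0 ε from ⟨neg_pos.2 hx.2, neg_le.1 hx.1⟩)).1.1
    rwa [ofReal_neg, neg_mul, sub_neg_eq_add] at hB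
  · have hU := (hsub (show x - d ∈ Ioc 0 ε from
      ⟨sub_pos.2 hx.1, sub_le_iff_le_add'.2 hx.2⟩)).2.2
    rwa [hb.apply_eq, ofReal_sub, add_assoc, ← add_mul, add_sub_cancel] at hU

theorem NestedJordanCurves.exists_isOrthogonalCut {γi γo : ℝ → ℂ} {Bi Ui Bo Uo : Set ℂ}
    (h : NestedJordanCurves γi Bi Ui γo Bo Uo) :
    ∃ z₀ z₁ s t a b, z₀ ∈ Bi ∧ z₁ ∈ Uo ∧
      IsOrthogonalCut γi z₀ z₁ s a ∧ IsOrthogonalCut γo z₀ z₁ t b := by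
  obtain ⟨s, t, d, n, hb⟩ := h.exists_isBridge
  obtain ⟨ε, hε, hB, hU⟩ := hb.exists_forall_mem h.inner h.outer
  have hd := hb.nonneg
  refine ⟨_, _, s, t, _, _, hB (-ε) ⟨le_rfl, neg_lt_zero.2 hε⟩,
    hU (d + ε) ⟨lt_add_of_pos_right d hε, le_rfl⟩,
    isOrthogonalCut_of_line (u := 0) ⟨by linarith, by linarith⟩ (by simp) hb.sameRay_inner
      fun θ x hx hθ ↦ ?_,
    isOrthogonalCut_of_line (u := d) ⟨by linarith, by linarith⟩ hb.apply_eq hb.sameRay_outer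
      fun θ x hx hθ ↦ ?_⟩ <;>
    rcases lt_or_ge x 0 with hx₀ | hx₀
  · exact absurd hθ (h.inner.ne_of_mem_inside (hB x ⟨hx.1, hx₀⟩) θ)
  · rcases le_or_gt x d with hxd | hxd
    · exact hb.eq_zero_of_apply_eq θ x ⟨hx₀, hxd⟩ hθ
    · exact absurd hθ (h.inner.ne_of_mem_outside (h.outside_subset (hU x ⟨hxd, hx.2⟩)) θ)
  · exact absurd hθ (h.outer.ne_of_mem_inside (h.inside_subset (hB x ⟨hx.1, hx₀⟩)) θ)
  · rcases le_or_gt x d with hxd | hxd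
    · exact hb.eq_of_apply_eq θ x ⟨hx₀, hxd⟩ hθ
    · exact absurd hθ (h.outer.ne_of_mem_outside (hU x ⟨hxd, hx.2⟩) θ)

end NestedJordanCurves

section Mobius

/-- The Möbius transformation sending `z₀` to `0` and `z₁` to `∞`, positive on the open segment
from `z₀` to `z₁`. -/
noncomputable def mobius (z₀ z₁ z : ℂ) : ℂ := (z - z₀) / (z₁ - z)

/-- The inverse of the Möbius transformation `mobius z₀ z₁`, with pole at `-1`. -/
noncomputable def mobiusInv (z₀ z₁ w : ℂ) : ℂ := (z₁ * w + z₀) / (1 + w)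

variable {z₀ z₁ z w : ℂ} {K V : Set ℂ}

theorem one_add_mobius_ne_zero (h : z₀ ≠ z₁) (hz : z ≠ z₁) : 1 + mobius z₀ z₁ z ≠ 0 := by
  have hz' : z₁ - z ≠ 0 := sub_ne_zero.2 hz.symm
  rw [mobius, one_add_div hz', sub_add_sub_cancel]
  exact div_ne_zero (sub_ne_zero.2 h.symm) hz'

theorem mobiusInv_mobius (h : z₀ ≠ z₁) (hz : z ≠ z₁) : mobiusInv z₀ z₁ (mobius z₀ z₁ z) = z := by
  have hz' : z₁ - z ≠ 0 := sub_ne_zero.2 hz.symm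
  rw [mobiusInv, div_eq_iff (one_add_mobius_ne_zero h hz), mobius]
  field_simp
  ring

theorem sub_mobiusInv (hw : 1 + w ≠ 0) : z₁ - mobiusInv z₀ z₁ w = (z₁ - z₀) / (1 + w) := by
  rw [mobiusInv]
  field_simp
  ring

theorem mobius_mobiusInv (h : z₀ ≠ z₁) (hw : 1 + w ≠ 0) :
    mobius z₀ z₁ (mobiusInv z₀ z₁ w) = w := by
  have hsub : z₁ - z₀ ≠ 0 := sub_ne_zero.2 h.symm
  rw [mobius, sub_mobiusInv hw, div_eq_iff (div_ne_zero hsub hw), mobiusInv]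
  field_simp
  ring

theorem mobiusInv_ofReal {m : ℝ} (hm : 0 < m) :
    mobiusInv z₀ z₁ m = z₀ + (m / (1 + m) : ℝ) * (z₁ - z₀) := by
  have hne : (1 + m : ℂ) ≠ 0 := mod_cast (by positivity : (0 : ℝ) < 1 + m).ne'
  rw [mobiusInv]
  push_cast
  field_simp
  ring

theorem injOn_mobius (h : z₀ ≠ z₁) : InjOn (mobius z₀ z₁) {z₁}ᶜ :=
  LeftInvOn.injOn (f₁' := mobiusInv z₀ z₁) fun _ hz ↦ mobiusInv_mobius h hz

theorem isOpen_image_mobius (h : z₀ ≠ z₁) (hV : IsOpen V) (hz₁ : z₁ ∉ V) :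
    IsOpen (mobius z₀ z₁ '' V) := by
  have himage : mobius z₀ z₁ '' V = {w | 1 + w ≠ 0} ∩ mobiusInv z₀ z₁ ⁻¹' V := by
    ext w
    constructor
    · rintro ⟨z, hz, rfl⟩
      have hzz₁ : z ≠ z₁ := ne_of_mem_of_not_mem hz hz₁
      exact ⟨one_add_mobius_ne_zero h hzz₁, by rwa [mem_preimage, mobiusInv_mobius h hzz₁]⟩
    · rintro ⟨hw, hwV⟩
      exact ⟨_, hwV, mobius_mobiusInv h hw⟩
  rw [himage]
  exact (ContinuousOn.div (by fun_prop) (by fun_prop) fun _ hw ↦ hw).isOpen_inter_preimage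
    (isOpen_ne_fun (by fun_prop) (by fun_prop)) hV

theorem isCompact_image_mobius (hK : IsCompact K) (hz₁ : z₁ ∉ K) :
    IsCompact (mobius z₀ z₁ '' K) :=
  hK.image_of_continuousOn <| ContinuousOn.div (by fun_prop) (by fun_prop) fun _ hz ↦
    sub_ne_zero.2 (ne_of_mem_of_not_mem hz hz₁).symm

end Mobius

section LogarithmicLift

/-- The lift of the curve `γ` under `ζ ↦ mobiusInv z₀ z₁ (exp ζ)` which takes at `s` the logarithm
of `mobius z₀ z₁ (z₀ + a * (z₁ - z₀)) = a / (1 - a)`. -/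
noncomputable def logLift (γ : ℝ → ℂ) (z₀ z₁ : ℂ) (s a θ : ℝ) : ℂ :=
  Real.log (a / (1 - a)) + (cauchyIntegral γ s θ z₀ - cauchyIntegral γ s θ z₁)

variable {γ : ℝ → ℂ} {B U : Set ℂ} {z z₀ z₁ : ℂ} {s a : ℝ}

theorem hasDerivAt_cauchyIntegral (hγ : ContDiff ℝ 1 γ) (hz : ∀ θ, γ θ ≠ z) (s θ : ℝ) :
    HasDerivAt (fun θ ↦ cauchyIntegral γ s θ z) (deriv γ θ / (γ θ - z)) θ := by
  have hcont : Continuous fun x ↦ deriv γ x / (γ x - z) :=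
    (hγ.continuous_deriv le_rfl).div (hγ.continuous.sub continuous_const)
      fun x ↦ sub_ne_zero.2 (hz x)
  exact hcont.integral_hasStrictDerivAt s θ |>.hasDerivAt

theorem hasDerivAt_logLift (hγ : ContDiff ℝ 1 γ) (hz₀ : ∀ θ, γ θ ≠ z₀) (hz₁ : ∀ θ, γ θ ≠ z₁)
    (θ : ℝ) : HasDerivAt (logLift γ z₀ z₁ s a)
      (deriv γ θ * ((z₁ - z₀) / ((γ θ - z₀) * (z₁ - γ θ)))) θ := by
  refine (((hasDerivAt_cauchyIntegral hγ hz₀ s θ).sub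
    (hasDerivAt_cauchyIntegral hγ hz₁ s θ)).const_add _).congr_deriv ?_
  have hne₀ : γ θ - z₀ ≠ 0 := sub_ne_zero.2 (hz₀ θ)
  have hne₁ : z₁ - γ θ ≠ 0 := sub_ne_zero.2 (hz₁ θ).symm
  rw [← neg_sub z₁ (γ θ)]
  field_simp
  ring

theorem deriv_logLift_ne_zero (hγ : ContDiff ℝ 1 γ) (hγ' : ∀ θ, deriv γ θ ≠ 0)
    (hz₀ : ∀ θ, γ θ ≠ z₀) (hz₁ : ∀ θ, γ θ ≠ z₁) (h : z₀ ≠ z₁) (θ : ℝ) :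
    deriv (logLift γ z₀ z₁ s a) θ ≠ 0 := by
  rw [(hasDerivAt_logLift hγ hz₀ hz₁ θ).deriv]
  exact mul_ne_zero (hγ' θ) (div_ne_zero (sub_ne_zero.2 h.symm)
    (mul_ne_zero (sub_ne_zero.2 (hz₀ θ)) (sub_ne_zero.2 (hz₁ θ).symm)))

theorem contDiff_logLift (hγ : ContDiff ℝ ∞ γ) (hz₀ : ∀ θ, γ θ ≠ z₀) (hz₁ : ∀ θ, γ θ ≠ z₁) :
    ContDiff ℝ ∞ (logLift γ z₀ z₁ s a) := by
  have hderiv := hasDerivAt_logLift (s := s) (a := a) (hγ.of_le (by simp)) hz₀ hz₁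
  refine contDiff_infty_iff_deriv.2 ⟨fun θ ↦ (hderiv θ).differentiableAt, ?_⟩
  simp_rw [funext fun θ ↦ (hderiv θ).deriv, div_eq_mul_inv]
  exact (contDiff_infty_iff_deriv.1 hγ).2.mul (contDiff_const.mul
    (((hγ.sub contDiff_const).mul (contDiff_const.sub hγ)).inv fun θ ↦
      mul_ne_zero (sub_ne_zero.2 (hz₀ θ)) (sub_ne_zero.2 (hz₁ θ).symm)))

theorem logLift_base : logLift γ z₀ z₁ s a s = Real.log (a / (1 - a)) := by
  simp [logLift, cauchyIntegral]

namespace IsOrthogonalCut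

theorem mobius_apply (hcut : IsOrthogonalCut γ z₀ z₁ s a) (h : z₀ ≠ z₁) :
    mobius z₀ z₁ (γ s) = (a / (1 - a) : ℝ) := by
  have hsub : z₁ - (z₀ + a * (z₁ - z₀)) = (1 - a : ℝ) * (z₁ - z₀) := by
    push_cast
    ring
  rw [mobius, hcut.apply_eq, hsub, add_sub_cancel_left,
    mul_div_mul_right _ _ (sub_ne_zero.2 h.symm), ofReal_div]

theorem exp_logLift (hcut : IsOrthogonalCut γ z₀ z₁ s a) (hγ : ContDiff ℝ 1 γ)
    (hz₀ : ∀ θ, γ θ ≠ z₀) (hz₁ : ∀ θ, γ θ ≠ z₁) (h : z₀ ≠ z₁) (θ : ℝ) :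
    Complex.exp (logLift γ z₀ z₁ s a θ) = mobius z₀ z₁ (γ θ) := by
  have hexp₀ := exp_cauchyIntegral_mul hγ hz₀ s θ
  have hexp₁ := exp_cauchyIntegral_mul hγ hz₁ s θ
  have hne₀ : γ s - z₀ ≠ 0 := sub_ne_zero.2 (hz₀ s)
  have hne₁ : γ s - z₁ ≠ 0 := sub_ne_zero.2 (hz₁ s)
  have hpos : 0 < a / (1 - a) := div_pos hcut.mem_Ioo.1 (sub_pos.2 hcut.mem_Ioo.2)
  rw [logLift, Complex.exp_add, Complex.exp_sub, ← ofReal_exp, Real.exp_log hpos,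
    ← hcut.mobius_apply h, eq_div_of_mul_eq hne₀ hexp₀, eq_div_of_mul_eq hne₁ hexp₁, mobius, mobius,
    ← neg_sub _ z₁, ← neg_sub _ z₁]
  have hne₁' : γ θ - z₁ ≠ 0 := sub_ne_zero.2 (hz₁ θ)
  field_simp

theorem im_deriv_logLift_pos (hcut : IsOrthogonalCut γ z₀ z₁ s a) (hγ : ContDiff ℝ 1 γ)
    (hγ' : deriv γ s ≠ 0) (hz₀ : ∀ θ, γ θ ≠ z₀) (hz₁ : ∀ θ, γ θ ≠ z₁) (h : z₀ ≠ z₁) :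
    0 < (deriv (logLift γ z₀ z₁ s a) s).im := by
  have hsub : z₁ - z₀ ≠ 0 := sub_ne_zero.2 h.symm
  obtain ⟨ha, ha'⟩ := hcut.mem_Ioo
  obtain ⟨r, hr, hγs⟩ :=
    exists_eq_mul_of_sameRay hcut.sameRay hγ' (mul_ne_zero I_ne_zero hsub)
  have hderiv : deriv (logLift γ z₀ z₁ s a) s = (r / (a * (1 - a)) : ℝ) * I := by
    have haC : (a : ℂ) ≠ 0 := mod_cast ha.ne'
    have haC' : (1 - a : ℂ) ≠ 0 := mod_cast (sub_pos.2 ha').ne'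
    have hsub' : z₁ - (z₀ + a * (z₁ - z₀)) = (1 - a) * (z₁ - z₀) := by ring
    rw [(hasDerivAt_logLift hγ hz₀ hz₁ s).deriv, hγs, hcut.apply_eq, hsub', add_sub_cancel_left]
    push_cast
    field_simp
  rw [hderiv, im_ofReal_mul, I_im, mul_one]
  exact div_pos hr (mul_pos ha (sub_pos.2 ha'))

end IsOrthogonalCut

theorem pos_of_hasDerivAt_pos_of_forall_ne {f : ℝ → ℝ} {a b f' : ℝ} (hf : Continuous f)
    (hfa : HasDerivAt f f' a) (hf' : 0 < f') (ha : f a = 0) (hne : ∀ x ∈ Ioo a b, f x ≠ 0) :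
    ∀ x ∈ Ioo a b, 0 < f x := by
  intro x hx
  by_contra! hfx
  have hsign : ∀ᶠ y in 𝓝[>] a, SignType.sign (f y) = SignType.sign (y - a) :=
    nhdsWithin_le_nhds (eventually_nhdsWithin_sign_eq_of_deriv_pos (by rwa [hfa.deriv]) ha)
  obtain ⟨y, hsign_y, hy⟩ := (hsign.and (Ioo_mem_nhdsGT (hx.1.trans hx.2))).exists
  rw [sign_pos (sub_pos.2 hy.1), sign_eq_one_iff] at hsign_y
  obtain ⟨w, hw, hfw⟩ :=
    isPreconnected_Ioo.intermediate_value hx hy hf.continuousOn ⟨hfx, hsign_y.le⟩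
  exact hne w hw hfw

theorem im_mem_Ioo_of_forall_im_ne {c : ℝ → ℂ} (hc : Differentiable ℝ c)
    (hadd : ∀ θ, c (θ + 2 * π) = c θ + 2 * π * I) (hs : (c s).im = 0) (hs' : 0 < (deriv c s).im)
    (hne : ∀ θ ∈ Ioo s (s + 2 * π), ∀ k : ℤ, (c θ).im ≠ 2 * π * k) :
    ∀ θ ∈ Ioo s (s + 2 * π), (c θ).im ∈ Ioo 0 (2 * π) := by
  have hcont : Continuous fun θ ↦ (c θ).im := Complex.continuous_im.comp hc.continuous
  have hderiv : HasDerivAt (fun θ ↦ (c θ).im) (deriv c s).im s :=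
    imCLM.hasFDerivAt.comp_hasDerivAt s (hc s).hasDerivAt
  have him : ∀ θ, (c (θ + 2 * π)).im = (c θ).im + 2 * π := fun θ ↦ by simp [hadd]
  have hderiv_reflect : HasDerivAt (fun x ↦ -(c (2 * s - x)).im) (deriv c s).im s := by
    have hderiv' : HasDerivAt (fun θ ↦ (c θ).im) (deriv c s).im (2 * s - s) := by
      rwa [two_mul, add_sub_cancel_right]
    exact (hderiv'.comp_const_sub (2 * s) s).fun_neg.congr_deriv (neg_neg _)
  intro θ hθ
  refine ⟨pos_of_hasDerivAt_pos_of_forall_ne hcont hderiv hs' hs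
    (fun x hx ↦ by simpa using hne x hx 0) θ hθ, ?_⟩
  have hcont_reflect : Continuous fun x ↦ -(c (2 * s - x)).im :=
    (hcont.comp (by fun_prop : Continuous fun x ↦ 2 * s - x)).neg
  have hpos := pos_of_hasDerivAt_pos_of_forall_ne (b := s + 2 * π) hcont_reflect hderiv_reflect hs'
    (by rw [two_mul, add_sub_cancel_right, hs, neg_zero]) (fun x hx h0 ↦ ?_)
    (2 * s + 2 * π - θ) ⟨by linarith [hθ.2], by linarith [hθ.1]⟩
  · rw [show 2 * s - (2 * s + 2 * π - θ) = θ - 2 * π by ring, neg_pos] at hpos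
    have hθ' := him (θ - 2 * π)
    rw [sub_add_cancel] at hθ'
    linarith
  · refine hne (2 * s - x + 2 * π) ⟨by linarith [hx.2], by linarith [hx.1]⟩ 1 ?_
    rw [him, neg_eq_zero.1 h0]
    simp

theorem exp_mem_image_mobius_range_iff {c : ℝ → ℂ}
    (hadd : ∀ θ, c (θ + 2 * π) = c θ + 2 * π * I)
    (hexp : ∀ θ, Complex.exp (c θ) = mobius z₀ z₁ (γ θ)) {ζ : ℂ} :
    Complex.exp ζ ∈ mobius z₀ z₁ '' range γ ↔ ζ ∈ range c := by
  constructor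
  · rintro ⟨_, ⟨θ, rfl⟩, hθ⟩
    rw [← hexp] at hθ
    obtain ⟨k, hk⟩ := Complex.exp_eq_exp_iff_exists_int.1 hθ.symm
    refine ⟨θ + 2 * π * k, ?_⟩
    rw [apply_add_two_pi_mul_int hadd, hk]
    ring
  · rintro ⟨θ, rfl⟩
    exact ⟨γ θ, mem_range_self θ, (hexp θ).symm⟩

namespace IsJordanCurve

theorem cauchyIntegral_add_two_pi (h : IsJordanCurve γ B U) (hz : ∀ θ, γ θ ≠ z) (s θ : ℝ) :
    cauchyIntegral γ s (θ + 2 * π) z = cauchyIntegral γ s θ z + cauchyIntegral γ 0 (2 * π) z := by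
  have hsymm : cauchyIntegral γ θ s z = -cauchyIntegral γ s θ z :=
    intervalIntegral.integral_symm s θ
  rw [h.cauchyIntegral_eq_add hz θ s, hsymm, add_neg_cancel_left]

theorem logLift_add_two_pi (h : IsJordanCurve γ B U) (hz₀ : z₀ ∈ B) (hz₁ : z₁ ∈ U) (θ : ℝ) :
    logLift γ z₀ z₁ s a (θ + 2 * π) = logLift γ z₀ z₁ s a θ + 2 * π * I := by
  rw [logLift, logLift, h.cauchyIntegral_add_two_pi (h.ne_of_mem_inside hz₀),
    h.cauchyIntegral_add_two_pi (h.ne_of_mem_outside hz₁), h.cauchyIntegral_eq_zero hz₁,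
    h.cauchyIntegral_eq_two_pi_I z₀ hz₀]
  ring

theorem im_ne_of_exp_eq_mobius (h : IsJordanCurve γ B U) (hz₁ : ∀ θ, γ θ ≠ z₁) (hne : z₀ ≠ z₁)
    (hcut : IsOrthogonalCut γ z₀ z₁ s a) {θ : ℝ} (hθ : θ ∈ Ioo s (s + 2 * π)) {ζ : ℂ}
    (hζ : Complex.exp ζ = mobius z₀ z₁ (γ θ)) (k : ℤ) : ζ.im ≠ 2 * π * k := fun hk ↦ by
  have hreal : mobius z₀ z₁ (γ θ) = Real.exp ζ.re := by
    rw [← hζ, ofReal_exp, Complex.exp_eq_exp_iff_exists_int]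
    exact ⟨k, Complex.ext (by simp) (by simp [hk, mul_comm])⟩
  have hpos := Real.exp_pos ζ.re
  have happly : γ θ = z₀ + (Real.exp ζ.re / (1 + Real.exp ζ.re) : ℝ) * (z₁ - z₀) := by
    rw [← mobiusInv_ofReal hpos, ← hreal, mobiusInv_mobius hne (hz₁ θ)]
  have ha := hcut.eq_of_apply_eq θ _
    ⟨by positivity, (div_le_one (by positivity)).2 (by linarith)⟩ happly
  rw [ha, ← hcut.apply_eq] at happly
  obtain ⟨l, rfl⟩ := h.exists_int_of_apply_eq happly
  have hl_pos : (0 : ℝ) < l := pos_of_mul_pos_right (by linarith [hθ.1]) Real.two_pi_pos.le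
  have hl_lt : (l : ℝ) < 1 := by nlinarith [hθ.2, Real.pi_pos]
  norm_cast at hl_pos hl_lt
  lia

theorem isAdmissibleCurve_logLift (h : IsJordanCurve γ B U) (hz₀ : z₀ ∈ B) (hz₁ : z₁ ∈ U)
    (hcut : IsOrthogonalCut γ z₀ z₁ s a) : IsAdmissibleCurve (logLift γ z₀ z₁ s a) s := by
  have hne : z₀ ≠ z₁ := h.disjoint.ne_of_mem hz₀ hz₁
  have hγ₀ := h.ne_of_mem_inside hz₀
  have hγ₁ := h.ne_of_mem_outside hz₁
  have hexp := hcut.exp_logLift h.contDiff_one hγ₀ hγ₁ hne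
  have hsmooth := contDiff_logLift (s := s) (a := a) h.contDiff hγ₀ hγ₁
  have hadd := h.logLift_add_two_pi (s := s) (a := a) hz₀ hz₁
  have hpos := hcut.im_deriv_logLift_pos h.contDiff_one (h.deriv_ne_zero s) hγ₀ hγ₁ hne
  have hbase : (logLift γ z₀ z₁ s a s).im = 0 := by rw [logLift_base, ofReal_im]
  refine
    { contDiff := hsmooth
      add_two_pi := hadd
      deriv_ne_zero := deriv_logLift_ne_zero h.contDiff_one h.deriv_ne_zero hγ₀ hγ₁ hne
      injective := fun x y hxy ↦ ?_
      im_base := hbase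
      im_deriv_base_pos := hpos
      im_mem_Ioo := im_mem_Ioo_of_forall_im_ne (hsmooth.differentiable (by simp)) hadd hbase hpos
        fun θ hθ k ↦ h.im_ne_of_exp_eq_mobius hγ₁ hne hcut hθ (hexp θ) k }
  have hmobius : mobius z₀ z₁ (γ x) = mobius z₀ z₁ (γ y) := by rw [← hexp, ← hexp, hxy]
  obtain ⟨k, rfl⟩ := h.exists_int_of_apply_eq (injOn_mobius hne (hγ₁ x) (hγ₁ y) hmobius)
  rw [apply_add_two_pi_mul_int hadd] at hxy
  have hk : k = 0 := by simpa using hxy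
  simp [hk]

theorem union_range_eq_compl (h : IsJordanCurve γ B U) : B ∪ range γ = Uᶜ := by
  ext z
  constructor
  · rintro (hz | ⟨θ, rfl⟩) hzU
    exacts [disjoint_left.1 h.disjoint hz hzU, h.ne_of_mem_outside hzU θ rfl]
  · intro hz
    by_contra! hz'
    rw [mem_union, not_or] at hz'
    exact (h.mem_inside_or_mem_outside fun θ hθ ↦ hz'.2 ⟨θ, hθ⟩).elim hz'.1 hz

theorem isCompact_union_range (h : IsJordanCurve γ B U) : IsCompact (B ∪ range γ) :=
  Metric.isCompact_of_isClosed_isBounded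
    (h.union_range_eq_compl ▸ h.isOpen_outside.isClosed_compl)
    (h.isBounded_inside.union (Function.Periodic.compact_of_continuous h.add_two_pi
      Real.two_pi_pos.ne' h.contDiff.continuous).isBounded)

theorem hasSides (h : IsJordanCurve γ B U) (hz₀ : z₀ ∈ B) (hz₁ : z₁ ∈ U) {c : ℝ → ℂ}
    (hadd : ∀ θ, c (θ + 2 * π) = c θ + 2 * π * I)
    (hexp : ∀ θ, Complex.exp (c θ) = mobius z₀ z₁ (γ θ)) :
    HasSides c {ζ | Complex.exp ζ ∈ mobius z₀ z₁ '' B}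
      {ζ | Complex.exp ζ ∉ mobius z₀ z₁ '' (B ∪ range γ)} := by
  have hne : z₀ ≠ z₁ := h.disjoint.ne_of_mem hz₀ hz₁
  have hz₁K : z₁ ∉ B ∪ range γ := by rwa [h.union_range_eq_compl, notMem_compl_iff]
  have hcompact : IsCompact (mobius z₀ z₁ '' (B ∪ range γ)) :=
    isCompact_image_mobius h.isCompact_union_range hz₁K
  have hopen : IsOpen (mobius z₀ z₁ '' B) :=
    isOpen_image_mobius hne h.isOpen_inside fun hz ↦ hz₁K (Or.inl hz)
  have hdisj : ∀ w ∈ mobius z₀ z₁ '' B, w ∉ mobius z₀ z₁ '' range γ := by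
    rintro _ ⟨z, hz, rfl⟩ ⟨_, ⟨θ, rfl⟩, hθ⟩
    exact h.ne_of_mem_inside hz θ (injOn_mobius hne (h.ne_of_mem_outside hz₁ θ)
      (h.disjoint.ne_of_mem hz hz₁) hθ)
  refine
    { isOpen_left := hopen.preimage Complex.continuous_exp
      isOpen_right := hcompact.isClosed.isOpen_compl.preimage Complex.continuous_exp
      disjoint := disjoint_left.2 fun ζ hζ hζ' ↦ hζ' (image_mono subset_union_left hζ)
      union_eq := ?_
      eventually_atBot := ?_
      eventually_atTop := ?_ }
  · ext ζ
    rw [mem_compl_iff, ← exp_mem_image_mobius_range_iff hadd hexp, mem_union, mem_ofPred_eq,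
      mem_ofPred_eq, image_union, mem_union]
    have hdisj_ζ := hdisj (Complex.exp ζ)
    tauto
  · have hzero : (0 : ℂ) ∈ mobius z₀ z₁ '' B := ⟨z₀, hz₀, by simp [mobius]⟩
    have htendsto : Tendsto (fun x : ℝ ↦ Complex.exp x) atBot (𝓝 0) := by
      simp_rw [← ofReal_exp]
      exact (Complex.continuous_ofReal.tendsto' 0 0 ofReal_zero).comp Real.tendsto_exp_atBot
    exact htendsto.eventually (hopen.mem_nhds hzero)
  · have htendsto : Tendsto (fun x : ℝ ↦ Complex.exp x) atTop (Bornology.cobounded ℂ) := by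
      rw [← tendsto_norm_atTop_iff_cobounded]
      simpa [Complex.norm_exp] using Real.tendsto_exp_atTop
    exact htendsto.eventually (Bornology.isBounded_def.1 hcompact.isBounded)

end IsJordanCurve

end LogarithmicLift

section Framing

theorem im_div_nonpos_of_signedArea_nonpos {u v : ℂ} (h : signedArea u v ≤ 0) :
    (v / u).im ≤ 0 := by
  rw [Complex.div_im, ← sub_div]
  rw [signedArea] at h
  exact div_nonpos_of_nonpos_of_nonneg (by linarith) (Complex.normSq_nonneg u)

/-- A framing of the annulus `A` by curves moving from `γi` to `γo`. -/
structure IsFraming (h : ℝ × ℝ → ℂ) (γi γo : ℝ → ℂ) (A : Set ℂ) : Prop where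
  contDiff : ContDiff ℝ ∞ h
  add_two_pi : ∀ θ t, h (θ + 2 * π, t) = h (θ, t)
  injOn_Ico : ∀ t ∈ Icc (0 : ℝ) 1, InjOn (fun θ ↦ h (θ, t)) (Ico 0 (2 * π))
  deriv_ne_zero : ∀ θ, ∀ t ∈ Icc (0 : ℝ) 1, deriv (fun x ↦ h (x, t)) θ ≠ 0
  im_div_nonpos : ∀ θ, ∀ t ∈ Icc (0 : ℝ) 1,
    (deriv (fun r ↦ h (θ, r)) t / deriv (fun x ↦ h (x, t)) θ).im ≤ 0
  apply_zero : ∀ θ, h (θ, 0) = γi θ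
  apply_one : ∀ θ, h (θ, 1) = γo θ
  image_eq : h '' (univ ×ˢ Icc (0 : ℝ) 1) = A

variable {c d : ℝ → ℂ} {A : Set ℂ} {H : ℝ × ℝ → ℂ} {z₀ z₁ ζ : ℂ}

theorem hasDerivAt_mobiusInv_exp (hζ : 1 + Complex.exp ζ ≠ 0) :
    HasDerivAt (fun ζ ↦ mobiusInv z₀ z₁ (Complex.exp ζ))
      ((z₁ - z₀) / (1 + Complex.exp ζ) ^ 2 * Complex.exp ζ) ζ := by
  refine ((((Complex.hasDerivAt_exp ζ).const_mul z₁).add_const z₀).fun_div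
    ((Complex.hasDerivAt_exp ζ).const_add 1) hζ).congr_deriv ?_
  field_simp
  ring

theorem exists_int_of_mobiusInv_exp_eq (h : z₀ ≠ z₁) {ζ' : ℂ} (hζ : 1 + Complex.exp ζ ≠ 0)
    (hζ' : 1 + Complex.exp ζ' ≠ 0)
    (heq : mobiusInv z₀ z₁ (Complex.exp ζ) = mobiusInv z₀ z₁ (Complex.exp ζ')) :
    ∃ k : ℤ, ζ = ζ' + 2 * π * k * I := by
  have hexp : Complex.exp ζ = Complex.exp ζ' := by
    rw [← mobius_mobiusInv h hζ, heq, mobius_mobiusInv h hζ']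
  obtain ⟨k, hk⟩ := Complex.exp_eq_exp_iff_exists_int.1 hexp
  exact ⟨k, by rw [hk]; ring⟩

theorem eq_of_eq_add_two_pi_mul_int {x y : ℝ} (hx : x ∈ Ico 0 (2 * π)) (hy : y ∈ Ico 0 (2 * π))
    {k : ℤ} (h : x = y + 2 * π * k) : x = y := by
  have hpi := Real.pi_pos
  have hgt : (-1 : ℝ) < k := by nlinarith [hx.1, hy.2]
  have hlt : (k : ℝ) < 1 := by nlinarith [hx.2, hy.1]
  norm_cast at hgt hlt
  simp [h, show k = 0 by lia]

theorem smoothTransition_mem_Icc (t : ℝ) : smoothTransition t ∈ Icc (0 : ℝ) 1 :=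
  ⟨smoothTransition.nonneg t, smoothTransition.le_one t⟩

namespace IsSweep

theorem hasDerivAt_fst (hH : IsSweep H c d A) (θ t : ℝ) :
    HasDerivAt (fun x ↦ H (x, t)) (deriv (fun x ↦ H (x, t)) θ) θ := by
  have hdiff : Differentiable ℝ H := hH.contDiff.differentiable (by simp)
  have hslice : Differentiable ℝ fun x ↦ H (x, t) := by fun_prop
  exact (hslice θ).hasDerivAt

theorem hasDerivAt_snd (hH : IsSweep H c d A) (θ t : ℝ) :
    HasDerivAt (fun r ↦ H (θ, r)) (deriv (fun r ↦ H (θ, r)) t) t := by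
  have hdiff : Differentiable ℝ H := hH.contDiff.differentiable (by simp)
  have hslice : Differentiable ℝ fun r ↦ H (θ, r) := by fun_prop
  exact (hslice t).hasDerivAt

theorem comp_smoothTransition (hH : IsSweep H c d A) :
    IsSweep (fun p ↦ H (p.1, smoothTransition p.2)) c d A := by
  refine
    { contDiff :=
        hH.contDiff.comp (contDiff_fst.prodMk (smoothTransition.contDiff.comp contDiff_snd))
      add_two_pi := fun θ t ↦ hH.add_two_pi θ _
      apply_zero := fun θ ↦ by rw [smoothTransition.zero, hH.apply_zero]
      apply_one := fun θ ↦ by rw [smoothTransition.one, hH.apply_one]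
      injective := fun t _ ↦ hH.injective _ (smoothTransition_mem_Icc t)
      deriv_ne_zero := fun θ t _ ↦ hH.deriv_ne_zero θ _ (smoothTransition_mem_Icc t)
      signedArea_nonpos := fun θ t _ ↦ ?_
      image_eq := ?_ }
  · have hβ := ((smoothTransition.contDiff (n := 1)).differentiable one_ne_zero t).hasDerivAt
    have hcomp := ((hH.hasDerivAt_snd θ _).scomp t hβ).deriv
    rw [Function.comp_def] at hcomp
    rw [hcomp, real_smul, signedArea_ofReal_mul_right]
    exact mul_nonpos_of_nonneg_of_nonpos smoothTransition.monotone.deriv_nonneg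
      (hH.signedArea_nonpos θ _ (smoothTransition_mem_Icc t))
  · rw [← hH.image_eq]
    ext z
    constructor
    · rintro ⟨⟨θ, t⟩, -, rfl⟩
      exact mem_image_of_mem H ⟨mem_univ θ, smoothTransition_mem_Icc t⟩
    · rintro ⟨⟨θ, t⟩, ⟨-, ht⟩, rfl⟩
      obtain ⟨t', ht', rfl⟩ : t ∈ smoothTransition '' Icc 0 1 :=
        intermediate_value_Icc zero_le_one smoothTransition.continuous.continuousOn
          (by rwa [smoothTransition.zero, smoothTransition.one])
      exact ⟨(θ, t'), ⟨mem_univ θ, ht'⟩, rfl⟩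

theorem isFraming (hH : IsSweep H c d A) (h : z₀ ≠ z₁) (hpole : ∀ p, 1 + Complex.exp (H p) ≠ 0) :
    IsFraming (fun p ↦ mobiusInv z₀ z₁ (Complex.exp (H p)))
      (fun θ ↦ mobiusInv z₀ z₁ (Complex.exp (c θ))) (fun θ ↦ mobiusInv z₀ z₁ (Complex.exp (d θ)))
      ((fun ζ ↦ mobiusInv z₀ z₁ (Complex.exp ζ)) '' A) := by
  have hF (θ t : ℝ) := hasDerivAt_mobiusInv_exp (z₀ := z₀) (z₁ := z₁) (hpole (θ, t))
  have hF' (θ t : ℝ) := mul_ne_zero (div_ne_zero (sub_ne_zero.2 h.symm)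
    (pow_ne_zero 2 (hpole (θ, t)))) (Complex.exp_ne_zero (H (θ, t)))
  have hfst (θ t : ℝ) := (HasDerivAt.comp θ (hF θ t) (hH.hasDerivAt_fst θ t)).deriv
  have hsnd (θ t : ℝ) := (HasDerivAt.comp t (hF θ t) (hH.hasDerivAt_snd θ t)).deriv
  simp only [Function.comp_def] at hfst hsnd
  refine
    { contDiff := ?_
      add_two_pi := fun θ t ↦ by
        rw [hH.add_two_pi, Complex.exp_add, Complex.exp_two_pi_mul_I, mul_one]
      injOn_Ico := fun t ht x hx y hy hxy ↦ ?_
      deriv_ne_zero := fun θ t ht ↦ by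
        rw [hfst]
        exact mul_ne_zero (hF' θ t) (hH.deriv_ne_zero θ t ht)
      im_div_nonpos := fun θ t ht ↦ by
        rw [hfst, hsnd, mul_div_mul_left _ _ (hF' θ t)]
        exact im_div_nonpos_of_signedArea_nonpos (hH.signedArea_nonpos θ t ht)
      apply_zero := fun θ ↦ by rw [hH.apply_zero]
      apply_one := fun θ ↦ by rw [hH.apply_one]
      image_eq := by rw [← hH.image_eq, image_image] }
  · have hexp : ContDiff ℝ ∞ fun p ↦ Complex.exp (H p) := hH.contDiff.cexp
    simp only [mobiusInv, div_eq_mul_inv]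
    exact ((contDiff_const.mul hexp).add contDiff_const).mul
      ((contDiff_const.add hexp).inv hpole)
  · obtain ⟨k, hk⟩ := exists_int_of_mobiusInv_exp_eq h (hpole (x, t)) (hpole (y, t)) hxy
    refine eq_of_eq_add_two_pi_mul_int hx hy (k := k) (hH.injective t ht (hk.trans ?_))
    exact (apply_add_two_pi_mul_int (c := fun θ ↦ H (θ, t)) (fun θ ↦ hH.add_two_pi θ t) k y).symm

end IsSweep

namespace NestedJordanCurves

variable {γi γo : ℝ → ℂ} {Bi Ui Bo Uo : Set ℂ} {s t a b : ℝ}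

theorem sameRay_deriv_logLift (h : NestedJordanCurves γi Bi Ui γo Bo Uo) (hz₀ : z₀ ∈ Bi)
    (hz₁ : z₁ ∈ Uo) (hi : IsOrthogonalCut γi z₀ z₁ s a) (ho : IsOrthogonalCut γo z₀ z₁ t b)
    {x y : ℝ} (hxy : logLift γi z₀ z₁ s a x = logLift γo z₀ z₁ t b y) :
    SameRay ℝ (deriv (logLift γi z₀ z₁ s a) x) (deriv (logLift γo z₀ z₁ t b) y) := by
  have hne : z₀ ≠ z₁ := h.outer.disjoint.ne_of_mem (h.inside_subset hz₀) hz₁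
  have hi₀ := h.inner.ne_of_mem_inside hz₀
  have hi₁ := h.inner.ne_of_mem_outside (h.outside_subset hz₁)
  have ho₀ := h.outer.ne_of_mem_inside (h.inside_subset hz₀)
  have ho₁ := h.outer.ne_of_mem_outside hz₁
  have hmobius : mobius z₀ z₁ (γi x) = mobius z₀ z₁ (γo y) := by
    rw [← hi.exp_logLift h.inner.contDiff_one hi₀ hi₁ hne, hxy,
      ho.exp_logLift h.outer.contDiff_one ho₀ ho₁ hne]
  have hγ : γi x = γo y := injOn_mobius hne (hi₁ x) (ho₁ y) hmobius
  rw [(hasDerivAt_logLift h.inner.contDiff_one hi₀ hi₁ x).deriv,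
    (hasDerivAt_logLift h.outer.contDiff_one ho₀ ho₁ y).deriv, hγ]
  exact (h.sameRay_deriv hγ).map (LinearMap.mulRight ℝ _)

theorem image_mobiusInv_exp (h : NestedJordanCurves γi Bi Ui γo Bo Uo) (hz₀ : z₀ ∈ Bi)
    (hz₁ : z₁ ∈ Uo) :
    (fun ζ ↦ mobiusInv z₀ z₁ (Complex.exp ζ)) ''
      ({ζ | Complex.exp ζ ∈ mobius z₀ z₁ '' Bi} ∪
        {ζ | Complex.exp ζ ∉ mobius z₀ z₁ '' (Bo ∪ range γo)})ᶜ = (Bo ∪ range γo) \ Bi := by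
  have hne : z₀ ≠ z₁ := h.outer.disjoint.ne_of_mem (h.inside_subset hz₀) hz₁
  have hne₁ : ∀ z ∈ Bo ∪ range γo, z ≠ z₁ := by
    rw [h.outer.union_range_eq_compl]
    rintro z hz rfl
    exact hz hz₁
  ext z
  constructor
  · rintro ⟨ζ, hζ, rfl⟩
    obtain ⟨hζi, hζo⟩ := not_or.1 hζ
    obtain ⟨z, hz, hzζ⟩ := not_not.1 hζo
    simp only [← hzζ, mobiusInv_mobius hne (hne₁ z hz)]
    exact ⟨hz, fun hzi ↦ hζi ⟨z, hzi, hzζ⟩⟩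
  · rintro ⟨hz, hzi⟩
    have hmobius : mobius z₀ z₁ z ≠ 0 :=
      div_ne_zero (sub_ne_zero.2 (ne_of_mem_of_not_mem hz₀ hzi).symm)
        (sub_ne_zero.2 (hne₁ z hz).symm)
    have hexp := Complex.exp_log hmobius
    refine ⟨Complex.log (mobius z₀ z₁ z), not_or.2 ⟨?_, not_not.2 ?_⟩, ?_⟩
    · rintro ⟨y, hy, hyz⟩
      rw [hexp] at hyz
      exact hzi (injOn_mobius hne (hne₁ y (Or.inl (h.inside_subset hy))) (hne₁ z hz) hyz ▸ hy)
    · exact ⟨z, hz, hexp.symm⟩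
    · simp only [hexp, mobiusInv_mobius hne (hne₁ z hz)]

theorem exists_isFraming (h : NestedJordanCurves γi Bi Ui γo Bo Uo) :
    ∃ f, IsFraming f γi γo ((Bo ∪ range γo) \ Bi) := by
  obtain ⟨z₀, z₁, s, t, a, b, hz₀, hz₁, hi, ho⟩ := h.exists_isOrthogonalCut
  have hz₀' := h.inside_subset hz₀
  have hz₁' := h.outside_subset hz₁
  have hne : z₀ ≠ z₁ := h.outer.disjoint.ne_of_mem hz₀' hz₁
  have hi₁ := h.inner.ne_of_mem_outside hz₁'
  have ho₁ := h.outer.ne_of_mem_outside hz₁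
  have hexp_i := hi.exp_logLift h.inner.contDiff_one (h.inner.ne_of_mem_inside hz₀) hi₁ hne
  have hexp_o := ho.exp_logLift h.outer.contDiff_one (h.outer.ne_of_mem_inside hz₀') ho₁ hne
  obtain ⟨H, hH⟩ := (h.inner.isAdmissibleCurve_logLift hz₀ hz₁' hi).exists_isSweep
    (h.outer.isAdmissibleCurve_logLift hz₀' hz₁ ho)
    (h.inner.hasSides hz₀ hz₁' (h.inner.logLift_add_two_pi hz₀ hz₁') hexp_i)
    (h.outer.hasSides hz₀' hz₁ (h.outer.logLift_add_two_pi hz₀' hz₁) hexp_o)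
    (by
      rintro θ ⟨z, hz, hzθ⟩
      rw [hexp_o] at hzθ
      have hz_eq := injOn_mobius hne
        (h.outer.disjoint.ne_of_mem (h.inside_subset hz) hz₁) (ho₁ θ) hzθ
      exact h.outer_notMem_inside θ (hz_eq ▸ hz))
    fun x y hxy ↦ h.sameRay_deriv_logLift hz₀ hz₁ hi ho hxy
  have hmem (p : ℝ × ℝ) : H (p.1, smoothTransition p.2) ∈ H '' (univ ×ˢ Icc (0 : ℝ) 1) :=
    mem_image_of_mem H ⟨mem_univ _, smoothTransition_mem_Icc _⟩
  -- Time now stays in `[0, 1]`, so the pole of `mobiusInv` is avoided on the whole plane.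
  have hframing := hH.comp_smoothTransition.isFraming hne fun p ↦ by
    obtain ⟨z, hz, hzζ⟩ := not_not.1 (not_or.1 (hH.image_eq ▸ hmem p)).2
    rw [← hzζ]
    rw [h.outer.union_range_eq_compl] at hz
    exact one_add_mobius_ne_zero hne fun hzz₁ ↦ hz (hzz₁ ▸ hz₁)
  rw [h.image_mobiusInv_exp hz₀ hz₁] at hframing
  simp only [hexp_i, hexp_o, mobiusInv_mobius hne (hi₁ _), mobiusInv_mobius hne (ho₁ _)] at hframing
  exact ⟨_, hframing⟩

end NestedJordanCurves

end Framing

end AnnulusFraming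

theorem every_annulus_admits_a_framing
    (γin γout : ℝ → ℂ) (Bin Bout : Set ℂ)
    (hγin_smooth : ContDiff ℝ (⊤ : ℕ∞) γin)
    (hγout_smooth : ContDiff ℝ (⊤ : ℕ∞) γout)
    (hγin_per : ∀ θ, γin (θ + 2 * π) = γin θ)
    (hγout_per : ∀ θ, γout (θ + 2 * π) = γout θ)
    (hγin_inj : InjOn γin (Ico 0 (2 * π)))
    (hγout_inj : InjOn γout (Ico 0 (2 * π)))
    (hγin_deriv : ∀ θ, deriv γin θ ≠ 0)
    (hγout_deriv : ∀ θ, deriv γout θ ≠ 0)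
    (hBin_conn : IsConnected Bin) (hBin_open : IsOpen Bin)
    (hBin_bdd : Bornology.IsBounded Bin)
    (hin_two : ∃ U : Set ℂ, IsConnected U ∧ IsOpen U ∧ ¬ Bornology.IsBounded U ∧
      Disjoint Bin U ∧ Bin ∪ U = (range γin)ᶜ)
    (hBin_cl : closure Bin = Bin ∪ range γin)
    (hBout_conn : IsConnected Bout) (hBout_open : IsOpen Bout)
    (hBout_bdd : Bornology.IsBounded Bout)
    (hout_two : ∃ U : Set ℂ, IsConnected U ∧ IsOpen U ∧ ¬ Bornology.IsBounded U ∧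
      Disjoint Bout U ∧ Bout ∪ U = (range γout)ᶜ)
    (hBout_cl : closure Bout = Bout ∪ range γout)
    (hwind_in : ∀ z ∈ Bin,
      (2 * π * I)⁻¹ * ∫ θ in (0:ℝ)..(2 * π), deriv γin θ / (γin θ - z) = 1)
    (hwind_out : ∀ z ∈ Bout,
      (2 * π * I)⁻¹ * ∫ θ in (0:ℝ)..(2 * π), deriv γout θ / (γout θ - z) = 1)
    (hsub : Bin ∪ range γin ⊆ Bout ∪ range γout)
    (A : Set ℂ) (hA : A = (Bout ∪ range γout) \ Bin) :
    ∃ h : ℝ × ℝ → ℂ,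
      ContDiff ℝ (⊤ : ℕ∞) h ∧
      (∀ θ t, h (θ + 2 * π, t) = h (θ, t)) ∧
      (∀ t ∈ Icc (0:ℝ) 1, InjOn (fun θ => h (θ, t)) (Ico 0 (2 * π))) ∧
      (∀ θ : ℝ, ∀ t ∈ Icc (0:ℝ) 1, deriv (fun x => h (x, t)) θ ≠ 0) ∧
      (∀ θ : ℝ, ∀ t ∈ Icc (0:ℝ) 1,
        (deriv (fun s => h (θ, s)) t / deriv (fun x => h (x, t)) θ).im ≤ 0) ∧
      (∀ θ, h (θ, 0) = γin θ) ∧ (∀ θ, h (θ, 1) = γout θ) ∧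
      h '' (univ ×ˢ Icc (0:ℝ) 1) = A := by
  obtain ⟨Uin, hUin_conn, hUin_open, hUin_unbdd, hUin_disj, hUin_union⟩ := hin_two
  obtain ⟨Uout, hUout_conn, hUout_open, hUout_unbdd, hUout_disj, hUout_union⟩ := hout_two
  have hin : AnnulusFraming.IsJordanCurve γin Bin Uin :=
    ⟨hγin_smooth, hγin_per, hγin_inj, hγin_deriv, hBin_open, hUin_open, hUin_conn.isPreconnected,
      hBin_bdd, hUin_unbdd, hUin_disj, hUin_union,
      fun z hz ↦ (inv_mul_eq_one₀ two_pi_I_ne_zero).1 (hwind_in z hz) |>.symm⟩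
  have hout : AnnulusFraming.IsJordanCurve γout Bout Uout :=
    ⟨hγout_smooth, hγout_per, hγout_inj, hγout_deriv, hBout_open, hUout_open,
      hUout_conn.isPreconnected, hBout_bdd, hUout_unbdd, hUout_disj, hUout_union,
      fun z hz ↦ (inv_mul_eq_one₀ two_pi_I_ne_zero).1 (hwind_out z hz) |>.symm⟩
  obtain ⟨h, hh⟩ := (AnnulusFraming.NestedJordanCurves.mk hin hout hsub).exists_isFraming
  subst hA
  exact ⟨h, hh.contDiff, hh.add_two_pi, hh.injOn_Ico, hh.deriv_ne_zero, hh.im_div_nonpos,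
    hh.apply_zero, hh.apply_one, hh.image_eq⟩
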